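/- arXiv:1505.03957 — 2 statements merged into one kernel-verified Lean document; each statement's English description precedes it below -/
import Mathlib

section
/- Let f₁,…,f_ℓ, φ₁,…,φ_k, g₁,…,g_r, ψ₁,…,ψ_s ∈ ℂ[T] with ℓ, k, r, s ≥ 1 be (jointly) multiplicatively independent polynomials satisfying Z(f₁⋯f_ℓ) ∩ Z(φ₁⋯φ_k) = ∅ and Z(g₁⋯g_r) ∩ Z(ψ₁⋯ψ_s) = ∅, and assume in addition that gcd(f₁⋯f_ℓ − 1, g₁⋯g_r − 1) = 1. Set L = ℓ+k+r+s. Then there exist a finite set S and additive submonoids 𝓛_t ⊆ ℕ^L for t ∈ S such that the complement 𝓝 = ℕ^L \ ⋃_{t∈S} 𝓛_t has positive lower asymptotic density (i.e., liminf_{N→∞} #(𝓝 ∩ {0,…,N}^L)/(N+1)^L > 0), and for every vector (n₁,…,n_ℓ, ν₁,…,ν_k, m₁,…,m_r, μ₁,…,μ_s) ∈ 𝓝 one has gcd(∏_{i=1}^{ℓ} f_i^{n_i} − ∏_{i=1}^{k} φ_i^{ν_i}, ∏_{i=1}^{r} g_i^{m_i} − ∏_{i=1}^{s} ψ_i^{μ_i})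 = 1. -/
open Polynomial

namespace Stmt2
open Height AdmissibleAbsValues

lemma fin_supp_max {K : Type*} [Field K] [AdmissibleAbsValues K] (x : K) :
    (fun v : nonarchAbsVal (K := K) ↦ max (v.val x) 1).HasFiniteMulSupport := by
  rcases eq_or_ne x 0 with rfl | hx
  · simp [Function.HasFiniteMulSupport]
  · have := hasFiniteMulSupport hx
    fun_prop

/-- Comparison of a product of local terms with heights. -/
lemma local_le {K : Type*} [Field K] [AdmissibleAbsValues K] {α : Type*} (s : Finset α)
    (y : α → K) (m : ℝ) (hm : 0 ≤ m) (g : AbsoluteValue K ℝ → ℝ) (hg : ∀ v, 0 ≤ g v)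
    (hfin : (fun v : nonarchAbsVal (K := K) ↦ g v.val).HasFiniteMulSupport)
    (h1 : ∀ v ∈ archAbsVal (K := K), g v ≤ m * ∏ i ∈ s, max (v (y i)) 1)
    (h2 : ∀ v ∈ nonarchAbsVal (K := K), g v ≤ ∏ i ∈ s, max (v (y i)) 1) :
    ((archAbsVal (K := K)).map g).prod * ∏ᶠ v : nonarchAbsVal (K := K), g v.val
      ≤ m ^ (totalWeight K) * ∏ i ∈ s, mulHeight₁ (y i) := by
  have hf : ∀ i ∈ s, (fun v : nonarchAbsVal (K := K) ↦ max (v.val (y i)) 1).HasFiniteMulSupport :=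
    fun i _ => fin_supp_max (y i)
  simp only [mulHeight₁_eq, totalWeight]
  rw [Finset.prod_mul_distrib, ← Multiset.prod_replicate, ← Multiset.map_const,
    ← finprod_prod_comm _ _ hf,
    ← Multiset.prod_map_prod, ← mul_assoc, ← Multiset.prod_map_mul]
  simp only [Function.const_apply]
  gcongr
  · exact finprod_nonneg fun _ ↦ hg _
  · exact Multiset.prod_map_nonneg fun _ h ↦ by positivity
  · exact Multiset.prod_map_le_prod_map₀ _ _ (fun _ _ ↦ hg _) h1
  · refine finprod_le_finprod hfin (fun _ ↦ hg _) ?_ fun v => h2 v v.2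
    have := fun i => fin_supp_max (K := K) (y i)
    fun_prop

/-- Height of a solution of a polynomial equation. -/
lemma root_height {K : Type*} [Field K] [AdmissibleAbsValues K] (d : ℕ)
    (b : Fin (d+1) → K) (t x : K) (h : t ^ (d+1) = x + ∑ i, b i * t ^ (i:ℕ)) :
    mulHeight₁ t ≤ ((d:ℝ)+2) ^ (totalWeight K) * (mulHeight₁ x * ∏ i, mulHeight₁ (b i)) := by
  have key : ∀ (v : AbsoluteValue K ℝ) (A : ℝ), 1 ≤ A →
      v (t^(d+1)) ≤ A * (max (v x) 1 * ∏ i, max (v (b i)) 1) * (max (v t) 1)^d →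
      max (v t) 1 ≤ A * (max (v x) 1 * ∏ i, max (v (b i)) 1) := by
    intro v A hA hh
    have hP : 1 ≤ ∏ i, max (v (b i)) 1 := Finset.one_le_prod fun _ _ ↦ le_max_right ..
    have hx : 1 ≤ max (v x) 1 := le_max_right ..
    have h1 : 1 ≤ A * (max (v x) 1 * ∏ i, max (v (b i)) 1) :=
      one_le_mul_of_one_le_of_one_le hA (one_le_mul_of_one_le_of_one_le hx hP)
    refine max_le ?_ h1
    rcases le_total (v t) 1 with h | h
    · exact h.trans h1
    · rw [max_eq_left h, map_pow, pow_succ] at hh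
      rw [mul_comm] at hh
      exact le_of_mul_le_mul_right hh (by positivity)
  have hterm : ∀ (v : AbsoluteValue K ℝ) (i : Fin (d+1)), v (b i * t^(i:ℕ)) ≤
      (max (v x) 1 * ∏ i, max (v (b i)) 1) * (max (v t) 1)^d := by
    intro v i
    rw [map_mul, map_pow]
    have h1 : v (b i) ≤ ∏ i, max (v (b i)) 1 :=
      Finset.le_prod_max_one (Finset.mem_univ i) fun i ↦ v (b i)
    have h2 : v t ^ (i:ℕ) ≤ (max (v t) 1)^d :=
      (pow_le_pow_left₀ (v.nonneg _) (le_max_left _ _) _).trans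
        (pow_le_pow_right₀ (le_max_right _ _) (by omega))
    have hx : 1 ≤ max (v x) 1 := le_max_right ..
    have hP : 0 ≤ v (b i) := v.nonneg _
    calc v (b i) * v t ^ (i:ℕ) ≤ (∏ i, max (v (b i)) 1) * (max (v t) 1)^d := by gcongr
      _ ≤ (max (v x) 1 * ∏ i, max (v (b i)) 1) * (max (v t) 1)^d := by
        gcongr
        exact le_mul_of_one_le_left (hP.trans h1) hx
  have hxt : ∀ (v : AbsoluteValue K ℝ), v x ≤
      (max (v x) 1 * ∏ i, max (v (b i)) 1) * (max (v t) 1)^d := by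
    intro v
    have hP : 1 ≤ ∏ i, max (v (b i)) 1 := Finset.one_le_prod fun _ _ ↦ le_max_right ..
    have hx : v x ≤ max (v x) 1 := le_max_left ..
    have h2 : 1 ≤ (max (v t) 1)^d := one_le_pow₀ (le_max_right _ _)
    have h0 : 0 ≤ max (v x) 1 := by positivity
    calc v x ≤ max (v x) 1 * 1 * 1 := by simp
      _ ≤ _ := by gcongr
  have := local_le (K := K) (Finset.univ : Finset (Option (Fin (d+1))))
    (fun o => o.elim x b) ((d:ℝ)+2) (by positivity) (fun v => max (v t) 1) (fun v => by positivity)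
    (fin_supp_max t) ?_ ?_
  · simpa [Fintype.prod_option, mulHeight₁_eq] using this
  · intro v _
    simp only [Fintype.prod_option, Option.elim]
    apply key v _ (by linarith [(Nat.cast_nonneg d : (0:ℝ) ≤ d)])
    rw [h]
    calc v (x + ∑ i, b i * t ^ (i:ℕ)) ≤ v x + ∑ i, v (b i * t ^ (i:ℕ)) :=
          (v.add_le _ _).trans (by gcongr; exact v.sum_le _ _)
      _ ≤ (max (v x) 1 * ∏ i, max (v (b i)) 1) * (max (v t) 1)^d
          + ∑ i : Fin (d+1), (max (v x) 1 * ∏ i, max (v (b i)) 1) * (max (v t) 1)^d := by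
          gcongr with i _
          · exact hxt v
          · exact hterm v i
      _ = _ := by
          rw [Finset.sum_const]; simp; ring
  · intro v hv
    simp only [Fintype.prod_option, Option.elim]
    rw [← one_mul (max (v x) 1 * _)]
    apply key v _ le_rfl
    rw [h, one_mul]
    have hna := isNonarchimedean v hv
    refine (hna _ _).trans (max_le (hxt v) ?_)
    refine (hna.apply_sum_le_sup Finset.univ_nonempty).trans ?_
    exact Finset.sup'_le _ _ fun i _ => hterm v i

lemma height_nat {K : Type*} [Field K] [NumberField K] (n : ℕ) (hn : n ≠ 0) :
    mulHeight₁ (n : K) ≤ (n:ℝ) ^ (totalWeight K) := by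
  have := mulHeight₁_sum_le (K := K) (s := Finset.range n) (by simpa using hn) (fun _ => 1)
  simpa using this

lemma height_rat (q : ℚ) : ∃ C : ℝ, 1 ≤ C ∧ ∀ (K : Type) [Field K] [NumberField K],
    mulHeight₁ (algebraMap ℚ K q) ≤ C ^ (totalWeight K) := by
  refine ⟨(q.num.natAbs + 1 : ℕ) * q.den, ?_, ?_⟩
  · have : 1 ≤ (q.num.natAbs + 1) * q.den := Nat.mul_pos (by omega) q.den_pos
    exact_mod_cast this
  intro K _ _
  rw [mul_pow]
  have h1 : mulHeight₁ ((q.num : ℤ) : K) ≤ ((q.num.natAbs + 1 : ℕ) : ℝ) ^ totalWeight K := by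
    have hh : mulHeight₁ ((q.num.natAbs : ℕ) : K) ≤ ((q.num.natAbs + 1 : ℕ) : ℝ) ^ totalWeight K := by
      rcases eq_or_ne q.num.natAbs 0 with h | h
      · rw [h]; simp
      · refine (height_nat _ h).trans ?_
        gcongr; simp
    rcases Int.natAbs_eq q.num with h | h
    · rw [h]; simpa using hh
    · rw [h]; simpa [mulHeight₁_neg] using hh
  have h2 := height_nat (K := K) q.den q.den_nz
  have : algebraMap ℚ K q = (q.num : K) * ((q.den : K))⁻¹ := by
    rw [← div_eq_mul_inv]; simpa using Rat.cast_def (K := K) q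
  rw [this]
  refine (mulHeight₁_mul_le _ _).trans ?_
  rw [mulHeight₁_inv]
  gcongr

lemma height_alg (K : Type) [Field K] [NumberField K] (c : K) : ∃ C : ℝ, 1 ≤ C ∧
    ∀ (L : Type) [Field L] [NumberField L] [Algebra K L],
    mulHeight₁ (algebraMap K L c) ≤ C ^ (totalWeight L) := by
  have hIntg : IsIntegral ℚ c := Algebra.IsIntegral.isIntegral c
  set P := minpoly ℚ c
  have hP : P.Monic := minpoly.monic hIntg
  obtain ⟨d, hd⟩ : ∃ d, P.natDegree = d + 1 :=
    ⟨P.natDegree - 1, by have : 0 < P.natDegree := minpoly.natDegree_pos hIntg; omega⟩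
  choose C hC1 hC using height_rat
  refine ⟨((d:ℝ)+2) * ∏ i : Fin (d+1), C (-P.coeff i), ?_, ?_⟩
  · refine one_le_mul_of_one_le_of_one_le (by linarith [(Nat.cast_nonneg d : (0:ℝ) ≤ d)]) ?_
    exact Finset.one_le_prod fun _ _ ↦ hC1 _
  intro L _ _ _
  have h := root_height (K := L) d (fun i => algebraMap ℚ L (-P.coeff i)) (algebraMap K L c) 0 ?_
  · rw [mul_pow, ← Finset.prod_pow]
    refine h.trans ?_
    rw [mulHeight₁_zero, one_mul]
    gcongr with i
    exact hC _ L
  · have h0 : aeval (algebraMap K L c) P = 0 := by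
      rw [aeval_algebraMap_apply, minpoly.aeval, map_zero]
    rw [aeval_eq_sum_range, hd, Finset.sum_range_succ] at h0
    have h1 : P.coeff (d+1) = 1 := by rw [← hd]; exact hP
    rw [h1, one_smul, Finset.sum_range] at h0
    rw [zero_add]
    simp only [map_neg, neg_mul, Finset.sum_neg_distrib]
    simp only [Algebra.smul_def] at h0
    linear_combination h0

/-- Upper bound for the height of a polynomial value. -/
lemma height_poly_le (K : Type) [Field K] [NumberField K] (u : K[X]) : ∃ A C : ℝ, 0 ≤ A ∧ 0 ≤ C ∧
    ∀ (L : Type) [Field L] [NumberField L] [Algebra K L] (t : L),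
    logHeight₁ (aeval t u) ≤ A * logHeight₁ t + C * totalWeight L := by
  choose C hC1 hC using height_alg K
  refine ⟨∑ i ∈ Finset.range (u.natDegree+1), (i:ℝ),
    Real.log (u.natDegree+1) + ∑ i ∈ Finset.range (u.natDegree+1), Real.log (C (u.coeff i)),
    by positivity, ?_, ?_⟩
  · have := fun c => Real.log_nonneg (hC1 c)
    have h2 : (0:ℝ) ≤ Real.log (u.natDegree+1) := Real.log_nonneg (by simp)
    have := Finset.sum_nonneg (s := Finset.range (u.natDegree+1)) (fun i _ => this (u.coeff i))
    linarith
  intro L _ _ _ t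
  rw [aeval_eq_sum_range]
  refine (logHeight₁_sum_le _ _).trans ?_
  have : ∀ i, logHeight₁ (u.coeff i • t ^ i) ≤
      totalWeight L * Real.log (C (u.coeff i)) + i * logHeight₁ t := by
    intro i
    rw [Algebra.smul_def]
    refine (logHeight₁_mul_le _ _).trans ?_
    rw [logHeight₁_pow]
    gcongr
    rw [logHeight₁_eq_log_mulHeight₁, ← Real.log_pow]
    exact Real.log_le_log (mulHeight₁_pos _) (hC _ L)
  have h2 := Finset.sum_le_sum (s := Finset.range (u.natDegree+1)) (fun i _ => this i)
  rw [Finset.sum_add_distrib, ← Finset.mul_sum, ← Finset.sum_mul] at h2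
  simp only [Finset.card_range]
  push_cast
  linarith

/-- Lower bound. -/
lemma height_poly_ge (K : Type) [Field K] [NumberField K] (u : K[X]) (hu : 0 < u.natDegree) :
    ∃ C : ℝ, 0 ≤ C ∧
    ∀ (L : Type) [Field L] [NumberField L] [Algebra K L] (t : L),
    logHeight₁ t ≤ logHeight₁ (aeval t u) + C * totalWeight L := by
  choose C hC1 hC using height_alg K
  obtain ⟨d, hd⟩ : ∃ d, u.natDegree = d + 1 := ⟨u.natDegree - 1, by omega⟩
  set a := u.leadingCoeff
  have ha : a ≠ 0 := by
    intro h; rw [leadingCoeff_eq_zero] at h; simp [h] at hu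
  refine ⟨Real.log (d+2) + Real.log (C (a⁻¹)) + ∑ i : Fin (d+1), Real.log (C (-(a⁻¹ * u.coeff i))), ?_, ?_⟩
  · have h1 := fun c => Real.log_nonneg (hC1 c)
    have h2 : (0:ℝ) ≤ Real.log (d+2) := Real.log_nonneg (by linarith [(Nat.cast_nonneg d : (0:ℝ) ≤ d)])
    have := Finset.sum_nonneg (s := Finset.univ) (fun (i : Fin (d+1)) _ => h1 (-(a⁻¹ * u.coeff i)))
    linarith [h1 a⁻¹]
  intro L _ _ _ t
  have hlog : ∀ c, logHeight₁ (algebraMap K L c) ≤ totalWeight L * Real.log (C c) := by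
    intro c
    rw [logHeight₁_eq_log_mulHeight₁, ← Real.log_pow]
    exact Real.log_le_log (mulHeight₁_pos _) (hC _ L)
  have h := root_height (K := L) d (fun i => algebraMap K L (-(a⁻¹ * u.coeff i))) t
    (algebraMap K L a⁻¹ * aeval t u) ?_
  · have h' := Real.log_le_log (mulHeight₁_pos _) h
    rw [Real.log_mul (by positivity) (by positivity), Real.log_mul (by positivity) (by positivity),
      Real.log_prod (fun _ _ => by positivity), Real.log_pow] at h'
    simp only [← logHeight₁_eq_log_mulHeight₁] at h'
    have h1 := logHeight₁_mul_le (algebraMap K L a⁻¹) (aeval t u)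
    have h2 := Finset.sum_le_sum (s := Finset.univ)
      (fun (i : Fin (d+1)) _ => hlog (-(a⁻¹ * u.coeff i)))
    rw [← Finset.mul_sum] at h2
    have h3 := hlog a⁻¹
    linarith
  · rw [aeval_eq_sum_range, hd, Finset.sum_range_succ]
    have h1 : u.coeff (d+1) = a := by rw [← hd]; rfl
    have h2 : algebraMap K L a⁻¹ * algebraMap K L a = 1 := by
      rw [← map_mul, inv_mul_cancel₀ ha, map_one]
    rw [h1, Finset.sum_range]
    simp only [Algebra.smul_def, map_neg, map_mul, neg_mul, Finset.sum_neg_distrib, mul_assoc,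
      ← Finset.mul_sum]
    linear_combination (- t^(d+1)) * h2

end Stmt2

open Polynomial

namespace Stmt2
open Height AdmissibleAbsValues

lemma nonarch_int {L : Type*} [Field L] {v : AbsoluteValue L ℝ} (hv : IsNonarchimedean v) (n : ℤ) :
    v (n : L) ≤ 1 := by
  exact hv.apply_intCast_le_one

lemma nonarch_sum_le {L : Type*} [Field L] {v : AbsoluteValue L ℝ} (hv : IsNonarchimedean v)
    {α : Type*} (s : Finset α) (a : α → L) (m : ℝ) (hm : 0 ≤ m) (h : ∀ i ∈ s, v (a i) ≤ m) :
    v (∑ i ∈ s, a i) ≤ m := by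
  rcases s.eq_empty_or_nonempty with rfl | hs
  · simpa
  · exact (hv.apply_sum_le_sup hs).trans (Finset.sup'_le _ _ h)

lemma frob_add {L : Type*} [Field L] {v : AbsoluteValue L ℝ} (hv : IsNonarchimedean v)
    {p : ℕ} (hp : p.Prime) (a b : L) (m : ℝ) (ha : v a ≤ m) (hb : v b ≤ m) :
    v ((a + b) ^ p - (a ^ p + b ^ p)) ≤ v p * m ^ p := by
  have hm : 0 ≤ m := (v.nonneg a).trans ha
  rw [(Commute.all a b).add_pow_prime_eq hp, add_sub_cancel_left, map_mul, map_mul, map_mul]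
  have h2 := hp.two_le
  have h3 : v (∑ k ∈ Finset.Ioo 0 p, a ^ (k - 1) * b ^ (p - k - 1) * ((p.choose k / p : ℕ) : L))
      ≤ m ^ (p - 2) := by
    refine nonarch_sum_le hv _ _ _ (by positivity) fun k hk => ?_
    rw [Finset.mem_Ioo] at hk
    have h1 : v ((p.choose k / p : ℕ) : L) ≤ 1 := by
      have := nonarch_int hv ((p.choose k / p : ℕ) : ℤ)
      rwa [Int.cast_natCast] at this
    rw [map_mul, map_mul, map_pow, map_pow]
    calc v a ^ (k-1) * v b ^ (p - k-1) * v ((p.choose k / p : ℕ) : L)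
          ≤ m ^ (k-1) * m ^ (p-k-1) * 1 := by
          gcongr
      _ = m ^ (p-2) := by rw [mul_one, ← pow_add]; congr 1; omega
  calc _ ≤ v p * m * m * m ^ (p-2) := by gcongr
    _ = v p * m ^ p := by
      rw [mul_assoc, mul_assoc, ← mul_assoc m, ← pow_two, ← pow_add]
      congr 2; omega

lemma frob_sum {L : Type*} [Field L] {v : AbsoluteValue L ℝ} (hv : IsNonarchimedean v)
    {p : ℕ} (hp : p.Prime) {α : Type*} (s : Finset α) (a : α → L) (m : ℝ) (hm : 0 ≤ m)
    (h : ∀ i ∈ s, v (a i) ≤ m) :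
    v ((∑ i ∈ s, a i) ^ p - ∑ i ∈ s, a i ^ p) ≤ v p * m ^ p := by
  classical
  induction s using Finset.induction with
  | empty => simp [hp.ne_zero]; positivity
  | insert b s hb ih =>
    rw [Finset.sum_insert hb, Finset.sum_insert hb]
    have h1 := frob_add hv hp (a b) (∑ i ∈ s, a i) m (h b (by simp))
      (nonarch_sum_le hv s a m hm fun i hi => h i (by simp [hi]))
    have h2 := ih fun i hi => h i (by simp [hi])
    have : (a b + ∑ i ∈ s, a i) ^ p - (a b ^ p + ∑ i ∈ s, a i ^ p) =
      ((a b + ∑ i ∈ s, a i) ^ p - (a b ^ p + (∑ i ∈ s, a i)^p)) +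
        ((∑ i ∈ s, a i)^p - ∑ i ∈ s, a i ^ p) := by ring
    rw [this]
    exact (hv _ _).trans (max_le h1 h2)

lemma frob_rel {L : Type*} [Field L] {v : AbsoluteValue L ℝ} (hv : IsNonarchimedean v)
    {p : ℕ} (hp : p.Prime) {α : Type*} (s : Finset α) (c : α → ℤ) (w : α → L) (m : ℝ) (hm : 0 ≤ m)
    (h : ∀ i ∈ s, v (w i) ≤ m) (h0 : ∑ i ∈ s, c i * w i = 0) :
    v (∑ i ∈ s, c i * w i ^ p) ≤ v p * m ^ p := by
  have h1 := frob_sum hv hp s (fun i => c i * w i) m hm fun i hi => by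
    rw [map_mul]
    have := mul_le_mul (nonarch_int hv (c i)) (h i hi) (v.nonneg _) zero_le_one
    simpa using this
  rw [h0, zero_pow hp.ne_zero, zero_sub, map_neg_eq_map] at h1
  have h2 : v (∑ i ∈ s, ((c i : L) - (c i : L)^p) * w i ^ p) ≤ v p * m ^ p := by
    refine nonarch_sum_le hv s _ _ (by positivity) fun i hi => ?_
    have : (p : ℤ) ∣ c i - c i ^ p := by
      have := Fact.mk hp
      rw [← ZMod.intCast_zmod_eq_zero_iff_dvd]
      push_cast
      rw [ZMod.pow_card, sub_self]
    obtain ⟨k, hk⟩ := this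
    have hk' : ((c i : L) - (c i : L)^p) = p * k := by exact_mod_cast congrArg (Int.cast (R := L)) hk
    rw [hk', map_mul, map_mul, map_pow]
    calc v p * v k * v (w i) ^ p ≤ v p * 1 * m ^ p := by
          gcongr
          · exact nonarch_int hv k
          · exact h i hi
      _ = _ := by ring
  have : ∑ i ∈ s, c i * w i ^ p = ∑ i ∈ s, (c i * w i)^p + ∑ i ∈ s, ((c i : L) - (c i : L)^p) * w i ^ p := by
    rw [← Finset.sum_add_distrib]
    refine Finset.sum_congr rfl fun i _ => ?_
    ring
  rw [this]
  exact (hv _ _).trans (max_le h1 h2)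

lemma max_pow_one {L : Type*} [Field L] (v : AbsoluteValue L ℝ) (x : L) (k : ℕ) :
    max (v (x^k)) 1 = (max (v x) 1)^k := by
  rw [map_pow]
  rcases le_total (v x) 1 with h | h
  · rw [max_eq_right h, one_pow, max_eq_right (pow_le_one₀ (v.nonneg _) h)]
  · rw [max_eq_left h, max_eq_left (one_le_pow₀ h)]

lemma arch_int {L : Type*} [Field L] [NumberField L] (v : AbsoluteValue L ℝ)
    (hv : v ∈ archAbsVal (K := L)) (n : ℤ) : v (n : L) = |(n : ℝ)| := by
  obtain ⟨w, hw⟩ := (NumberField.mem_multisetInfinitePlace (K := L)).1 hv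
  rw [← hw]
  change ‖w (n : L)‖ = _
  simp

/-- The fundamental inequality. -/
lemma frob_ineq {L : Type*} [Field L] [NumberField L] (n : ℕ) (c : Fin (n+1) × Fin (n+1) → ℤ)
    (x y : L) (h0 : ∑ k, (c k : L) * (x^(k.1:ℕ) * y^(k.2:ℕ)) = 0) (p : ℕ) (hp : p.Prime)
    (hne : ∑ k, (c k : L) * (x^(k.1:ℕ) * y^(k.2:ℕ))^p ≠ 0) :
    totalWeight L * Real.log p ≤ totalWeight L * Real.log (∑ k, |(c k : ℝ)|)
      + p * n * (logHeight₁ x + logHeight₁ y) := by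
  set S : ℝ := ∑ k, |(c k : ℝ)| with hS
  have hS0 : 0 ≤ S := by positivity
  have hpR : (0:ℝ) < p := by exact_mod_cast hp.pos
  have hpL : (p : L) ≠ 0 := by exact_mod_cast hp.ne_zero
  have hSpos : 0 < S := by
    rcases hS0.lt_or_eq with h | h
    · exact h
    · exfalso; apply hne
      have := (Finset.sum_eq_zero_iff_of_nonneg (fun k _ => abs_nonneg (c k : ℝ))).1 (hS ▸ h.symm)
      refine Finset.sum_eq_zero fun k hk => ?_
      have := this k hk
      rw [abs_eq_zero] at this
      have : c k = 0 := by exact_mod_cast this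
      simp [this]
  set Q := ∑ k, (c k : L) * (x^(k.1:ℕ) * y^(k.2:ℕ))^p with hQ
  set e := Q / p with he
  have he0 : e ≠ 0 := div_ne_zero hne hpL
  have hw : ∀ (v : AbsoluteValue L ℝ) (k : Fin (n+1) × Fin (n+1)),
      v (x^(k.1:ℕ) * y^(k.2:ℕ)) ≤ (max (v x) 1)^n * (max (v y) 1)^n := by
    intro v k
    rw [map_mul, map_pow, map_pow]
    have : ∀ (z : L) (i : Fin (n+1)), v z ^ (i:ℕ) ≤ (max (v z) 1)^n := fun z i =>
      (pow_le_pow_left₀ (v.nonneg _) (le_max_left _ _) _).trans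
        (pow_le_pow_right₀ (le_max_right _ _) (by omega))
    gcongr
    · exact this _ _
    · exact this _ _
  have key := local_le (K := L) (Finset.univ : Finset Bool)
    (fun b => if b then x^(p*n) else y^(p*n)) (S / p) (by positivity) (fun v => v e)
    (fun v => v.nonneg _) (hasFiniteMulSupport he0) ?_ ?_
  · rw [product_formula he0] at key
    simp only [Fintype.prod_bool, if_true, Bool.false_eq_true, if_false, mulHeight₁_pow] at key
    have := Real.log_le_log one_pos key
    rw [Real.log_one, Real.log_mul (by positivity) (by positivity),
      Real.log_mul (by positivity) (by positivity), Real.log_pow, Real.log_pow, Real.log_pow,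
      Real.log_div hSpos.ne' hpR.ne', ← logHeight₁_eq_log_mulHeight₁,
      ← logHeight₁_eq_log_mulHeight₁] at this
    push_cast at this
    linarith
  · intro v hv
    simp only [Fintype.prod_bool, if_true, Bool.false_eq_true, if_false, max_pow_one]
    rw [he, map_div₀]
    have hvp : v (p : L) = p := by
      have := arch_int v hv p
      simpa using this
    rw [hvp, div_mul_eq_mul_div]
    gcongr
    rw [hQ]
    refine (v.sum_le _ _).trans ?_
    rw [hS, Finset.sum_mul]
    gcongr with k
    rw [map_mul, map_pow, arch_int v hv]
    gcongr
    calc _ ≤ ((max (v x) 1)^n * (max (v y) 1)^n)^p := by gcongr; exact hw v k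
      _ = _ := by rw [mul_pow, ← pow_mul, ← pow_mul, mul_comm n p]
  · intro v hv
    simp only [Fintype.prod_bool, if_true, Bool.false_eq_true, if_false, max_pow_one]
    rw [he, map_div₀]
    have hvp : 0 < v (p : L) := v.pos hpL
    rw [div_le_iff₀ hvp, hQ]
    refine (frob_rel (isNonarchimedean v hv) hp Finset.univ c _
      ((max (v x) 1)^n * (max (v y) 1)^n) (by positivity) (fun k _ => hw v k) h0).trans ?_
    rw [mul_pow, ← pow_mul, ← pow_mul, mul_comm n p, mul_comm (v p)]

/-- Integral algebraic relation between two polynomials over a number field. -/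
lemma exists_rel (K : Type*) [Field K] [NumberField K] (f g : K[X]) :
    ∃ (n : ℕ) (c : Fin (n+1) × Fin (n+1) → ℤ), c ≠ 0 ∧
      ∑ k, (c k : K[X]) * (f^(k.1:ℕ) * g^(k.2:ℕ)) = 0 := by
  set D := Module.finrank ℚ K
  have hD : 0 < D := Module.finrank_pos
  set a := f.natDegree + g.natDegree
  set n := (a + 1) * D
  have hN : ∀ k : Fin (n+1) × Fin (n+1), f^(k.1:ℕ) * g^(k.2:ℕ) ∈ degreeLT K (n*a+1) := by
    intro k
    rw [mem_degreeLT]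
    refine (degree_le_natDegree).trans_lt ?_
    norm_cast
    refine Nat.lt_succ_of_le (natDegree_mul_le.trans ?_)
    have h1 := natDegree_pow_le (p := f) (n := k.1)
    have h2 := natDegree_pow_le (p := g) (n := k.2)
    have h3 : (k.1:ℕ) * f.natDegree ≤ n * f.natDegree := Nat.mul_le_mul_right _ (by omega)
    have h4 : (k.2:ℕ) * g.natDegree ≤ n * g.natDegree := Nat.mul_le_mul_right _ (by omega)
    have : n * a = n * f.natDegree + n * g.natDegree := mul_add _ _ _
    omega
  let w : Fin (n+1) × Fin (n+1) → degreeLT K (n*a+1) := fun k => ⟨_, hN k⟩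
  have hfin : Module.finrank ℚ (degreeLT K (n*a+1)) = D * (n*a+1) := by
    have e := (degreeLTEquiv K (n*a+1)).restrictScalars ℚ
    rw [e.finrank_eq, Module.finrank_pi_fintype]
    simp [D, mul_comm]
  have : Module.Finite ℚ (degreeLT K (n*a+1)) := by
    have e := (degreeLTEquiv K (n*a+1)).restrictScalars ℚ
    exact Module.Finite.equiv e.symm
  have hnot : ¬ LinearIndependent ℤ w := by
    intro h
    have h' := (LinearIndependent.iff_fractionRing ℤ ℚ).1 h
    have := h'.fintype_card_le_finrank
    rw [hfin] at this
    simp only [Fintype.card_prod, Fintype.card_fin] at this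
    have e1 : D * (n * a + 1) ≤ n * n + D := by
      have : n * n = D * (n * a) + n * D := by simp only [n]; ring
      nlinarith
    have e2 : D ≤ n := by simp only [n]; nlinarith
    nlinarith
  rw [Fintype.not_linearIndependent_iff] at hnot
  obtain ⟨c, hc, k, hk⟩ := hnot
  refine ⟨n, c, fun h => hk (by simp [h]), ?_⟩
  have := congrArg (Submodule.subtype _) hc
  simpa [w, zsmul_eq_mul] using this

end Stmt2

open Polynomial

namespace Stmt2

/-- A Wronskian-type combination. -/
noncomputable def W {R : Type*} [CommRing R] (f g : R[X]) : R[X] :=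
  C (g.natDegree : R) * (derivative f * g) - C (f.natDegree : R) * (f * derivative g)

lemma der_pow {R : Type*} [CommRing R] (f : R[X]) (i : ℕ) :
    derivative (f^i) * f = C (i : R) * (f^i * derivative f) := by
  cases i with
  | zero => simp
  | succ i => rw [derivative_pow]; simp only [Nat.add_sub_cancel]; ring

lemma der_mon {R : Type*} [CommRing R] (f g : R[X]) (i j : ℕ) :
    derivative (f^i * g^j) * (f * g) =
      (f^i * g^j) * (C (i : R) * (derivative f * g) + C (j : R) * (f * derivative g)) := by
  rw [derivative_mul]
  linear_combination (g^j * g) * der_pow f i + (f^i * f) * der_pow g j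

lemma W_eq_zero_of_prop {F : Type*} [Field F] [CharZero F] (f g : F[X]) (hf : f ≠ 0) (hg : g ≠ 0)
    (i j i' j' : ℕ) (hne : (i, j) ≠ (i', j')) (c : F) (h : f^i * g^j = C c * (f^i' * g^j')) :
    W f g = 0 := by
  have hP : f^i * g^j ≠ 0 := mul_ne_zero (pow_ne_zero _ hf) (pow_ne_zero _ hg)
  have hc : c ≠ 0 := by rintro rfl; simp [h] at hP
  have h1 := der_mon f g i j
  have h2 := der_mon f g i' j'
  have h3 : derivative (f^i * g^j) = C c * derivative (f^i' * g^j') := by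
    rw [h, derivative_C_mul]
  set P := f^i * g^j
  set P' := f^i' * g^j'
  have h4 : P * ((C (i : F) - C (i' : F)) * (derivative f * g)
      + (C (j : F) - C (j' : F)) * (f * derivative g)) = 0 := by
    linear_combination (-1 : F[X]) * h1 + (f * g) * h3 + (C c) * h2 - (C (i' : F) * (derivative f * g) + C (j' : F) * (f * derivative g)) * h
  have h5 := (mul_eq_zero.1 h4).resolve_left hP
  have h6 : i * f.natDegree + j * g.natDegree = i' * f.natDegree + j' * g.natDegree := by
    have := congrArg natDegree h
    rw [natDegree_C_mul hc] at this
    simp only [P, P'] at this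
    rwa [natDegree_mul (pow_ne_zero _ hf) (pow_ne_zero _ hg), natDegree_mul (pow_ne_zero _ hf) (pow_ne_zero _ hg),
      natDegree_pow, natDegree_pow, natDegree_pow, natDegree_pow] at this
  have h7 : C (i : F) * C (f.natDegree : F) + C (j : F) * C (g.natDegree : F)
      = C (i' : F) * C (f.natDegree : F) + C (j' : F) * C (g.natDegree : F) := by
    simp only [← C_mul, ← C_add]
    congr 1
    exact_mod_cast h6
  have h8 : (C (i : F) - C (i' : F)) * W f g = 0 := by
    unfold W
    linear_combination (C (g.natDegree : F)) * h5 - (f * derivative g) * h7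
  have h9 : (C (j : F) - C (j' : F)) * W f g = 0 := by
    unfold W
    linear_combination -(C (f.natDegree : F)) * h5 + (derivative f * g) * h7
  by_contra hW
  have e1 := (mul_eq_zero.1 h8).resolve_right hW
  have e2 := (mul_eq_zero.1 h9).resolve_right hW
  rw [← C_sub, C_eq_zero, sub_eq_zero] at e1 e2
  exact hne (Prod.ext (by exact_mod_cast e1) (by exact_mod_cast e2))

open Topology Filter in
lemma dense_norm_ne (u w : ℂ[X]) (hw : w ≠ 0) (h : ∀ c : ℂ, u ≠ C c * w) :
    Dense {z : ℂ | ‖u.eval z‖ ≠ ‖w.eval z‖} := by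
  rw [dense_iff_inter_open]
  intro U hU hne
  by_contra hcon
  have hall : ∀ z ∈ U, ‖u.eval z‖ = ‖w.eval z‖ := by
    intro z hz
    by_contra h'
    exact hcon ⟨z, hz, h'⟩
  have hfin : (w.roots.toFinset : Set ℂ).Finite := Finset.finite_toSet _
  obtain ⟨z0, hz0, hz0'⟩ := (dense_univ.sdiff_finite hfin).inter_open_nonempty U hU hne
  have hw0 : w.eval z0 ≠ 0 := by
    intro h0
    apply hz0'.2
    simp [hw, h0]
  have hUn : U ∈ 𝓝 z0 := hU.mem_nhds hz0
  have hev : ∀ᶠ z in 𝓝 z0, w.eval z ≠ 0 := (w.continuous.continuousAt).eventually_ne hw0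
  have h1 := Complex.eventually_eq_of_isLocalMax_norm (f := fun z => u.eval z / w.eval z) (c := z0)
    (by
      filter_upwards [hev] with z hz
      exact u.differentiable.differentiableAt.div w.differentiable.differentiableAt hz)
    (by
      filter_upwards [hev, hUn] with z hz hzU
      simp only [Function.comp, norm_div]
      rw [hall z hzU, hall z0 hz0, div_self (norm_ne_zero_iff.2 hz), div_self (norm_ne_zero_iff.2 hw0)])
  set c := u.eval z0 / w.eval z0
  have h2 : ∀ᶠ z in 𝓝 z0, (u - C c * w).IsRoot z := by
    filter_upwards [h1, hev] with z hz hwz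
    rw [IsRoot.def, eval_sub, eval_mul, eval_C, ← hz, div_mul_cancel₀ _ hwz, sub_self]
  have h3 : u - C c * w = 0 := by
    apply eq_zero_of_infinite_isRoot
    exact infinite_of_mem_nhds z0 h2
  exact h c (sub_eq_zero.1 h3)

open Topology Filter in
lemma eventually_sum_ne {α : Type*} [Fintype α] (c : α → ℤ) (hc : c ≠ 0) (a : α → ℂ)
    (ha : ∀ k, a k ≠ 0) (hd : ∀ k k', k ≠ k' → ‖a k‖ ≠ ‖a k'‖) :
    ∀ᶠ p : ℕ in atTop, ∑ k, (c k : ℂ) * a k ^ p ≠ 0 := by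
  classical
  obtain ⟨k1, hk1⟩ := Function.ne_iff.1 hc
  obtain ⟨k0, hk0, hmax⟩ := (Finset.univ.filter fun k => c k ≠ 0).exists_max_image (fun k => ‖a k‖)
    ⟨k1, by simpa using hk1⟩
  have ht : Tendsto (fun p : ℕ => ∑ k, (c k : ℂ) * (a k / a k0)^p) atTop
      (𝓝 (∑ k, if k = k0 then (c k0 : ℂ) else 0)) := by
    refine tendsto_finsetSum _ fun k _ => ?_
    split_ifs with h
    · subst h
      simp [div_self (ha k)]
    · by_cases hk : c k = 0
      · simp [hk]
      · have hlt : ‖a k / a k0‖ < 1 := by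
          rw [norm_div, div_lt_one (norm_pos_iff.2 (ha k0))]
          exact lt_of_le_of_ne (hmax k (by simpa using hk)) (hd k k0 h)
        have := (tendsto_pow_atTop_nhds_zero_of_norm_lt_one hlt).const_mul (c k : ℂ)
        simpa using this
  rw [Finset.sum_ite_eq'] at ht
  have hne : (if k0 ∈ Finset.univ then (c k0 : ℂ) else 0) ≠ 0 := by
    simp at hk0
    simpa using hk0
  filter_upwards [ht.eventually_ne hne] with p hp h0
  apply hp
  have : ∑ k, (c k : ℂ) * (a k / a k0)^p = (∑ k, (c k : ℂ) * a k ^ p) / a k0 ^ p := by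
    rw [Finset.sum_div]
    refine Finset.sum_congr rfl fun k _ => ?_
    rw [div_pow, mul_div_assoc]
  rw [this, h0, zero_div]

lemma ne_zero_of_W {R : Type*} [CommRing R] {f g : R[X]} (h : W f g ≠ 0) : f ≠ 0 ∧ g ≠ 0 := by
  constructor <;> (rintro rfl; simp [W] at h)

lemma natDegree_pos_of_W {R : Type*} [CommRing R] {f g : R[X]} (h : W f g ≠ 0) :
    0 < f.natDegree ∧ 0 < g.natDegree := by
  constructor
  · rw [Nat.pos_iff_ne_zero]
    intro h0
    obtain ⟨c, rfl⟩ := natDegree_eq_zero.1 h0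
    simp [W] at h
  · rw [Nat.pos_iff_ne_zero]
    intro h0
    obtain ⟨c, rfl⟩ := natDegree_eq_zero.1 h0
    simp [W] at h

open Filter in
lemma nonvanish_C (f g : ℂ[X]) (hW : W f g ≠ 0) (n : ℕ) (c : Fin (n+1) × Fin (n+1) → ℤ) (hc : c ≠ 0) :
    ∀ᶠ p : ℕ in atTop, ∑ k, (c k : ℂ[X]) * (f^(k.1:ℕ) * g^(k.2:ℕ))^p ≠ 0 := by
  obtain ⟨hf, hg⟩ := ne_zero_of_W hW
  let a : Fin (n+1) × Fin (n+1) → ℂ[X] := fun k => f^(k.1:ℕ) * g^(k.2:ℕ)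
  have ha : ∀ k, a k ≠ 0 := fun k => mul_ne_zero (pow_ne_zero _ hf) (pow_ne_zero _ hg)
  have hprop : ∀ k k', k ≠ k' → ∀ c : ℂ, a k ≠ C c * a k' := by
    intro k k' hk c h
    refine hW (W_eq_zero_of_prop f g hf hg k.1 k.2 k'.1 k'.2 ?_ c h)
    intro h'
    rw [Prod.mk.injEq] at h'
    exact hk (Prod.ext (Fin.ext h'.1) (Fin.ext h'.2))
  have hD : Dense (⋂ q : {q : (Fin (n+1) × Fin (n+1)) × (Fin (n+1) × Fin (n+1)) // q.1 ≠ q.2},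
      {z : ℂ | ‖(a q.1.1).eval z‖ ≠ ‖(a q.1.2).eval z‖}) := by
    refine dense_iInter_of_isOpen (fun q => ?_) (fun q => dense_norm_ne _ _ (ha _) (hprop _ _ q.2))
    exact isOpen_ne_fun (a q.1.1).continuous.norm (a q.1.2).continuous.norm
  obtain ⟨τ, hτ⟩ := (hD.sdiff_finite (Finset.finite_toSet (f * g).roots.toFinset)).nonempty
  have hτ0 : (f * g).eval τ ≠ 0 := by
    intro h0
    apply hτ.2
    rw [Finset.mem_coe, Multiset.mem_toFinset, mem_roots (mul_ne_zero hf hg)]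
    exact h0
  rw [eval_mul] at hτ0
  have hτ1 := hτ.1
  rw [Set.mem_iInter] at hτ1
  filter_upwards [eventually_sum_ne c hc (fun k => (a k).eval τ) (fun k => by
    simp only [a, eval_mul, eval_pow]
    exact mul_ne_zero (pow_ne_zero _ (left_ne_zero_of_mul hτ0)) (pow_ne_zero _ (right_ne_zero_of_mul hτ0)))
    (fun k k' hk => hτ1 ⟨(k,k'), hk⟩)] with p hp h0
  apply hp
  have := congrArg (eval τ) h0
  simpa [eval_finsetSum, a] using this

lemma W_map {R S : Type*} [CommRing R] [CommRing S] (σ : R →+* S) (f g : R[X])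
    (hf : (f.map σ).natDegree = f.natDegree) (hg : (g.map σ).natDegree = g.natDegree) :
    W (f.map σ) (g.map σ) = (W f g).map σ := by
  simp [W, hf, hg, derivative_map]

open Filter in
lemma nonvanish (K : Type*) [Field K] [NumberField K] (f g : K[X]) (hW : W f g ≠ 0) (n : ℕ)
    (c : Fin (n+1) × Fin (n+1) → ℤ) (hc : c ≠ 0) :
    ∀ᶠ p : ℕ in atTop, ∑ k, (c k : K[X]) * (f^(k.1:ℕ) * g^(k.2:ℕ))^p ≠ 0 := by
  obtain ⟨σ⟩ : Nonempty (K →+* ℂ) := inferInstance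
  have h := nonvanish_C (f.map σ) (g.map σ) (by
    rw [W_map σ f g (natDegree_map _) (natDegree_map _)]
    simpa [Polynomial.map_eq_zero] using hW) n c hc
  filter_upwards [h] with p hp h0
  apply hp
  have := congrArg (Polynomial.map σ) h0
  simpa [Polynomial.map_sum] using this

end Stmt2

open Polynomial

namespace Stmt2
open Height AdmissibleAbsValues

/-- left product -/
def lh {α β R : Type*} [Fintype α] [CommMonoid R] (u : α ⊕ β → R) (v : α ⊕ β → ℕ) : R :=
  ∏ i, u (Sum.inl i) ^ v (Sum.inl i)

/-- right product -/
def rh {α β R : Type*} [Fintype β] [CommMonoid R] (u : α ⊕ β → R) (v : α ⊕ β → ℕ) : R :=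
  ∏ i, u (Sum.inr i) ^ v (Sum.inr i)

/-- sign -/
def sg {α β : Type*} : α ⊕ β → ℤ := Sum.elim (fun _ => 1) (fun _ => -1)

lemma sg_prod {α β F : Type*} [Fintype α] [Fintype β] [Field F] (x : α ⊕ β → F)
    (v : α ⊕ β → ℕ) : ∏ i, x i ^ (sg i * (v i : ℤ)) = lh x v / rh x v := by
  rw [Fintype.prod_sum_type]
  simp [sg, lh, rh, div_eq_mul_inv]

lemma rh_ne {α β F : Type*} [Fintype β] [Field F] (x : α ⊕ β → F)
    (hx : ∀ i, x i ≠ 0) (v : α ⊕ β → ℕ) : rh x v ≠ 0 :=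
  Finset.prod_ne_zero_iff.2 fun i _ => pow_ne_zero _ (hx _)

lemma lh_ne {α β F : Type*} [Fintype α] [Field F] (x : α ⊕ β → F)
    (hx : ∀ i, x i ≠ 0) (v : α ⊕ β → ℕ) : lh x v ≠ 0 :=
  Finset.prod_ne_zero_iff.2 fun i _ => pow_ne_zero _ (hx _)

lemma rel_height {α β L : Type*} [Fintype α] [Fintype β] [Field L] [NumberField L]
    (x : α ⊕ β → L) (hx : ∀ i, x i ≠ 0) (v : α ⊕ β → ℕ) (h : lh x v = rh x v) (i0 : α ⊕ β)
    (B : ℕ) (hpos : 0 < v i0) (hB : ∀ i, i ≠ i0 → B * v i < v i0) :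
    (B : ℝ) * logHeight₁ (x i0) ≤ ∑ i, logHeight₁ (x i) := by
  classical
  have h1 : ∏ i, x i ^ (sg i * (v i : ℤ)) = 1 := by
    rw [sg_prod, h, div_self (rh_ne x hx v)]
  rw [← Finset.mul_prod_erase _ _ (Finset.mem_univ i0)] at h1
  have h2 := congrArg logHeight₁ (eq_inv_of_mul_eq_one_left h1)
  rw [logHeight₁_inv] at h2
  have hz : ∀ i, logHeight₁ (x i ^ (sg i * (v i : ℤ))) = v i * logHeight₁ (x i) := by
    intro i
    rw [logHeight₁_zpow]
    rcases i with i | i <;> simp [sg]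
  rw [hz] at h2
  have h3 : logHeight₁ (∏ i ∈ Finset.univ.erase i0, x i ^ (sg i * (v i : ℤ)))
      ≤ ∑ i ∈ Finset.univ.erase i0, (v i : ℝ) * logHeight₁ (x i) := by
    refine (logHeight₁_prod_le _ _).trans (le_of_eq ?_)
    exact Finset.sum_congr rfl fun i _ => hz i
  rw [← h2] at h3
  have h4 : (v i0 : ℝ) * (B * logHeight₁ (x i0)) ≤ v i0 * ∑ i, logHeight₁ (x i) := by
    calc (v i0 : ℝ) * (B * logHeight₁ (x i0)) = B * (v i0 * logHeight₁ (x i0)) := by ring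
      _ ≤ B * ∑ i ∈ Finset.univ.erase i0, (v i : ℝ) * logHeight₁ (x i) := by gcongr
      _ = ∑ i ∈ Finset.univ.erase i0, ((B * v i : ℕ) : ℝ) * logHeight₁ (x i) := by
        rw [Finset.mul_sum]; push_cast
        exact Finset.sum_congr rfl fun i _ => by ring
      _ ≤ ∑ i ∈ Finset.univ.erase i0, (v i0 : ℝ) * logHeight₁ (x i) := by
        refine Finset.sum_le_sum fun i hi => ?_
        have := hB i (Finset.ne_of_mem_erase hi)
        exact mul_le_mul_of_nonneg_right (by exact_mod_cast this.le) (zero_le_logHeight₁ _)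
      _ ≤ ∑ i, (v i0 : ℝ) * logHeight₁ (x i) := by
        refine Finset.sum_le_sum_of_subset_of_nonneg (Finset.erase_subset _ _) fun i _ _ => ?_
        exact mul_nonneg (by positivity) (zero_le_logHeight₁ _)
      _ = _ := by rw [Finset.mul_sum]
  exact le_of_mul_le_mul_left h4 (by exact_mod_cast hpos)

lemma height_small (K : Type) [Field K] [NumberField K] {α β : Type} [Fintype α] [Fintype β]
    (u : α ⊕ β → K[X]) (i0 : α ⊕ β) (hu : 0 < (u i0).natDegree) (ε : ℝ) (hε : 0 < ε) :
    ∃ B : ℕ, ∀ (L : Type) [Field L] [NumberField L] [Algebra K L] (t : L) (v : α ⊕ β → ℕ),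
      (∀ i, aeval t (u i) ≠ 0) → 0 < v i0 → (∀ i, i ≠ i0 → B * v i < v i0) →
      lh (fun i => aeval t (u i)) v = rh (fun i => aeval t (u i)) v →
      logHeight₁ (aeval t (u i0)) ≤ ε * totalWeight L := by
  choose A C hA hC hAC using fun i => height_poly_le K (u i)
  obtain ⟨C', hC', hge⟩ := height_poly_ge K (u i0) hu
  set A' := ∑ i, A i
  set C'' := A' * C' + ∑ i, C i
  have hA' : 0 ≤ A' := Finset.sum_nonneg fun i _ => hA i
  have hC'' : 0 ≤ C'' := add_nonneg (mul_nonneg hA' hC') (Finset.sum_nonneg fun i _ => hC i)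
  obtain ⟨B, hB⟩ := exists_nat_ge (A' + C'' / ε + 1)
  refine ⟨B, fun L _ _ _ t v hne hpos hcone hrel => ?_⟩
  have h1 := rel_height (fun i => aeval t (u i)) hne v hrel i0 B hpos hcone
  have hD : (0:ℝ) < totalWeight L := by exact_mod_cast NumberField.totalWeight_pos L
  set D : ℝ := ((totalWeight L : ℕ) : ℝ)
  set h0 := logHeight₁ (aeval t (u i0)) with hh0
  have hh : 0 ≤ h0 := zero_le_logHeight₁ _
  have h2 : ∑ i, logHeight₁ (aeval t (u i)) ≤ A' * h0 + C'' * D := by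
    calc _ ≤ ∑ i, (A i * logHeight₁ t + C i * D) := Finset.sum_le_sum fun i _ => hAC i L t
      _ = A' * logHeight₁ t + (∑ i, C i) * D := by
        rw [Finset.sum_add_distrib, Finset.sum_mul, Finset.sum_mul]
      _ ≤ A' * (h0 + C' * D) + (∑ i, C i) * D := by gcongr; exact hge L t
      _ = _ := by simp only [C'']; ring
  have h3 : (C'' / ε + 1) * h0 ≤ C'' * D := by nlinarith
  by_contra hlt
  push Not at hlt
  have h4 : (C'' / ε + 1) * (ε * D) < (C'' / ε + 1) * h0 := by
    apply mul_lt_mul_of_pos_left hlt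
    positivity
  have h5 : (C'' / ε + 1) * (ε * D) = C'' * D + ε * D := by field_simp
  nlinarith [mul_pos hε hD]

lemma core (K : Type) [Field K] [NumberField K] {α β γ δ : Type} [Fintype α] [Fintype β]
    [Fintype γ] [Fintype δ] (u : α ⊕ β → K[X]) (w : γ ⊕ δ → K[X]) (i0 : α ⊕ β) (j0 : γ ⊕ δ)
    (hW : W (u i0) (w j0) ≠ 0) :
    ∃ (B : ℕ) (Q : K[X]), Q ≠ 0 ∧
      ∀ (L : Type) [Field L] [NumberField L] [Algebra K L] (t : L) (v : α ⊕ β → ℕ) (v' : γ ⊕ δ → ℕ),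
      (∀ i, aeval t (u i) ≠ 0) → 0 < v i0 → (∀ i, i ≠ i0 → B * v i < v i0) →
      lh (fun i => aeval t (u i)) v = rh (fun i => aeval t (u i)) v →
      (∀ i, aeval t (w i) ≠ 0) → 0 < v' j0 → (∀ i, i ≠ j0 → B * v' i < v' j0) →
      lh (fun i => aeval t (w i)) v' = rh (fun i => aeval t (w i)) v' →
      aeval t Q = 0 := by
  obtain ⟨n, c, hc, hrel⟩ := exists_rel K (u i0) (w j0)
  obtain ⟨p0, hp0⟩ := Filter.eventually_atTop.1 (nonvanish K _ _ hW n c hc)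
  set S : ℝ := ∑ k, |(c k : ℝ)| with hS
  obtain ⟨q, hq⟩ := exists_nat_gt S
  obtain ⟨p, hpq, hp⟩ := Nat.exists_infinite_primes (max p0 q)
  have hSp : S < p := hq.trans_le (by exact_mod_cast (le_max_right _ _).trans hpq)
  have hSpos : 0 < S := by
    have h0 : 0 ≤ S := by positivity
    rcases h0.lt_or_eq with h | h
    · exact h
    · exfalso; apply hc
      have := (Finset.sum_eq_zero_iff_of_nonneg (fun k _ => abs_nonneg (c k : ℝ))).1 (hS ▸ h.symm)
      funext k
      have := this k (Finset.mem_univ _)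
      rw [abs_eq_zero] at this
      exact_mod_cast this
  have hlog : Real.log S < Real.log p := Real.log_lt_log hSpos hSp
  set ε := (Real.log p - Real.log S) / (2 * p * n + 1) with hε
  have hden : (0:ℝ) < 2 * p * n + 1 := by positivity
  have hε0 : 0 < ε := div_pos (by linarith) hden
  obtain ⟨hd1, hd2⟩ := natDegree_pos_of_W hW
  obtain ⟨B1, hB1⟩ := height_small K u i0 hd1 ε hε0
  obtain ⟨B2, hB2⟩ := height_small K w j0 hd2 ε hε0
  refine ⟨max B1 B2, _, hp0 p ((le_max_left _ _).trans hpq), ?_⟩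
  intro L _ _ _ t v v' hu hv hcone hr hw hv' hcone' hr'
  have e1 := hB1 L t v hu hv (fun i hi => lt_of_le_of_lt
    (Nat.mul_le_mul_right _ (le_max_left _ _)) (hcone i hi)) hr
  have e2 := hB2 L t v' hw hv' (fun i hi => lt_of_le_of_lt
    (Nat.mul_le_mul_right _ (le_max_right _ _)) (hcone' i hi)) hr'
  by_contra hne
  have hrel' := congrArg (aeval t) hrel
  simp only [map_sum, map_mul, map_pow, map_intCast, map_zero] at hrel' hne
  have key := frob_ineq n c _ _ hrel' p hp hne
  have hD : (0:ℝ) < totalWeight L := by exact_mod_cast NumberField.totalWeight_pos L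
  set D : ℝ := ((totalWeight L : ℕ) : ℝ)
  have h6 : p * n * (logHeight₁ (aeval t (u i0)) + logHeight₁ (aeval t (w j0)))
      ≤ p * n * (ε * D + ε * D) := by gcongr
  have h7 : ε * (2 * p * n + 1) = Real.log p - Real.log S := div_mul_cancel₀ _ hden.ne'
  have h8 : p * n * (ε * D + ε * D) + ε * D = D * (Real.log p - Real.log S) := by
    rw [← h7]; ring
  nlinarith [mul_pos hε0 hD]

end Stmt2

open Polynomial

namespace Stmt2

lemma resid (A : Type*) [AddCommGroup A] [Module.Finite ℤ A] (a : A) (ha : a ≠ 0) :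
    ∃ M : ℕ, 0 < M ∧ ∀ b : A, (M : ℤ) • b ≠ a := by
  set p := (addOrderOf a).minFac with hpdef
  have hord : addOrderOf a ≠ 1 := by
    rw [Ne, AddMonoid.addOrderOf_eq_one_iff]
    exact ha
  have hp : p.Prime := Nat.minFac_prime hord
  have hpd : p ∣ addOrderOf a := Nat.minFac_dvd _
  by_contra hcon
  push Not at hcon
  have hmem : a ∈ ⨅ i : ℕ, (Ideal.span {(p : ℤ)}) ^ i • (⊤ : Submodule ℤ A) := by
    rw [Submodule.mem_iInf]
    intro i
    obtain ⟨b, hb⟩ := hcon (p^i) (pow_pos hp.pos _)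
    rw [Ideal.span_singleton_pow, Submodule.ideal_span_singleton_smul,
      Submodule.mem_smul_pointwise_iff_exists]
    refine ⟨b, trivial, ?_⟩
    rw [← hb]; push_cast; rfl
  rw [Ideal.mem_iInf_smul_pow_eq_bot_iff] at hmem
  obtain ⟨⟨r, hr⟩, hra⟩ := hmem
  rw [Ideal.mem_span_singleton] at hr
  have h1 : (r - 1) • a = 0 := by
    rw [sub_smul, one_smul, sub_eq_zero]; exact hra
  rw [← addOrderOf_dvd_iff_zsmul_eq_zero] at h1
  have h2 : (p : ℤ) ∣ r - 1 := (Int.natCast_dvd_natCast.2 hpd).trans h1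
  have h3 : (p : ℤ) ∣ 1 := by
    have := dvd_sub hr h2
    simpa using this
  have := Int.natCast_dvd_natCast.1 (by exact_mod_cast h3 : (p : ℤ) ∣ (1:ℕ))
  exact hp.one_lt.ne' (Nat.dvd_one.1 this)

/-- congruence condition -/
def Cong {α β : Type*} (M : ℕ) (v : α ⊕ β → ℕ) : Prop :=
  (∀ i, ∃ m : ℕ, v (Sum.inl i) = 1 + M * m) ∧ ∀ i, ∃ m : ℕ, v (Sum.inr i) = M * m

lemma Cong.of_dvd {α β : Type*} {M N : ℕ} (h : M ∣ N) {v : α ⊕ β → ℕ} (hv : Cong N v) :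
    Cong M v := by
  obtain ⟨k, rfl⟩ := h
  refine ⟨fun i => ?_, fun i => ?_⟩
  · obtain ⟨m, hm⟩ := hv.1 i
    exact ⟨k * m, by rw [hm, mul_assoc]⟩
  · obtain ⟨m, hm⟩ := hv.2 i
    exact ⟨k * m, by rw [hm, mul_assoc]⟩

lemma M_field {F : Type*} [Field F] {α β : Type*} [Fintype α] [Fintype β] (x : α ⊕ β → F)
    (hx : ∀ i, x i ≠ 0) (h : ∏ i, x (Sum.inl i) ≠ 1) :
    ∃ M : ℕ, 0 < M ∧ ∀ v : α ⊕ β → ℕ, Cong M v → lh x v ≠ rh x v := by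
  let y : α ⊕ β → Fˣ := fun i => Units.mk0 (x i) (hx i)
  let Γ := Subgroup.closure (Set.range y)
  have : Finite (Set.range y) := Set.finite_range y
  have hfg : Group.FG Γ := Group.closure_finite_fg _
  have hfin : Module.Finite ℤ (Additive Γ) :=
    Module.Finite.iff_addGroup_fg.2 (GroupFG.iff_add_fg.1 hfg)
  let z : α ⊕ β → Γ := fun i => ⟨y i, Subgroup.subset_closure ⟨i, rfl⟩⟩
  let θ : Γ →* F := (Units.coeHom F).comp Γ.subtype
  have hθ : Function.Injective θ := fun a b hab => Subtype.ext (Units.ext hab)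
  have hθz : ∀ i, θ (z i) = x i := fun i => rfl
  let a : Γ := ∏ i, z (Sum.inl i)
  have ha : Additive.ofMul a ≠ 0 := by
    intro h0
    apply h
    have : a = 1 := h0
    have := congrArg θ this
    simpa [a, hθz] using this
  obtain ⟨M, hM, hb⟩ := resid (Additive Γ) _ ha
  refine ⟨M, hM, fun v hv heq => ?_⟩
  choose m hm using hv.1
  choose m' hm' using hv.2
  have h1 : (∏ i, z (Sum.inl i) ^ (1 + M * m i)) = ∏ j, z (Sum.inr j) ^ (M * m' j) := by
    apply hθ
    simp only [lh, rh, hm, hm'] at heq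
    simpa [hθz] using heq
  apply hb (Additive.ofMul ((∏ i, z (Sum.inl i) ^ m i)⁻¹ * ∏ j, z (Sum.inr j) ^ m' j))
  have h2 : ((∏ i, z (Sum.inl i) ^ m i)⁻¹ * ∏ j, z (Sum.inr j) ^ m' j) ^ M = a := by
    simp only [pow_add, pow_one, Finset.prod_mul_distrib, pow_mul'] at h1
    rw [Finset.prod_pow, Finset.prod_pow] at h1
    rw [mul_pow, ← h1, inv_pow, inv_mul_eq_iff_eq_mul, mul_comm]
  rw [← h2, natCast_zsmul, ← ofMul_pow]

lemma all_ne {F : Type*} [Field F] {α β : Type*} [Fintype α] [Fintype β] (x : α ⊕ β → F)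
    (v : α ⊕ β → ℕ) (hv : ∀ i, 0 < v i) (h : lh x v = rh x v)
    (hn : ¬ (∏ i, x (Sum.inl i) = 0 ∧ ∏ i, x (Sum.inr i) = 0)) : ∀ i, x i ≠ 0 := by
  have hl : lh x v = 0 ↔ ∏ i, x (Sum.inl i) = 0 := by
    simp only [lh, Finset.prod_eq_zero_iff, Finset.mem_univ, true_and]
    exact exists_congr fun i => pow_eq_zero_iff (hv _).ne'
  have hr : rh x v = 0 ↔ ∏ i, x (Sum.inr i) = 0 := by
    simp only [rh, Finset.prod_eq_zero_iff, Finset.mem_univ, true_and]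
    exact exists_congr fun i => pow_eq_zero_iff (hv _).ne'
  rintro (i | i) h0
  · have h1 : ∏ i, x (Sum.inl i) = 0 := Finset.prod_eq_zero (Finset.mem_univ i) h0
    exact hn ⟨h1, hr.1 (by rw [← h]; exact hl.2 h1)⟩
  · have h1 : ∏ i, x (Sum.inr i) = 0 := Finset.prod_eq_zero (Finset.mem_univ i) h0
    exact hn ⟨hl.1 (by rw [h]; exact hr.2 h1), h1⟩

/-- cone condition -/
def Cone {ι : Type*} (B : ℕ) (i0 : ι) (v : ι → ℕ) : Prop := ∀ i, i ≠ i0 → B * v i < v i0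

lemma Cone.mono {ι : Type*} {B B' : ℕ} (h : B ≤ B') {i0 : ι} {v : ι → ℕ} (hv : Cone B' i0 v) :
    Cone B i0 v := fun i hi => lt_of_le_of_lt (Nat.mul_le_mul_right _ h) (hv i hi)

lemma lh_add {α β R : Type*} [Fintype α] [CommMonoid R] (u : α ⊕ β → R) (v w : α ⊕ β → ℕ) :
    lh u (v + w) = lh u v * lh u w := by
  simp [lh, pow_add, Finset.prod_mul_distrib]

lemma rh_add {α β R : Type*} [Fintype β] [CommMonoid R] (u : α ⊕ β → R) (v w : α ⊕ β → ℕ) :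
    rh u (v + w) = rh u v * rh u w := by
  simp [rh, pow_add, Finset.prod_mul_distrib]

lemma lh_map {α β R S : Type*} [Fintype α] [CommMonoid R] [CommMonoid S] {G : Type*} [FunLike G R S]
    [MonoidHomClass G R S] (σ : G) (u : α ⊕ β → R) (v : α ⊕ β → ℕ) :
    σ (lh u v) = lh (fun i => σ (u i)) v := by simp [lh]

lemma rh_map {α β R S : Type*} [Fintype β] [CommMonoid R] [CommMonoid S] {G : Type*} [FunLike G R S]
    [MonoidHomClass G R S] (σ : G) (u : α ⊕ β → R) (v : α ⊕ β → ℕ) :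
    σ (rh u v) = rh (fun i => σ (u i)) v := by simp [rh]

/-- the submonoid of exponents whose relations hold -/
def Lsub {α β γ δ : Type*} [Fintype α] [Fintype β] [Fintype γ] [Fintype δ] {R : Type*} [CommRing R]
    (x : α ⊕ β → R) (y : γ ⊕ δ → R) : AddSubmonoid ((α ⊕ β → ℕ) × (γ ⊕ δ → ℕ)) where
  carrier := {v | lh x v.1 = rh x v.1 ∧ lh y v.2 = rh y v.2}
  zero_mem' := by simp [lh, rh]
  add_mem' := by
    rintro a b ⟨h1, h2⟩ ⟨h3, h4⟩
    simp only [Set.mem_ofPred_eq, Prod.fst_add, Prod.snd_add, lh_add, rh_add, h1, h2, h3, h4,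
      and_self]

lemma main_K (K : Type) [Field K] [NumberField K] {α β γ δ : Type} [Fintype α] [Fintype β]
    [Fintype γ] [Fintype δ] (u : α ⊕ β → K[X]) (w : γ ⊕ δ → K[X]) (i0 : α ⊕ β) (j0 : γ ⊕ δ)
    (hW : W (u i0) (w j0) ≠ 0)
    (h1 : IsCoprime (∏ i, u (Sum.inl i)) (∏ i, u (Sum.inr i)))
    (h2 : IsCoprime (∏ i, w (Sum.inl i)) (∏ i, w (Sum.inr i)))
    (h3 : IsCoprime (∏ i, u (Sum.inl i) - 1) (∏ i, w (Sum.inl i) - 1)) :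
    ∃ (B M : ℕ) (𝒮 : Set (AddSubmonoid ((α ⊕ β → ℕ) × (γ ⊕ δ → ℕ)))), 0 < M ∧ 𝒮.Finite ∧
      (∀ v v', (∀ i, 0 < v i) → (∀ i, 0 < v' i) → Cone B i0 v → Cone B j0 v' →
        (∀ s ∈ 𝒮, (v, v') ∉ s) → IsCoprime (lh u v - rh u v) (lh w v' - rh w v')) ∧
      (∀ v v', (∀ i, 0 < v i) → (∀ i, 0 < v' i) → Cong M v → Cong M v' →
        ∀ s ∈ 𝒮, (v, v') ∉ s) := by
  classical
  obtain ⟨B, Q, hQ, hcore⟩ := core K u w i0 j0 hW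
  let P : Finset K[X] := insert X (UniqueFactorizationMonoid.normalizedFactors Q).toFinset
  have hP : ∀ π ∈ P, Irreducible π := by
    intro π hπ
    rcases Finset.mem_insert.1 hπ with rfl | h
    · exact irreducible_X
    · exact UniqueFactorizationMonoid.irreducible_of_normalized_factor _ (Multiset.mem_toFinset.1 h)
  let S : K[X] → AddSubmonoid ((α ⊕ β → ℕ) × (γ ⊕ δ → ℕ)) := fun π =>
    Lsub (fun i => AdjoinRoot.mk π (u i)) (fun i => AdjoinRoot.mk π (w i))
  have hS : ∀ π v v', (v, v') ∈ S π ↔ π ∣ lh u v - rh u v ∧ π ∣ lh w v' - rh w v' := by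
    intro π v v'
    rw [← AdjoinRoot.mk_eq_zero, ← AdjoinRoot.mk_eq_zero, map_sub, map_sub, sub_eq_zero, sub_eq_zero,
      lh_map, lh_map, rh_map, rh_map]
    rfl
  have hcop : ∀ (π a b : K[X]), Irreducible π → IsCoprime a b →
      ¬ (AdjoinRoot.mk π a = 0 ∧ AdjoinRoot.mk π b = 0) := by
    rintro π a b hπ hab ⟨ha, hb⟩
    rw [AdjoinRoot.mk_eq_zero] at ha hb
    exact hπ.not_isUnit (hab.isUnit_of_dvd' ha hb)
  have hM : ∀ π ∈ P, ∃ M : ℕ, 0 < M ∧ ∀ v v', (∀ i, 0 < v i) → (∀ i, 0 < v' i) →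
      Cong M v → Cong M v' → (v, v') ∉ S π := by
    intro π hπ
    have hirr := hP π hπ
    have := Fact.mk hirr
    let x : α ⊕ β → AdjoinRoot π := fun i => AdjoinRoot.mk π (u i)
    let y : γ ⊕ δ → AdjoinRoot π := fun i => AdjoinRoot.mk π (w i)
    have hc1 := hcop π _ _ hirr h1
    have hc2 := hcop π _ _ hirr h2
    have hc3 := hcop π _ _ hirr h3
    simp only [map_prod, map_sub, map_one, sub_eq_zero] at hc1 hc2 hc3
    by_cases hx : ∀ i, x i ≠ 0
    · by_cases hy : ∀ i, y i ≠ 0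
      · by_cases hx1 : ∏ i, x (Sum.inl i) = 1
        · have hy1 : ∏ i, y (Sum.inl i) ≠ 1 := fun h => hc3 ⟨hx1, h⟩
          obtain ⟨M, hM, h⟩ := M_field y hy hy1
          exact ⟨M, hM, fun v v' _ _ _ hv' hmem => h v' hv' hmem.2⟩
        · obtain ⟨M, hM, h⟩ := M_field x hx hx1
          exact ⟨M, hM, fun v v' _ _ hv _ hmem => h v hv hmem.1⟩
      · exact ⟨1, one_pos, fun v v' _ hv' _ _ hmem => hy (all_ne y v' hv' hmem.2 hc2)⟩
    · exact ⟨1, one_pos, fun v v' hv _ _ _ hmem => hx (all_ne x v hv hmem.1 hc1)⟩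
  choose! M hMpos hM using hM
  refine ⟨B, ∏ π ∈ P, M π, S '' P, Finset.prod_pos hMpos, P.finite_toSet.image _, ?_, ?_⟩
  · intro v v' hv hv' hc hc' hns
    have hns' : ∀ π ∈ P, ¬ (π ∣ lh u v - rh u v ∧ π ∣ lh w v' - rh w v') := by
      intro π hπ h
      exact hns _ ⟨π, hπ, rfl⟩ ((hS π v v').2 h)
    refine isCoprime_of_irreducible_dvd ?_ ?_
    · rintro ⟨e1, e2⟩
      exact hns' X (Finset.mem_insert_self _ _) (by simp [e1, e2])
    · intro π hirr hd1 hd2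
      have := Fact.mk hirr
      have hfin : Module.Finite K (AdjoinRoot π) := (AdjoinRoot.powerBasis hirr.ne_zero).finite
      have hnf : NumberField (AdjoinRoot π) := NumberField.of_module_finite K _
      have hmem := (hS π v v').2 ⟨hd1, hd2⟩
      have hc1 := hcop π _ _ hirr h1
      have hc2 := hcop π _ _ hirr h2
      simp only [map_prod] at hc1 hc2
      have hx := all_ne _ v hv hmem.1 hc1
      have hy := all_ne _ v' hv' hmem.2 hc2
      have key := hcore (AdjoinRoot π) (AdjoinRoot.root π) v v'
      simp only [AdjoinRoot.aeval_eq] at key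
      have hQ0 := key hx (hv i0) hc hmem.1 hy (hv' j0) hc' hmem.2
      rw [AdjoinRoot.mk_eq_zero] at hQ0
      obtain ⟨q, hq, hass⟩ := UniqueFactorizationMonoid.exists_mem_normalizedFactors_of_dvd hQ hirr hQ0
      refine hns' q (Finset.mem_insert_of_mem (Multiset.mem_toFinset.2 hq)) ⟨?_, ?_⟩
      · exact hass.symm.dvd.trans hd1
      · exact hass.symm.dvd.trans hd2
  · rintro v v' hv hv' hc hc' s ⟨π, hπ, rfl⟩
    exact hM π hπ v v' hv hv' (hc.of_dvd (Finset.dvd_prod_of_mem M hπ))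
      (hc'.of_dvd (Finset.dvd_prod_of_mem M hπ))

end Stmt2

open Polynomial

namespace Stmt2

lemma exists_ring (P : Finset ℂ[X]) : ∃ R : Subalgebra ℚ ℂ, Algebra.FiniteType ℚ R ∧
    ∀ p ∈ P, ∃ q : R[X], q.map (algebraMap R ℂ) = p ∧ ∀ n, q.coeff n ≠ 0 → IsUnit (q.coeff n) := by
  classical
  let T : Finset ℂ := P.biUnion fun p => p.coeffs ∪ p.coeffs.image Inv.inv
  refine ⟨Algebra.adjoin ℚ T, (Subalgebra.fg_iff_finiteType _).1 (Subalgebra.fg_adjoin_finset _), ?_⟩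
  intro p hp
  have hc : ∀ n, p.coeff n ≠ 0 → p.coeff n ∈ Algebra.adjoin ℚ (T : Set ℂ) ∧
      (p.coeff n)⁻¹ ∈ Algebra.adjoin ℚ (T : Set ℂ) := by
    intro n hn
    have h1 := coeff_mem_coeffs hn
    constructor
    · apply Algebra.subset_adjoin
      exact Finset.mem_biUnion.2 ⟨p, hp, Finset.mem_union_left _ h1⟩
    · apply Algebra.subset_adjoin
      exact Finset.mem_biUnion.2 ⟨p, hp, Finset.mem_union_right _ (Finset.mem_image_of_mem _ h1)⟩
  have hl : p ∈ lifts (algebraMap (Algebra.adjoin ℚ (T : Set ℂ)) ℂ) := by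
    rw [lifts_iff_coeff_lifts]
    intro n
    by_cases hn : p.coeff n = 0
    · exact ⟨0, by simp [hn]⟩
    · exact ⟨⟨_, (hc n hn).1⟩, rfl⟩
  obtain ⟨q, hq⟩ := (mem_lifts _).1 hl
  refine ⟨q, hq, fun n hn => ?_⟩
  have hcoe : ((q.coeff n : Algebra.adjoin ℚ (T : Set ℂ)) : ℂ) = p.coeff n := by
    rw [← hq, coeff_map]; rfl
  have hn' : p.coeff n ≠ 0 := by
    rw [← hcoe]
    intro h
    exact hn (Subtype.ext h)
  refine IsUnit.of_mul_eq_one ⟨_, (hc n hn').2⟩ (Subtype.ext ?_)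
  change ((q.coeff n : Algebra.adjoin ℚ (T : Set ℂ)) : ℂ) * (p.coeff n)⁻¹ = 1
  rw [hcoe, mul_inv_cancel₀ hn']

lemma descend {R : Type*} [CommRing R] [Algebra R ℂ] (hinj : Function.Injective (algebraMap R ℂ))
    {K : Type*} [Field K] (q : R →+* K) (hq : Function.Surjective q) (A B : R[X]) (hA : IsUnit A.leadingCoeff)
    (h : IsCoprime (A.map q) (B.map q)) :
    IsCoprime (A.map (algebraMap R ℂ)) (B.map (algebraMap R ℂ)) := by
  rw [isCoprime_iff_aeval_ne_zero_of_isAlgClosed ℂ ℂ]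
  intro t
  by_contra hcon
  push Not at hcon
  obtain ⟨hAt, hBt⟩ := hcon
  rw [aeval_map_algebraMap] at hAt hBt
  have hIntg : IsIntegral R t := by
    obtain ⟨a, ha⟩ := hA.exists_left_inv
    refine ⟨C a * A, monic_C_mul_of_mul_leadingCoeff_eq_one ha, ?_⟩
    rw [← aeval_def, map_mul, hAt, mul_zero]
  let S := Algebra.adjoin R {t}
  have hS : Algebra.IsIntegral R S := Algebra.IsIntegral.adjoin (by
    rintro x rfl; exact hIntg)
  have hinj' : Function.Injective (algebraMap R S) := by
    intro a b hab
    apply hinj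
    have := congrArg (algebraMap S ℂ) hab
    rwa [← IsScalarTower.algebraMap_apply, ← IsScalarTower.algebraMap_apply] at this
  have hkp : (RingHom.ker q).IsPrime := RingHom.ker_isPrime q
  obtain ⟨Q, -, hQ, hcomap⟩ := Ideal.exists_ideal_over_prime_of_isIntegral (S := S) (RingHom.ker q) ⊥ (by
    intro x hx
    have : algebraMap R S x = 0 := hx
    rw [(injective_iff_map_eq_zero _).1 hinj' x this]
    exact (RingHom.ker q).zero_mem)
  let t' : S := ⟨t, Algebra.subset_adjoin rfl⟩
  let ρ : R →+* S ⧸ Q := (Ideal.Quotient.mk Q).comp (algebraMap R S)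
  have hρ : RingHom.ker q ≤ RingHom.ker ρ := by
    intro a ha
    rw [← hcomap] at ha
    exact Ideal.Quotient.eq_zero_iff_mem.2 ha
  let σ : K →+* S ⧸ Q := q.liftOfRightInverse (Function.surjInv hq)
    (Function.rightInverse_surjInv hq) ⟨ρ, hρ⟩
  have hσ : σ.comp q = ρ := q.liftOfRightInverse_comp (Function.surjInv hq)
    (Function.rightInverse_surjInv hq) ⟨ρ, hρ⟩
  have hz : ∀ P : R[X], aeval t P = 0 →
      eval₂RingHom σ (Ideal.Quotient.mk Q t') (P.map q) = 0 := by
    intro P hP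
    rw [coe_eval₂RingHom, eval₂_map, hσ]
    have h1 : aeval t' P = 0 := by
      have hinjS : Function.Injective (algebraMap S ℂ) := Subtype.val_injective
      apply hinjS
      rw [← aeval_algebraMap_apply, map_zero]
      exact hP
    have h2 := congrArg (Ideal.Quotient.mk Q) h1
    rwa [map_zero, aeval_def, hom_eval₂] at h2
  have hfin := h.map (eval₂RingHom σ (Ideal.Quotient.mk Q t'))
  rw [hz A hAt, hz B hBt] at hfin
  exact not_isCoprime_zero_zero hfin

lemma numberField_of_ft (K : Type) [Field K] [inst : Algebra ℚ K] [Algebra.FiniteType ℚ K] :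
    NumberField K := by
  have hfin : Module.Finite ℚ K := finite_of_finite_type_of_isJacobsonRing ℚ K
  have hch : CharZero K := algebraRat.charZero K
  have : inst = DivisionRing.toRatAlgebra := Subsingleton.elim _ _
  subst this
  exact { to_charZero := hch, to_finiteDimensional := hfin }

lemma exists_residue (R : Type) [CommRing R] [Nontrivial R] [Algebra ℚ R] [Algebra.FiniteType ℚ R] :
    ∃ (K : Type) (_ : Field K) (_ : NumberField K) (q : R →+* K), Function.Surjective q := by
  obtain ⟨m, hm⟩ := Ideal.exists_maximal R
  let _ : Field (R ⧸ m) := Ideal.Quotient.field m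
  have hft : Algebra.FiniteType ℚ (R ⧸ m) :=
    Algebra.FiniteType.of_surjective (Ideal.Quotient.mkₐ ℚ m) (Ideal.Quotient.mkₐ_surjective ℚ m)
  exact ⟨R ⧸ m, inferInstance, numberField_of_ft _, Ideal.Quotient.mk m, Ideal.Quotient.mk_surjective⟩

lemma deg_ne {α β : Type*} [Fintype α] [Fintype β] (d v : α ⊕ β → ℕ) (i0 : α ⊕ β)
    (hd : 0 < d i0) (hv : 0 < v i0) (hc : Cone (∑ i, d i + 1) i0 v) :
    ∑ i, v (Sum.inl i) * d (Sum.inl i) ≠ ∑ i, v (Sum.inr i) * d (Sum.inr i) := by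
  classical
  set D := ∑ i, d i with hD
  have h1 : ∑ i ∈ Finset.univ.erase i0, v i * d i < v i0 := by
    have : (D + 1) * ∑ i ∈ Finset.univ.erase i0, v i * d i ≤ v i0 * D := by
      calc _ = ∑ i ∈ Finset.univ.erase i0, ((D+1) * v i) * d i := by
            rw [Finset.mul_sum]; exact Finset.sum_congr rfl fun i _ => by ring
        _ ≤ ∑ i ∈ Finset.univ.erase i0, v i0 * d i := Finset.sum_le_sum fun i hi =>
            Nat.mul_le_mul_right _ (hc i (Finset.ne_of_mem_erase hi)).le
        _ ≤ ∑ i, v i0 * d i := Finset.sum_le_sum_of_subset (Finset.erase_subset _ _)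
        _ = _ := by rw [Finset.mul_sum]
    by_contra hcon
    push Not at hcon
    nlinarith
  have h2 : ∑ i, v i * d i = ∑ i, v (Sum.inl i) * d (Sum.inl i) + ∑ i, v (Sum.inr i) * d (Sum.inr i) :=
    Fintype.sum_sum_type _
  have h3 := Finset.add_sum_erase Finset.univ (fun i => v i * d i) (Finset.mem_univ i0)
  have h4 : v i0 ≤ v i0 * d i0 := Nat.le_mul_of_pos_right _ hd
  rcases i0 with i | i
  · have := Finset.single_le_sum (f := fun i => v (Sum.inl i) * d (Sum.inl i)) (fun _ _ => Nat.zero_le _)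
      (Finset.mem_univ i)
    omega
  · have := Finset.single_le_sum (f := fun i => v (Sum.inr i) * d (Sum.inr i)) (fun _ _ => Nat.zero_le _)
      (Finset.mem_univ i)
    omega

lemma lead_unit {R : Type*} [CommRing R] [IsDomain R] {α β : Type*} [Fintype α] [Fintype β]
    (u : α ⊕ β → R[X]) (hu : ∀ i, IsUnit (u i).leadingCoeff) (i0 : α ⊕ β)
    (hd : 0 < (u i0).natDegree) (v : α ⊕ β → ℕ) (hv : 0 < v i0)
    (hc : Cone (∑ i, (u i).natDegree + 1) i0 v) : IsUnit (lh u v - rh u v).leadingCoeff := by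
  have hu0 : ∀ i, u i ≠ 0 := by
    intro i h
    have := hu i
    rw [h, leadingCoeff_zero] at this
    exact not_isUnit_zero this
  have hne := deg_ne (fun i => (u i).natDegree) v i0 hd hv hc
  have hl : IsUnit (lh u v).leadingCoeff := by
    simp only [lh, leadingCoeff_prod, leadingCoeff_pow]
    exact IsUnit.prod_univ_iff.2 fun i => (hu _).pow _
  have hr : IsUnit (rh u v).leadingCoeff := by
    simp only [rh, leadingCoeff_prod, leadingCoeff_pow]
    exact IsUnit.prod_univ_iff.2 fun i => (hu _).pow _
  have hdl : (lh u v).natDegree = ∑ i, v (Sum.inl i) * (u (Sum.inl i)).natDegree := by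
    simp only [lh]
    rw [natDegree_prod _ _ fun i _ => pow_ne_zero _ (hu0 _)]
    simp
  have hdr : (rh u v).natDegree = ∑ i, v (Sum.inr i) * (u (Sum.inr i)).natDegree := by
    simp only [rh]
    rw [natDegree_prod _ _ fun i _ => pow_ne_zero _ (hu0 _)]
    simp
  rw [← hdl, ← hdr] at hne
  rcases lt_or_gt_of_ne hne with h | h
  · rw [leadingCoeff_sub_of_degree_lt' (degree_lt_degree h)]
    exact hr.neg
  · rw [leadingCoeff_sub_of_degree_lt (degree_lt_degree h)]
    exact hl

lemma main_C {α β γ δ : Type} [Fintype α] [Fintype β]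
    [Fintype γ] [Fintype δ] (u : α ⊕ β → ℂ[X]) (w : γ ⊕ δ → ℂ[X]) (i0 : α ⊕ β) (j0 : γ ⊕ δ)
    (hu0 : ∀ i, u i ≠ 0) (hw0 : ∀ i, w i ≠ 0)
    (hW : W (u i0) (w j0) ≠ 0)
    (h1 : IsCoprime (∏ i, u (Sum.inl i)) (∏ i, u (Sum.inr i)))
    (h2 : IsCoprime (∏ i, w (Sum.inl i)) (∏ i, w (Sum.inr i)))
    (h3 : IsCoprime (∏ i, u (Sum.inl i) - 1) (∏ i, w (Sum.inl i) - 1)) :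
    ∃ (B M : ℕ) (𝒮 : Set (AddSubmonoid ((α ⊕ β → ℕ) × (γ ⊕ δ → ℕ)))), 0 < M ∧ 𝒮.Finite ∧
      (∀ v v', (∀ i, 0 < v i) → (∀ i, 0 < v' i) → Cone B i0 v → Cone B j0 v' →
        (∀ s ∈ 𝒮, (v, v') ∉ s) → IsCoprime (lh u v - rh u v) (lh w v' - rh w v')) ∧
      (∀ v v', (∀ i, 0 < v i) → (∀ i, 0 < v' i) → Cong M v → Cong M v' →
        ∀ s ∈ 𝒮, (v, v') ∉ s) := by
  classical
  obtain ⟨a1, b1, e1⟩ := id h1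
  obtain ⟨a2, b2, e2⟩ := id h2
  obtain ⟨a3, b3, e3⟩ := id h3
  obtain ⟨R, hR, hlift⟩ := exists_ring (Finset.univ.image u ∪ Finset.univ.image w ∪
    {W (u i0) (w j0), a1, b1, a2, b2, a3, b3})
  choose u' hu' hu'c using fun i => hlift (u i) (by simp)
  choose w' hw' hw'c using fun i => hlift (w i) (by simp)
  obtain ⟨W', hW', hW'c⟩ := hlift (W (u i0) (w j0)) (by simp)
  obtain ⟨a1', ha1, -⟩ := hlift a1 (by simp)
  obtain ⟨b1', hb1, -⟩ := hlift b1 (by simp)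
  obtain ⟨a2', ha2, -⟩ := hlift a2 (by simp)
  obtain ⟨b2', hb2, -⟩ := hlift b2 (by simp)
  obtain ⟨a3', ha3, -⟩ := hlift a3 (by simp)
  obtain ⟨b3', hb3, -⟩ := hlift b3 (by simp)
  have hinj : Function.Injective (algebraMap R ℂ) := Subtype.val_injective
  have hinjP : Function.Injective (Polynomial.map (algebraMap R ℂ)) := map_injective _ hinj
  have h1' : IsCoprime (∏ i, u' (Sum.inl i)) (∏ i, u' (Sum.inr i)) := by
    refine ⟨a1', b1', hinjP ?_⟩
    simp only [Polynomial.map_add, Polynomial.map_mul, Polynomial.map_prod, hu', ha1, hb1,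
      Polynomial.map_one]
    exact e1
  have h2' : IsCoprime (∏ i, w' (Sum.inl i)) (∏ i, w' (Sum.inr i)) := by
    refine ⟨a2', b2', hinjP ?_⟩
    simp only [Polynomial.map_add, Polynomial.map_mul, Polynomial.map_prod, hw', ha2, hb2,
      Polynomial.map_one]
    exact e2
  have h3' : IsCoprime (∏ i, u' (Sum.inl i) - 1) (∏ i, w' (Sum.inl i) - 1) := by
    refine ⟨a3', b3', hinjP ?_⟩
    simp only [Polynomial.map_add, Polynomial.map_sub, Polynomial.map_mul, Polynomial.map_prod,
      hu', hw', ha3, hb3, Polynomial.map_one]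
    exact e3
  have hu'l : ∀ i, IsUnit (u' i).leadingCoeff := fun i => hu'c i _ (by
    rw [coeff_natDegree, leadingCoeff_ne_zero]
    intro h; apply hu0 i; rw [← hu' i, h, Polynomial.map_zero])
  have hw'l : ∀ i, IsUnit (w' i).leadingCoeff := fun i => hw'c i _ (by
    rw [coeff_natDegree, leadingCoeff_ne_zero]
    intro h; apply hw0 i; rw [← hw' i, h, Polynomial.map_zero])
  have hWW : W' = W (u' i0) (w' j0) := by
    apply hinjP
    rw [hW', ← W_map _ _ _ (natDegree_map_eq_of_injective hinj _)
      (natDegree_map_eq_of_injective hinj _), hu', hw']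
  obtain ⟨K, _, _, q, hqs⟩ := exists_residue R
  have hq : ∀ a : R, IsUnit a → q a ≠ 0 := fun a ha => (ha.map q).ne_zero
  let U : α ⊕ β → K[X] := fun i => (u' i).map q
  let V : γ ⊕ δ → K[X] := fun i => (w' i).map q
  have hWK : W (U i0) (V j0) ≠ 0 := by
    have hnd : W' ≠ 0 := by
      intro h; apply hW; rw [← hW', h, Polynomial.map_zero]
    simp only [U, V]
    rw [W_map q _ _ (natDegree_map_of_leadingCoeff_ne_zero q (hq _ (hu'l _)))
      (natDegree_map_of_leadingCoeff_ne_zero q (hq _ (hw'l _))), ← hWW]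
    intro h0
    have := congrArg (fun p => coeff p W'.natDegree) h0
    simp only [coeff_map, coeff_zero] at this
    refine hq _ (hW'c _ ?_) this
    rwa [coeff_natDegree, leadingCoeff_ne_zero]
  obtain ⟨B, M, 𝒮, hM, hfinS, hA, hB⟩ := main_K K U V i0 j0 hWK
    (by have := h1'.map (mapRingHom q); simpa [map_prod, U] using this)
    (by have := h2'.map (mapRingHom q); simpa [map_prod, V] using this)
    (by have := h3'.map (mapRingHom q); simpa [Polynomial.map_prod, U, V] using this)
  refine ⟨max B (∑ i, (u' i).natDegree + 1), M, 𝒮, hM, hfinS, ?_, hB⟩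
  intro v v' hv hv' hc hc' hns
  have hK := hA v v' hv hv' (hc.mono (le_max_left _ _)) (hc'.mono (le_max_left _ _)) hns
  have hd : 0 < (u' i0).natDegree := by
    rw [← natDegree_map_eq_of_injective hinj, hu']
    exact (natDegree_pos_of_W hW).1
  have hlu := lead_unit u' hu'l i0 hd v (hv i0) (hc.mono (le_max_right _ _))
  have e' : ∀ x : R[X], x.map q = mapRingHom q x := fun _ => rfl
  have key := descend hinj q hqs (lh u' v - rh u' v) (lh w' v' - rh w' v') hlu (by
    rw [e', e', map_sub, map_sub, lh_map, lh_map, rh_map, rh_map]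
    exact hK)
  have e : ∀ x : R[X], x.map (algebraMap R ℂ) = mapRingHom (algebraMap R ℂ) x := fun _ => rfl
  rw [e, e, map_sub, map_sub, lh_map, lh_map, rh_map, rh_map] at key
  simpa only [coe_mapRingHom, hu', hw'] using key

end Stmt2

open Polynomial

namespace Stmt2

lemma natDegree_eq_of_wr {F : Type*} [Field F] [CharZero F] (D Q : F[X]) (hD : D ≠ 0) (hQ : Q ≠ 0)
    (h : derivative D * Q = D * derivative Q) : D.natDegree = Q.natDegree := by
  by_cases h1 : derivative D = 0
  · rw [h1, zero_mul] at h
    have h2 := (mul_eq_zero.1 h.symm).resolve_left hD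
    rw [derivative_eq_zero.1 h1, derivative_eq_zero.1 h2]
  · have h2 : derivative Q ≠ 0 := by
      intro h2
      rw [h2, mul_zero] at h
      exact (mul_ne_zero h1 hQ) h
    have h3 := congrArg leadingCoeff h
    rw [leadingCoeff_mul, leadingCoeff_mul, leadingCoeff_derivative, leadingCoeff_derivative] at h3
    have hl1 : D.leadingCoeff ≠ 0 := leadingCoeff_ne_zero.2 hD
    have hl2 : Q.leadingCoeff ≠ 0 := leadingCoeff_ne_zero.2 hQ
    have h4 : (D.leadingCoeff * Q.leadingCoeff) * ((D.natDegree : F) - Q.natDegree) = 0 := by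
      linear_combination h3
    have h5 := (mul_eq_zero.1 h4).resolve_left (mul_ne_zero hl1 hl2)
    exact_mod_cast sub_eq_zero.1 h5

lemma prop_of_W {F : Type*} [Field F] [CharZero F] (f g : F[X]) (hf : f ≠ 0) (hg : g ≠ 0)
    (h : W f g = 0) : ∃ c : F, c ≠ 0 ∧ f ^ g.natDegree = C c * g ^ f.natDegree := by
  set P := f ^ g.natDegree with hP
  set Q := g ^ f.natDegree with hQ
  have hP0 : P ≠ 0 := pow_ne_zero _ hf
  have hQ0 : Q ≠ 0 := pow_ne_zero _ hg
  have h1 := der_pow f g.natDegree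
  have h2 := der_pow g f.natDegree
  rw [← hP] at h1
  rw [← hQ] at h2
  have h3 : (derivative P * Q - P * derivative Q) * (f * g) = 0 := by
    unfold W at h
    linear_combination (Q * g) * h1 - (P * f) * h2 + P * Q * h
  have h4 : derivative P * Q = P * derivative Q :=
    sub_eq_zero.1 ((mul_eq_zero.1 h3).resolve_right (mul_ne_zero hf hg))
  have hlQ : Q.leadingCoeff ≠ 0 := leadingCoeff_ne_zero.2 hQ0
  have hlP : P.leadingCoeff ≠ 0 := leadingCoeff_ne_zero.2 hP0
  set c := P.leadingCoeff / Q.leadingCoeff with hc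
  have hc0 : c ≠ 0 := div_ne_zero hlP hlQ
  refine ⟨c, hc0, ?_⟩
  by_contra hne
  have hD : P - C c * Q ≠ 0 := sub_ne_zero.2 hne
  have h5 : derivative (P - C c * Q) * Q = (P - C c * Q) * derivative Q := by
    rw [derivative_sub, derivative_C_mul]
    linear_combination h4
  have h6 := natDegree_eq_of_wr _ _ hD hQ0 h5
  have hdeg : P.natDegree = Q.natDegree := natDegree_eq_of_wr _ _ hP0 hQ0 h4
  have hlt : (P - C c * Q).degree < P.degree := by
    apply degree_sub_lt_left _ hP0
    · rw [leadingCoeff_mul, leadingCoeff_C, div_mul_cancel₀ _ hlQ]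
    · rw [degree_C_mul hc0, degree_eq_natDegree hP0, degree_eq_natDegree hQ0, hdeg]
  have := natDegree_lt_natDegree hD hlt
  omega

lemma unit_of_zero {R : Type*} [CommRing R] {α β : Type*} [Fintype α] [Fintype β] (u : α ⊕ β → R)
    (h : IsCoprime (∏ i, u (Sum.inl i)) (∏ i, u (Sum.inr i))) (i : α ⊕ β) (hi : u i = 0)
    (v : α ⊕ β → ℕ) (hv : ∀ i, 0 < v i) : IsUnit (lh u v - rh u v) := by
  rcases i with i | i
  · have h0 : lh u v = 0 := Finset.prod_eq_zero (Finset.mem_univ i) (by rw [hi, zero_pow (hv _).ne'])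
    rw [Finset.prod_eq_zero (Finset.mem_univ i) hi, isCoprime_zero_left, IsUnit.prod_univ_iff] at h
    rw [h0, zero_sub, IsUnit.neg_iff]
    exact IsUnit.prod_univ_iff.2 fun i => (h i).pow _
  · have h0 : rh u v = 0 := Finset.prod_eq_zero (Finset.mem_univ i) (by rw [hi, zero_pow (hv _).ne'])
    rw [Finset.prod_eq_zero (Finset.mem_univ i) hi, isCoprime_zero_right, IsUnit.prod_univ_iff] at h
    rw [h0, sub_zero]
    exact IsUnit.prod_univ_iff.2 fun i => (h i).pow _

lemma unit_of_const {F : Type*} [Field F] {α β : Type*} [Fintype α] [Fintype β] (u : α ⊕ β → F[X])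
    (h : ∀ i, (u i).natDegree = 0) (v : α ⊕ β → ℕ) (hne : lh u v ≠ rh u v) :
    IsUnit (lh u v - rh u v) := by
  choose c hc using fun i => natDegree_eq_zero.1 (h i)
  have hu : u = fun i => C (c i) := funext fun i => (hc i).symm
  rw [hu, ← lh_map (C : F →+* F[X]), ← rh_map (C : F →+* F[X])] at hne ⊢
  rw [← C_sub, isUnit_C, isUnit_iff_ne_zero, sub_ne_zero]
  intro h
  exact hne (by rw [h])

lemma zpow_rel {F ι : Type*} [Field F] [Fintype ι] (z c : ι → F) (η : F) (hη : η ≠ 0) (N : ℕ)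
    (a : ι → ℕ) (h : ∀ m, z m ^ N = c m * η ^ a m) (e : ι → ℤ) (he : ∑ m, (a m : ℤ) * e m = 0) :
    (∏ m, z m ^ e m) ^ N = ∏ m, c m ^ e m := by
  have h1 : ∀ m, (z m ^ e m) ^ N = c m ^ e m * η ^ ((a m : ℤ) * e m) := by
    intro m
    rw [← zpow_natCast, ← zpow_mul, mul_comm, zpow_mul, zpow_natCast, h, mul_zpow, zpow_mul,
      zpow_natCast]
  rw [← Finset.prod_pow]
  simp only [h1, Finset.prod_mul_distrib]
  have : ∀ s : Finset ι, ∏ m ∈ s, η ^ ((a m : ℤ) * e m) = η ^ (∑ m ∈ s, (a m : ℤ) * e m) := by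
    intro s
    classical
    induction s using Finset.induction with
    | empty => simp
    | insert b s hb ih => rw [Finset.prod_insert hb, Finset.sum_insert hb, ih, zpow_add₀ hη]
  rw [this, he, zpow_zero, mul_one]

lemma unit_coprime_left {R : Type*} [CommRing R] {a b : R} (h : IsUnit a) : IsCoprime a b := by
  obtain ⟨c, hc⟩ := h.exists_left_inv
  exact ⟨c, 0, by rw [hc, zero_mul, add_zero]⟩

lemma sg_ne {α β : Type*} (i : α ⊕ β) : (sg i : ℤ) ≠ 0 := by
  rcases i with i | i <;> simp [sg]

/-- Multiplicative independence of the joint family. -/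
def MulInd {ι : Type*} [Fintype ι] (z : ι → ℂ[X]) : Prop :=
  ∀ e : ι → ℤ, ∏ m, algebraMap ℂ[X] (RatFunc ℂ) (z m) ^ e m = 1 → e = 0

lemma caseB {α β γ δ : Type} [Fintype α] [Fintype β]
    [Fintype γ] [Fintype δ] (u : α ⊕ β → ℂ[X]) (w : γ ⊕ δ → ℂ[X]) (i0 : α ⊕ β) (j0 : γ ⊕ δ)
    (hind : MulInd (Sum.elim u w))
    (hu0 : ∀ i, u i ≠ 0) (hw0 : ∀ i, w i ≠ 0)
    (hdu : 0 < (u i0).natDegree) (hdw : 0 < (w j0).natDegree)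
    (hW : ∀ i j, W (u i) (w j) = 0)
    (h1 : IsCoprime (∏ i, u (Sum.inl i)) (∏ i, u (Sum.inr i)))
    (h2 : IsCoprime (∏ i, w (Sum.inl i)) (∏ i, w (Sum.inr i)))
    (v : α ⊕ β → ℕ) (v' : γ ⊕ δ → ℕ) (hv : ∀ i, 0 < v i) (hv' : ∀ i, 0 < v' i)
    (hc : Cone (∑ i, (u i).natDegree + 1) i0 v) :
    IsCoprime (lh u v - rh u v) (lh w v' - rh w v') := by
  rw [isCoprime_iff_aeval_ne_zero_of_isAlgClosed ℂ ℂ]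
  intro t
  by_contra hcon
  push Not at hcon
  obtain ⟨hA, hB⟩ := hcon
  rw [map_sub, sub_eq_zero, lh_map, rh_map] at hA hB
  have hcop : ∀ a b : ℂ[X], IsCoprime a b → ¬ (aeval t a = 0 ∧ aeval t b = 0) := by
    rintro a b hab ⟨ha, hb⟩
    have := hab.map (aeval t : ℂ[X] →ₐ[ℂ] ℂ).toRingHom
    simp only [AlgHom.toRingHom_eq_coe, RingHom.coe_coe, ha, hb] at this
    exact not_isCoprime_zero_zero this
  have hc1 := hcop _ _ h1
  have hc2 := hcop _ _ h2
  simp only [map_prod] at hc1 hc2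
  have hx := all_ne _ v hv hA hc1
  have hy := all_ne _ v' hv' hB hc2
  set d : (α ⊕ β) ⊕ (γ ⊕ δ) → ℕ := fun m => ((Sum.elim u w) m).natDegree with hd
  set N := (u i0).natDegree * (w j0).natDegree with hN
  have hN0 : 0 < N := Nat.mul_pos hdu hdw
  set h := u i0 with hh
  -- relation for every member
  have hrel : ∀ m, ∃ c : ℂ, c ≠ 0 ∧
      (Sum.elim u w m) ^ N = C c * h ^ ((w j0).natDegree * d m) := by
    have hw : ∀ j, ∃ c : ℂ, c ≠ 0 ∧ (w j) ^ h.natDegree = C c * h ^ (w j).natDegree := by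
      intro j
      obtain ⟨c, hc, e⟩ := prop_of_W _ _ (hu0 i0) (hw0 j) (hW i0 j)
      refine ⟨c⁻¹, inv_ne_zero hc, ?_⟩
      rw [e, ← mul_assoc, ← C_mul, inv_mul_cancel₀ hc, C_1, one_mul]
    rintro (i | j)
    · obtain ⟨c, hc, e⟩ := prop_of_W _ _ (hu0 i) (hw0 j0) (hW i j0)
      obtain ⟨c', hc', e'⟩ := hw j0
      refine ⟨c ^ h.natDegree * c' ^ (u i).natDegree,
        mul_ne_zero (pow_ne_zero _ hc) (pow_ne_zero _ hc'), ?_⟩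
      simp only [Sum.elim_inl, hd]
      rw [hN, mul_comm, pow_mul, e, mul_pow, ← pow_mul, mul_comm (u i).natDegree, pow_mul, e', mul_pow,
        ← pow_mul]
      simp only [C_mul, C_pow]
      ring
    · obtain ⟨c, hc, e⟩ := hw j
      refine ⟨c ^ (w j0).natDegree, pow_ne_zero _ hc, ?_⟩
      simp only [Sum.elim_inr, hd]
      rw [hN, pow_mul, e, mul_pow, ← pow_mul, C_pow, mul_comm (w j).natDegree]
  choose c hc0 hrel using hrel
  set A1 : ℤ := ∑ i, (d (Sum.inl i) : ℤ) * (sg i * v i) with hA1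
  set A2 : ℤ := ∑ j, (d (Sum.inr j) : ℤ) * (sg j * v' j) with hA2
  have hA1ne : A1 ≠ 0 := by
    have := deg_ne (fun i => (u i).natDegree) v i0 hdu (hv i0) hc
    intro h0
    apply this
    rw [hA1, Fintype.sum_sum_type] at h0
    simp only [sg, hd, Sum.elim_inl, Sum.elim_inr] at h0
    zify
    have e1 : ∑ i, (v (Sum.inl i) : ℤ) * ((u (Sum.inl i)).natDegree : ℤ) =
      ∑ i, ((u (Sum.inl i)).natDegree : ℤ) * (1 * v (Sum.inl i)) :=
        Finset.sum_congr rfl fun i _ => by ring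
    have e2 : ∑ i, ((u (Sum.inr i)).natDegree : ℤ) * (-1 * v (Sum.inr i)) =
      - ∑ i, (v (Sum.inr i) : ℤ) * ((u (Sum.inr i)).natDegree : ℤ) := by
        rw [← Finset.sum_neg_distrib]
        exact Finset.sum_congr rfl fun i _ => by ring
    rw [e2] at h0
    linarith
  let e : (α ⊕ β) ⊕ (γ ⊕ δ) → ℤ :=
    Sum.elim (fun i => A2 * (sg i * v i)) (fun j => -A1 * (sg j * v' j))
  have he : ∑ m, (((w j0).natDegree * d m : ℕ) : ℤ) * e m = 0 := by
    rw [Fintype.sum_sum_type]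
    simp only [e, Sum.elim_inl, Sum.elim_inr]
    have e1 : ∑ i, (((w j0).natDegree * d (Sum.inl i) : ℕ) : ℤ) * (A2 * (sg i * v i)) =
        (w j0).natDegree * A2 * A1 := by
      rw [hA1, Finset.mul_sum]
      exact Finset.sum_congr rfl fun i _ => by push_cast; ring
    have e2 : ∑ j, (((w j0).natDegree * d (Sum.inr j) : ℕ) : ℤ) * (-A1 * (sg j * v' j)) =
        -((w j0).natDegree * A1 * A2) := by
      rw [neg_mul_eq_neg_mul, hA2, Finset.mul_sum]
      exact Finset.sum_congr rfl fun i _ => by push_cast; ring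
    rw [e1, e2]; ring
  -- evaluation at t
  have r1 := zpow_rel (fun m => aeval t (Sum.elim u w m)) c (aeval t h) (hx i0) N _ (by
    intro m
    rw [← map_pow, hrel m, map_mul, map_pow, aeval_C]; rfl) e he
  have hone : ∏ m, aeval t (Sum.elim u w m) ^ e m = 1 := by
    rw [Fintype.prod_sum_type]
    simp only [e, Sum.elim_inl, Sum.elim_inr]
    have e1 : ∏ i, aeval t (u i) ^ (A2 * (sg i * (v i : ℤ))) = 1 := by
      have := sg_prod (fun i => aeval t (u i)) v
      rw [hA, div_self (rh_ne _ hx v)] at this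
      simp only [mul_comm A2, zpow_mul _ _ A2]
      rw [Finset.prod_zpow, this, one_zpow]
    have e2 : ∏ j, aeval t (w j) ^ (-A1 * (sg j * (v' j : ℤ))) = 1 := by
      have := sg_prod (fun i => aeval t (w i)) v'
      rw [hB, div_self (rh_ne _ hy v')] at this
      simp only [mul_comm (-A1), zpow_mul _ _ (-A1)]
      rw [Finset.prod_zpow, this, one_zpow]
    rw [e1, e2, one_mul]
  rw [hone, one_pow] at r1
  have hinj : Function.Injective (algebraMap ℂ[X] (RatFunc ℂ)) := RatFunc.algebraMap_injective ℂ
  let κ : ℂ →+* RatFunc ℂ := (algebraMap ℂ[X] (RatFunc ℂ)).comp C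
  have r2 := zpow_rel (fun m => algebraMap ℂ[X] (RatFunc ℂ) (Sum.elim u w m)) (fun m => κ (c m))
    (algebraMap ℂ[X] (RatFunc ℂ) h) (by
      rw [Ne, map_eq_zero_iff _ hinj]; exact hu0 i0) N _ (by
    intro m
    rw [← map_pow, hrel m, map_mul, map_pow]; rfl) e he
  have hk : ∏ m, κ (c m) ^ e m = 1 := by
    have := congrArg κ r1
    rw [map_one, map_prod] at this
    simp only [map_zpow₀] at this
    exact this.symm
  rw [hk] at r2
  have hz := hind (fun m => e m * N) (by
    simp only [zpow_mul, zpow_natCast]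
    rw [Finset.prod_pow]
    exact r2)
  have := congrFun hz (Sum.inr j0)
  simp only [e, Sum.elim_inr, Pi.zero_apply, mul_eq_zero, neg_eq_zero, Nat.cast_eq_zero] at this
  rcases this with (h | h | h) | h
  · exact hA1ne h
  · exact sg_ne _ h
  · exact (hv' j0).ne' h
  · exact hN0.ne' h

lemma ne_of_ind {α β : Type} [Fintype α] [Fintype β] [Nonempty α] {ι : Type} [Fintype ι]
    (u : α ⊕ β → ℂ[X]) (hu0 : ∀ i, u i ≠ 0) (z : ι → ℂ[X])
    (hind : MulInd (Sum.elim u z)) (v : α ⊕ β → ℕ) (hv : ∀ i, 0 < v i) : lh u v ≠ rh u v := by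
  intro h
  have hinj : Function.Injective (algebraMap ℂ[X] (RatFunc ℂ)) := RatFunc.algebraMap_injective ℂ
  have hne : ∀ i, algebraMap ℂ[X] (RatFunc ℂ) (u i) ≠ 0 := fun i => by
    rw [Ne, map_eq_zero_iff _ hinj]; exact hu0 i
  have h1 := sg_prod (fun i => algebraMap ℂ[X] (RatFunc ℂ) (u i)) v
  rw [← lh_map, ← rh_map, h, div_self] at h1
  · have := hind (Sum.elim (fun i => sg i * (v i : ℤ)) 0) (by
      rw [Fintype.prod_sum_type]
      simp only [Sum.elim_inl, Sum.elim_inr, Pi.zero_apply, zpow_zero, Finset.prod_const_one, mul_one]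
      exact h1)
    obtain ⟨a⟩ := (inferInstance : Nonempty α)
    have := congrFun this (Sum.inl (Sum.inl a))
    simp only [Sum.elim_inl, Pi.zero_apply, mul_eq_zero, Nat.cast_eq_zero] at this
    rcases this with h | h
    · exact sg_ne _ h
    · exact (hv _).ne' h
  · rw [rh_map]
    exact rh_ne _ hne v

lemma MulInd.swap {ι ι' : Type} [Fintype ι] [Fintype ι'] (u : ι → ℂ[X]) (w : ι' → ℂ[X])
    (h : MulInd (Sum.elim u w)) : MulInd (Sum.elim w u) := by
  intro e he
  have := h (fun m => e m.swap) (by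
    rw [Fintype.prod_sum_type] at he ⊢
    rw [mul_comm]
    exact he)
  funext m
  have := congrFun this m.swap
  simpa using this

lemma main_all {α β γ δ : Type} [Fintype α] [Fintype β]
    [Fintype γ] [Fintype δ] [Nonempty α] [Nonempty γ] (u : α ⊕ β → ℂ[X]) (w : γ ⊕ δ → ℂ[X])
    (hind : MulInd (Sum.elim u w))
    (h1 : IsCoprime (∏ i, u (Sum.inl i)) (∏ i, u (Sum.inr i)))
    (h2 : IsCoprime (∏ i, w (Sum.inl i)) (∏ i, w (Sum.inr i)))
    (h3 : IsCoprime (∏ i, u (Sum.inl i) - 1) (∏ i, w (Sum.inl i) - 1)) :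
    ∃ (i0 : α ⊕ β) (j0 : γ ⊕ δ) (B M : ℕ) (𝒮 : Set (AddSubmonoid ((α ⊕ β → ℕ) × (γ ⊕ δ → ℕ)))),
      0 < M ∧ 𝒮.Finite ∧
      (∀ v v', (∀ i, 0 < v i) → (∀ i, 0 < v' i) → Cone B i0 v → Cone B j0 v' →
        (∀ s ∈ 𝒮, (v, v') ∉ s) → IsCoprime (lh u v - rh u v) (lh w v' - rh w v')) ∧
      (∀ v v', (∀ i, 0 < v i) → (∀ i, 0 < v' i) → Cong M v → Cong M v' →
        ∀ s ∈ 𝒮, (v, v') ∉ s) := by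
  obtain ⟨a⟩ := (inferInstance : Nonempty α)
  obtain ⟨b⟩ := (inferInstance : Nonempty γ)
  have unitU : (∀ v, (∀ i, 0 < v i) → IsUnit (lh u v - rh u v)) ∨
      ((∀ i, u i ≠ 0) ∧ ∃ i, 0 < (u i).natDegree) := by
    by_cases h0 : ∀ i, u i ≠ 0
    · by_cases hd : ∃ i, 0 < (u i).natDegree
      · exact Or.inr ⟨h0, hd⟩
      · push Not at hd
        exact Or.inl fun v hv => unit_of_const u (fun i => Nat.le_zero.1 (hd i)) v
          (ne_of_ind u h0 w hind v hv)
    · push Not at h0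
      obtain ⟨i, hi⟩ := h0
      exact Or.inl fun v hv => unit_of_zero u h1 i hi v hv
  have unitW : (∀ v, (∀ i, 0 < v i) → IsUnit (lh w v - rh w v)) ∨
      ((∀ i, w i ≠ 0) ∧ ∃ i, 0 < (w i).natDegree) := by
    by_cases h0 : ∀ i, w i ≠ 0
    · by_cases hd : ∃ i, 0 < (w i).natDegree
      · exact Or.inr ⟨h0, hd⟩
      · push Not at hd
        exact Or.inl fun v hv => unit_of_const w (fun i => Nat.le_zero.1 (hd i)) v
          (ne_of_ind w h0 u (hind.swap u w) v hv)
    · push Not at h0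
      obtain ⟨i, hi⟩ := h0
      exact Or.inl fun v hv => unit_of_zero w h2 i hi v hv
  rcases unitU with hU | ⟨hu0, i0, hi0⟩
  · exact ⟨Sum.inl a, Sum.inl b, 0, 1, ∅, one_pos, Set.finite_empty, fun v v' hv _ _ _ _ =>
      unit_coprime_left (hU v hv), by simp⟩
  rcases unitW with hU | ⟨hw0, j0, hj0⟩
  · exact ⟨Sum.inl a, Sum.inl b, 0, 1, ∅, one_pos, Set.finite_empty, fun v v' _ hv' _ _ _ =>
      (unit_coprime_left (hU v' hv')).symm, by simp⟩
  by_cases hW : ∀ i j, W (u i) (w j) = 0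
  · exact ⟨i0, j0, _, 1, ∅, one_pos, Set.finite_empty, fun v v' hv hv' hc _ _ =>
      caseB u w i0 j0 hind hu0 hw0 hi0 hj0 hW h1 h2 v v' hv hv' hc, by simp⟩
  · push Not at hW
    obtain ⟨i, j, hij⟩ := hW
    exact ⟨i, j, main_C u w i j hu0 hw0 hij h1 h2 h3⟩

end Stmt2

open Polynomial

namespace Stmt2

lemma density_pos {I : Type} [Fintype I] [DecidableEq I] (A : Set (I → ℕ)) (c C : I → ℕ) (M σ : ℕ)
    (hM : 0 < M) (hc : ∀ i, c i ≤ 1) (hC : ∀ i, C i ≤ σ)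
    (hA : ∀ N', 0 < N' → ∀ w : I → ℕ, (∀ i, 0 < w i ∧ w i ≤ N') →
      (fun i => c i + M * (w i + C i * N')) ∈ A) :
    0 < Filter.atTop.liminf (fun N : ℕ =>
      ({v : I → ℕ | v ∈ A ∧ ∀ i, v i ≤ N}.ncard : ℝ) / ((N : ℝ) + 1) ^ Fintype.card I) := by
  set K := 1 + M * (1 + σ) with hK
  have hKpos : 0 < K := by omega
  have hfinsub : ∀ N : ℕ, {v : I → ℕ | v ∈ A ∧ ∀ i, v i ≤ N} ⊆
      (Fintype.piFinset (fun _ : I => Finset.range (N + 1)) : Set (I → ℕ)) := by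
    intro N v hv
    simp only [Finset.mem_coe, Fintype.mem_piFinset, Finset.mem_range]
    intro i
    exact Nat.lt_succ_of_le (hv.2 i)
  have hfin : ∀ N : ℕ, {v : I → ℕ | v ∈ A ∧ ∀ i, v i ≤ N}.Finite := fun N =>
    (Finset.finite_toSet _).subset (hfinsub N)
  have hpos : (0 : ℝ) < (1 / (2 * K : ℝ)) ^ Fintype.card I := by
    have : (0 : ℝ) < K := by exact_mod_cast hKpos
    positivity
  refine lt_of_lt_of_le hpos ?_
  refine Filter.le_liminf_of_le ?_ ?_
  · refine Filter.isCoboundedUnder_ge_of_le (x := 1) _ (fun N => ?_)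
    rw [div_le_one (by positivity)]
    have h := Set.ncard_le_ncard (hfinsub N) (Finset.finite_toSet _)
    rw [Set.ncard_coe_finset, Fintype.card_piFinset] at h
    simp only [Finset.card_range, Finset.prod_const, Finset.card_univ] at h
    exact_mod_cast h
  · filter_upwards [Filter.eventually_ge_atTop K] with N hN
    set N' := N / K with hN'
    have hN'pos : 0 < N' := Nat.div_pos hN hKpos
    have h1 : K * N' ≤ N := Nat.mul_div_le N K
    have h2 : N + 1 ≤ K * (N' + 1) := Nat.lt_mul_div_succ N hKpos
    have h3 : N + 1 ≤ 2 * K * N' := by nlinarith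
    have hcard : N' ^ Fintype.card I ≤ {v : I → ℕ | v ∈ A ∧ ∀ i, v i ≤ N}.ncard := by
      let T : Finset (I → ℕ) := Fintype.piFinset (fun _ : I => Finset.Icc 1 N')
      have hT : T.card = N' ^ Fintype.card I := by
        simp [T, Fintype.card_piFinset]
      rw [← hT, ← Set.ncard_coe_finset]
      refine Set.ncard_le_ncard_of_injOn (fun w i => c i + M * (w i + C i * N')) ?_ ?_ (hfin N)
      · intro w hw
        have hw' : ∀ i, 0 < w i ∧ w i ≤ N' := by
          intro i
          have := Fintype.mem_piFinset.1 (Finset.mem_coe.1 hw) i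
          rw [Finset.mem_Icc] at this
          omega
        refine ⟨hA N' hN'pos w hw', fun i => ?_⟩
        have h4 := (hw' i).2
        have h5 : C i * N' ≤ σ * N' := Nat.mul_le_mul_right _ (hC i)
        have h6 : M * (w i + C i * N') ≤ M * (N' + σ * N') := Nat.mul_le_mul_left _ (by omega)
        have h7 := hc i
        have h8 : K * N' = N' + M * (N' + σ * N') := by rw [hK]; ring
        show c i + M * (w i + C i * N') ≤ N
        omega
      · intro w _ w2 _ h
        funext i
        have h4 := congrFun h i
        simp only at h4
        have h5 : M * (w i + C i * N') = M * (w2 i + C i * N') := by omega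
        have h6 := Nat.eq_of_mul_eq_mul_left hM h5
        omega
    have hcardR : ((N' : ℝ)) ^ Fintype.card I ≤
        ({v : I → ℕ | v ∈ A ∧ ∀ i, v i ≤ N}.ncard : ℝ) := by exact_mod_cast hcard
    rw [le_div_iff₀ (by positivity), ← mul_pow]
    refine le_trans ?_ hcardR
    have hKR : (0 : ℝ) < K := by exact_mod_cast hKpos
    have h3R : (N : ℝ) + 1 ≤ 2 * K * N' := by exact_mod_cast h3
    refine pow_le_pow_left₀ (by positivity) ?_ _
    rw [div_mul_eq_mul_div, one_mul, div_le_iff₀ (by positivity)]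
    linarith

/-- coordinate vanishing -/
def zeroMon {I : Type} (i : I) : AddSubmonoid (I → ℕ) where
  carrier := {v | v i = 0}
  zero_mem' := rfl
  add_mem' := by
    intro a b ha hb
    simp only [Set.mem_setOf_eq, Pi.add_apply] at *
    omega

/-- one coordinate dominated by another -/
def leMon {I : Type} (B : ℕ) (i i0 : I) : AddSubmonoid (I → ℕ) where
  carrier := {v | v i0 ≤ B * v i}
  zero_mem' := by simp
  add_mem' := by
    intro a b ha hb
    simp only [Set.mem_setOf_eq, Pi.add_apply, mul_add] at *
    omega

lemma coprime_of_zeros (p q : ℂ[X]) (h : ∀ t : ℂ, ¬ (p.eval t = 0 ∧ q.eval t = 0)) :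
    IsCoprime p q := by
  rw [Polynomial.isCoprime_iff_aeval_ne_zero_of_isAlgClosed ℂ ℂ]
  intro t
  have := h t
  simp only [Polynomial.coe_aeval_eq_eval]
  tauto

/-- the abstract combinatorial and arithmetic conclusion on coordinate pairs -/
lemma main_fin {α β γ δ : Type} [Fintype α] [Fintype β] [Fintype γ] [Fintype δ]
    [Nonempty α] [Nonempty γ] (u : α ⊕ β → ℂ[X]) (w : γ ⊕ δ → ℂ[X])
    (hind : MulInd (Sum.elim u w))
    (h1 : IsCoprime (∏ i, u (Sum.inl i)) (∏ i, u (Sum.inr i)))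
    (h2 : IsCoprime (∏ i, w (Sum.inl i)) (∏ i, w (Sum.inr i)))
    (h3 : IsCoprime (∏ i, u (Sum.inl i) - 1) (∏ i, w (Sum.inl i) - 1)) :
    ∃ 𝒯 : Set (AddSubmonoid ((α ⊕ β → ℕ) × (γ ⊕ δ → ℕ))), 𝒯.Finite ∧
      (∀ v v', (∀ s ∈ 𝒯, (v, v') ∉ s) → IsCoprime (lh u v - rh u v) (lh w v' - rh w v')) ∧
      0 < Filter.atTop.liminf (fun N : ℕ =>
        ({v : (α ⊕ β) ⊕ (γ ⊕ δ) → ℕ |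
          (∀ s ∈ 𝒯, ((fun i => v (Sum.inl i), fun i => v (Sum.inr i)) :
            (α ⊕ β → ℕ) × (γ ⊕ δ → ℕ)) ∉ s) ∧ ∀ i, v i ≤ N}.ncard : ℝ) /
          ((N : ℝ) + 1) ^ Fintype.card ((α ⊕ β) ⊕ (γ ⊕ δ))) := by
  classical
  obtain ⟨i0, j0, B, M, 𝒮, hM, hfin, hA, hB⟩ := main_all u w hind h1 h2 h3
  let p1 : ((α ⊕ β → ℕ) × (γ ⊕ δ → ℕ)) →+ (α ⊕ β → ℕ) := AddMonoidHom.fst _ _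
  let p2 : ((α ⊕ β → ℕ) × (γ ⊕ δ → ℕ)) →+ (γ ⊕ δ → ℕ) := AddMonoidHom.snd _ _
  let Z1 : Set (AddSubmonoid ((α ⊕ β → ℕ) × (γ ⊕ δ → ℕ))) :=
    Set.range (fun i : α ⊕ β => (zeroMon i).comap p1)
  let Z2 : Set (AddSubmonoid ((α ⊕ β → ℕ) × (γ ⊕ δ → ℕ))) :=
    Set.range (fun i : γ ⊕ δ => (zeroMon i).comap p2)
  let Y1 : Set (AddSubmonoid ((α ⊕ β → ℕ) × (γ ⊕ δ → ℕ))) :=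
    (fun i : α ⊕ β => (leMon B i i0).comap p1) '' {i | i ≠ i0}
  let Y2 : Set (AddSubmonoid ((α ⊕ β → ℕ) × (γ ⊕ δ → ℕ))) :=
    (fun i : γ ⊕ δ => (leMon B i j0).comap p2) '' {i | i ≠ j0}
  have key : ∀ v v', (∀ s ∈ 𝒮 ∪ Z1 ∪ Z2 ∪ Y1 ∪ Y2, (v, v') ∉ s) ↔
      ((∀ s ∈ 𝒮, (v, v') ∉ s) ∧ (∀ i, 0 < v i) ∧ (∀ i, 0 < v' i) ∧
        Cone B i0 v ∧ Cone B j0 v') := by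
    intro v v'
    have e1 : (∀ s ∈ Z1, (v, v') ∉ s) ↔ ∀ i, 0 < v i := by
      rw [Set.forall_mem_range]
      exact forall_congr' fun i => (Nat.pos_iff_ne_zero (n := v i)).symm
    have e2 : (∀ s ∈ Z2, (v, v') ∉ s) ↔ ∀ i, 0 < v' i := by
      rw [Set.forall_mem_range]
      exact forall_congr' fun i => (Nat.pos_iff_ne_zero (n := v' i)).symm
    have e3 : (∀ s ∈ Y1, (v, v') ∉ s) ↔ Cone B i0 v := by
      rw [Set.forall_mem_image]
      exact forall_congr' fun i => imp_congr Iff.rfl (not_le (a := v i0) (b := B * v i))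
    have e4 : (∀ s ∈ Y2, (v, v') ∉ s) ↔ Cone B j0 v' := by
      rw [Set.forall_mem_image]
      exact forall_congr' fun i => imp_congr Iff.rfl (not_le (a := v' j0) (b := B * v' i))
    rw [← e1, ← e2, ← e3, ← e4]
    simp only [Set.mem_union]
    constructor
    · intro h
      exact ⟨fun s hs => h s (by tauto), fun s hs => h s (by tauto), fun s hs => h s (by tauto),
        fun s hs => h s (by tauto), fun s hs => h s (by tauto)⟩
    · rintro ⟨a, b, c, d, e⟩ s hs
      rcases hs with (((hs | hs) | hs) | hs) | hs
      exacts [a s hs, b s hs, c s hs, d s hs, e s hs]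
  refine ⟨𝒮 ∪ Z1 ∪ Z2 ∪ Y1 ∪ Y2, ?_, ?_, ?_⟩
  · exact (((hfin.union (Set.finite_range _)).union (Set.finite_range _)).union
      ((Set.toFinite _).image _)).union ((Set.toFinite _).image _)
  · intro v v' h
    obtain ⟨a, b, c, d, e⟩ := (key v v').1 h
    exact hA v v' b c d e a
  · let c : (α ⊕ β) ⊕ (γ ⊕ δ) → ℕ := Sum.elim (Sum.elim (fun _ => 1) (fun _ => 0))
      (Sum.elim (fun _ => 1) (fun _ => 0))
    let C : (α ⊕ β) ⊕ (γ ⊕ δ) → ℕ := Sum.elim (fun i => if i = i0 then 2 * B + 1 else 0)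
      (fun i => if i = j0 then 2 * B + 1 else 0)
    have hc : ∀ i, c i ≤ 1 := by
      rintro ((i | i) | (i | i)) <;> simp [c]
    have hC : ∀ i, C i ≤ 2 * B + 1 := by
      rintro (i | i) <;> simp only [C, Sum.elim_inl, Sum.elim_inr] <;> split_ifs <;> omega
    have hcone : ∀ N' a b x y : ℕ, 0 < N' → a ≤ 1 → x ≤ N' → 0 < y →
        B * (a + M * (x + 0 * N')) < b + M * (y + (2 * B + 1) * N') := by
      intro N' a b x y h0 ha hx hy
      have s1 : a + M * x ≤ 2 * (M * N') := by
        have : M * x ≤ M * N' := Nat.mul_le_mul_left _ hx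
        have : 1 ≤ M * N' := Nat.mul_pos hM h0
        omega
      have s2 : B * (a + M * x) ≤ B * (2 * (M * N')) := Nat.mul_le_mul_left _ s1
      have s3 : 0 < M * y := Nat.mul_pos hM hy
      have s4 : M * (y + (2 * B + 1) * N') = M * y + B * (2 * (M * N')) + M * N' := by ring
      rw [zero_mul, add_zero, s4]
      omega
    refine density_pos {v | ∀ s ∈ 𝒮 ∪ Z1 ∪ Z2 ∪ Y1 ∪ Y2,
      ((fun i => v (Sum.inl i), fun i => v (Sum.inr i)) :
            (α ⊕ β → ℕ) × (γ ⊕ δ → ℕ)) ∉ s} c C M (2 * B + 1) hM hc hC ?_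
    intro N' hN' x hx
    rw [Set.mem_setOf_eq, key]
    have hp : ∀ i, 0 < c i + M * (x i + C i * N') := by
      intro i
      have : 0 < M * (x i + C i * N') := Nat.mul_pos hM (by have := (hx i).1; omega)
      omega
    refine ⟨hB _ _ (fun i => hp _) (fun i => hp _) ⟨fun i => ⟨_, rfl⟩, fun i => ⟨_, zero_add _⟩⟩
      ⟨fun i => ⟨_, rfl⟩, fun i => ⟨_, zero_add _⟩⟩, fun i => hp _, fun i => hp _, ?_, ?_⟩
    · intro i hi
      have e1 : C (Sum.inl i) = 0 := by simp [C, hi]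
      have e2 : C (Sum.inl i0) = 2 * B + 1 := by simp [C]
      simp only [e1, e2]
      exact hcone _ _ _ _ _ hN' (hc _) (hx _).2 (hx _).1
    · intro i hi
      have e1 : C (Sum.inr i) = 0 := by simp [C, hi]
      have e2 : C (Sum.inr j0) = 2 * B + 1 := by simp [C]
      simp only [e1, e2]
      exact hcone _ _ _ _ _ hN' (hc _) (hx _).2 (hx _).1

end Stmt2


open Polynomial

/-- Theorem 1.2 part ii: under the hypotheses of part i, together with
`gcd(f₁⋯f_ℓ − 1, g₁⋯g_r − 1) = 1`, there are finitely many submonoids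
`𝓛_t ⊆ ℕ^{ℓ+k+r+s}` whose complement `𝓝` has positive lower asymptotic density
and such that the gcd equals `1` for every exponent vector in `𝓝`. -/
theorem stmt_2 (ℓ k r s : ℕ) (hℓ : 1 ≤ ℓ) (hk : 1 ≤ k) (hr : 1 ≤ r) (hs : 1 ≤ s)
    (f : Fin ℓ → Polynomial ℂ) (φ : Fin k → Polynomial ℂ)
    (g : Fin r → Polynomial ℂ) (ψ : Fin s → Polynomial ℂ)
    (hind : ¬ ∃ (a : Fin ℓ → ℤ) (b : Fin k → ℤ) (c : Fin r → ℤ) (d : Fin s → ℤ),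
      (a ≠ 0 ∨ b ≠ 0 ∨ c ≠ 0 ∨ d ≠ 0) ∧
      (∏ i, (algebraMap (Polynomial ℂ) (RatFunc ℂ) (f i)) ^ a i) *
        (∏ i, (algebraMap (Polynomial ℂ) (RatFunc ℂ) (φ i)) ^ b i) *
        (∏ i, (algebraMap (Polynomial ℂ) (RatFunc ℂ) (g i)) ^ c i) *
        (∏ i, (algebraMap (Polynomial ℂ) (RatFunc ℂ) (ψ i)) ^ d i) = 1)
    (hZ₁ : ∀ t : ℂ, ¬ ((∏ i, f i).eval t = 0 ∧ (∏ i, φ i).eval t = 0))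
    (hZ₂ : ∀ t : ℂ, ¬ ((∏ i, g i).eval t = 0 ∧ (∏ i, ψ i).eval t = 0))
    (hcop : IsCoprime (∏ i, f i - 1) (∏ i, g i - 1)) :
    ∃ (n₀ : ℕ)
      (𝓛 : Fin n₀ → AddSubmonoid ((Fin ℓ → ℕ) × (Fin k → ℕ) × (Fin r → ℕ) × (Fin s → ℕ))),
      0 < Filter.atTop.liminf (fun N : ℕ =>
        ({v : (Fin ℓ → ℕ) × (Fin k → ℕ) × (Fin r → ℕ) × (Fin s → ℕ) |
            (∀ t, v ∉ 𝓛 t) ∧ (∀ i, v.1 i ≤ N) ∧ (∀ i, v.2.1 i ≤ N) ∧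
              (∀ i, v.2.2.1 i ≤ N) ∧ (∀ i, v.2.2.2 i ≤ N)}.ncard : ℝ) /
          ((N : ℝ) + 1) ^ (ℓ + k + r + s)) ∧
      ∀ v : (Fin ℓ → ℕ) × (Fin k → ℕ) × (Fin r → ℕ) × (Fin s → ℕ),
        (∀ t, v ∉ 𝓛 t) →
        IsCoprime (∏ i, f i ^ v.1 i - ∏ i, φ i ^ v.2.1 i)
          (∏ i, g i ^ v.2.2.1 i - ∏ i, ψ i ^ v.2.2.2 i) := by
  classical
  haveI : Nonempty (Fin ℓ) := ⟨⟨0, hℓ⟩⟩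
  haveI : Nonempty (Fin r) := ⟨⟨0, hr⟩⟩
  have hI : Stmt2.MulInd (Sum.elim (Sum.elim f φ) (Sum.elim g ψ)) := by
    intro e he
    by_contra hne
    apply hind
    refine ⟨fun i => e (Sum.inl (Sum.inl i)), fun i => e (Sum.inl (Sum.inr i)),
      fun i => e (Sum.inr (Sum.inl i)), fun i => e (Sum.inr (Sum.inr i)), ?_, ?_⟩
    · by_contra hcon
      push Not at hcon
      obtain ⟨a, b, c, d⟩ := hcon
      apply hne
      funext x
      rcases x with (i | i) | (i | i)
      exacts [congrFun a i, congrFun b i, congrFun c i, congrFun d i]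
    · rw [Fintype.prod_sum_type, Fintype.prod_sum_type, Fintype.prod_sum_type] at he
      simp only [Sum.elim_inl, Sum.elim_inr] at he
      rw [← he]
      ring
  obtain ⟨𝒯, hfin, hco, hden⟩ := Stmt2.main_fin (Sum.elim f φ) (Sum.elim g ψ) hI
    (Stmt2.coprime_of_zeros _ _ hZ₁) (Stmt2.coprime_of_zeros _ _ hZ₂) hcop
  let T : ((Fin ℓ → ℕ) × (Fin k → ℕ) × (Fin r → ℕ) × (Fin s → ℕ)) →+
      ((Fin ℓ ⊕ Fin k → ℕ) × (Fin r ⊕ Fin s → ℕ)) :=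
    { toFun := fun v => (Sum.elim v.1 v.2.1, Sum.elim v.2.2.1 v.2.2.2)
      map_zero' := by
        ext x
        · rcases x with i | i <;> rfl
        · rcases x with i | i <;> rfl
      map_add' := by
        intro v v'
        ext x
        · rcases x with i | i <;> rfl
        · rcases x with i | i <;> rfl }
  let E := hfin.toFinset.equivFin
  have hmem : ∀ v, (∀ t, v ∉ (E.symm t).1.comap T) ↔ ∀ s ∈ 𝒯, T v ∉ s := by
    intro v
    constructor
    · intro h s hs
      have := h (E ⟨s, hfin.mem_toFinset.2 hs⟩)
      rw [Equiv.symm_apply_apply] at this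
      exact this
    · intro h t
      exact h _ (hfin.mem_toFinset.1 (E.symm t).2)
  refine ⟨hfin.toFinset.card, fun t => (E.symm t).1.comap T, ?_, ?_⟩
  · convert hden using 2
    funext N
    congr 1
    · congr 1
      let P : ((Fin ℓ → ℕ) × (Fin k → ℕ) × (Fin r → ℕ) × (Fin s → ℕ)) →
        ((Fin ℓ ⊕ Fin k) ⊕ (Fin r ⊕ Fin s) → ℕ) := fun v => Sum.elim (T v).1 (T v).2
      have hP : Function.Injective P := by
        intro v v' h
        refine Prod.ext ?_ (Prod.ext ?_ (Prod.ext ?_ ?_))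
        · funext i; exact congrFun h (Sum.inl (Sum.inl i))
        · funext i; exact congrFun h (Sum.inl (Sum.inr i))
        · funext i; exact congrFun h (Sum.inr (Sum.inl i))
        · funext i; exact congrFun h (Sum.inr (Sum.inr i))
      rw [← Set.ncard_image_of_injective _ hP]
      congr 1
      ext x
      constructor
      · rintro ⟨v, ⟨h1, h2, h3, h4, h5⟩, rfl⟩
        refine ⟨(hmem v).1 h1, ?_⟩
        rintro ((i | i) | (i | i))
        exacts [h2 i, h3 i, h4 i, h5 i]
      · rintro ⟨h1, h2⟩
        have hx : T (fun i => x (Sum.inl (Sum.inl i)), fun i => x (Sum.inl (Sum.inr i)),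
          fun i => x (Sum.inr (Sum.inl i)), fun i => x (Sum.inr (Sum.inr i))) =
          (fun i => x (Sum.inl i), fun i => x (Sum.inr i)) := by
          ext y
          · rcases y with i | i <;> rfl
          · rcases y with i | i <;> rfl
        refine ⟨(fun i => x (Sum.inl (Sum.inl i)), fun i => x (Sum.inl (Sum.inr i)),
          fun i => x (Sum.inr (Sum.inl i)), fun i => x (Sum.inr (Sum.inr i))),
          ⟨(hmem _).2 ?_, fun i => h2 _, fun i => h2 _, fun i => h2 _, fun i => h2 _⟩, ?_⟩
        · rw [hx]; exact h1
        · funext y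
          rcases y with (i | i) | (i | i) <;> rfl
    · congr 1
      simp [add_assoc]
  · intro v hv
    have h := hco _ _ ((hmem v).1 hv)
    exact h
end

section
/- Let H ∈ ℂ[X,Y] be a nonzero polynomial in two variables. Then either H has a factor of the form X^i − ρY^j or of the form X^i Y^j − ρ, for some nonnegative integers i, j not both zero and some root of unity ρ ∈ ℂ, or the set of points (x, y) ∈ ℂ² with x and y both roots of unity and H(x,y) = 0 has cardinality at most 11·(deg H)², where deg H is the total degree of H. -/
open MvPolynomial

section auto
open Cardinal
theorem exists_equiv_compat {R : Type} {K L : Type} [Field R] [Field K] [Field L] [Algebra R K] [Algebra R L]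
    [IsAlgClosed K] [IsAlgClosed L] (hR : #R ≤ ℵ₀) (hK : ℵ₀ < #K) (hKL : #K = #L) :
    ∃ e : K ≃+* L, ∀ r : R, e (algebraMap R K r) = algebraMap R L r := by
  obtain ⟨s, hs⟩ := exists_isTranscendenceBasis R K
  obtain ⟨t, ht⟩ := exists_isTranscendenceBasis R L
  have hst : #s = #t := by
    rw [← IsAlgClosed.cardinal_eq_cardinal_transcendence_basis_of_aleph0_lt' _ hs hR hK,
      ← IsAlgClosed.cardinal_eq_cardinal_transcendence_basis_of_aleph0_lt' _ ht hR (hKL ▸ hK), hKL]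
  obtain ⟨e⟩ := Cardinal.eq.1 hst
  let := IsAlgClosed.isAlgClosure_of_transcendence_basis _ hs
  let := IsAlgClosed.isAlgClosure_of_transcendence_basis _ ht
  let e' : Algebra.adjoin R (Set.range ((↑) : s → K)) ≃ₐ[R] Algebra.adjoin R (Set.range ((↑) : t → L)) :=
    hs.1.aevalEquiv.symm.trans ((MvPolynomial.renameEquiv R e).trans ht.1.aevalEquiv)
  refine ⟨IsAlgClosure.equivOfEquiv K L e'.toRingEquiv, fun r => ?_⟩
  have h1 : algebraMap R K r = algebraMap (Algebra.adjoin R (Set.range ((↑) : s → K))) K (algebraMap R _ r) := rfl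
  have h2 : algebraMap R L r = algebraMap (Algebra.adjoin R (Set.range ((↑) : t → L))) L (algebraMap R _ r) := rfl
  rw [h1, h2, IsAlgClosure.equivOfEquiv_algebraMap]
  congr 1
  exact e'.commutes r

theorem exists_sigma (M e : ℕ) (hM : M ≠ 0) (he : Nat.Coprime e M) :
    ∃ σ : ℂ ≃+* ℂ, ∀ z : ℂ, z ^ M = 1 → σ z = z ^ e := by
  have hζ := Complex.isPrimitiveRoot_exp M hM
  set ζ := Complex.exp (2 * Real.pi * Complex.I / M)
  have h_integral : IsIntegral ℚ ζ := (hζ.isIntegral (Nat.pos_of_ne_zero hM)).tower_top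
  let R := AdjoinRoot (minpoly ℚ ζ)
  have : Fact (Irreducible (minpoly ℚ ζ)) := ⟨minpoly.irreducible h_integral⟩
  have h1 : Polynomial.eval₂ (algebraMap ℚ ℂ) ζ (minpoly ℚ ζ) = 0 := minpoly.aeval ℚ ζ
  have hmin : minpoly ℚ ζ = minpoly ℚ (ζ ^ e) := by
    have h3 := hζ.pow_of_coprime e he
    rw [← Polynomial.cyclotomic_eq_minpoly_rat hζ (Nat.pos_of_ne_zero hM), ← Polynomial.cyclotomic_eq_minpoly_rat h3 (Nat.pos_of_ne_zero hM)]
  have h2 : Polynomial.eval₂ (algebraMap ℚ ℂ) (ζ ^ e) (minpoly ℚ ζ) = 0 := by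
    rw [hmin]; exact minpoly.aeval ℚ _
  let f1 : R →+* ℂ := AdjoinRoot.lift (algebraMap ℚ ℂ) ζ h1
  let f2 : R →+* ℂ := AdjoinRoot.lift (algebraMap ℚ ℂ) (ζ ^ e) h2
  have hR : #R ≤ ℵ₀ := by
    have := Cardinal.mk_le_of_surjective (AdjoinRoot.mk_surjective (g := minpoly ℚ ζ))
    refine this.trans ?_
    simpa using Polynomial.cardinalMk_le_max (R := ℚ)
  obtain ⟨σ, hσ⟩ := @exists_equiv_compat R ℂ ℂ _ _ _ f1.toAlgebra f2.toAlgebra _ _ hR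
    (by rw [Cardinal.mk_complex]; exact Cardinal.aleph0_lt_continuum) rfl
  refine ⟨σ, fun z hz => ?_⟩
  have h4 : σ ζ = ζ ^ e := by
    have := hσ (AdjoinRoot.root _)
    simp only [RingHom.algebraMap_toAlgebra] at this
    have a1 : f1 (AdjoinRoot.root _) = ζ := AdjoinRoot.lift_root h1
    have a2 : f2 (AdjoinRoot.root _) = ζ ^ e := AdjoinRoot.lift_root h2
    rwa [a1, a2] at this
  have : NeZero M := ⟨hM⟩
  obtain ⟨i, _, rfl⟩ := hζ.eq_pow_of_pow_eq_one hz
  rw [map_pow, h4, ← pow_mul, ← pow_mul, mul_comm]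
end auto

theorem card_deg_le (D : ℕ) :
    2 * Nat.card {n : Fin 2 →₀ ℕ | (n.sum fun _ e => e) ≤ D} = (D + 1) * (D + 2) := by
  have h1 : Nat.card {n : Fin 2 →₀ ℕ | (n.sum fun _ e => e) ≤ D} =
      Nat.card ((Finset.range (D + 1)).sigma (fun i => Finset.range (D + 1 - i))) := by
    refine Nat.card_congr
      { toFun := fun n => ⟨⟨n.1 0, n.1 1⟩, ?_⟩
        invFun := fun q => ⟨Finsupp.equivFunOnFinite.symm ![q.1.1, q.1.2], ?_⟩
        left_inv := ?_
        right_inv := ?_ }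
    · have := n.2
      rw [Set.mem_ofPred_eq, Finsupp.sum_fintype _ _ (by simp), Fin.sum_univ_two] at this
      simp
      omega
    · have := Finset.mem_sigma.1 q.2
      simp only [Finset.mem_range] at this
      rw [Set.mem_ofPred_eq, Finsupp.sum_fintype _ _ (by simp), Fin.sum_univ_two]
      simp
      omega
    · intro n
      ext i
      fin_cases i <;> simp
    · intro q
      ext <;> simp
  rw [h1, Nat.card_eq_fintype_card, Fintype.card_coe, Finset.card_sigma]
  simp only [Finset.card_range]
  clear h1
  induction D with
  | zero => simp
  | succ D ih =>
    rw [Finset.sum_range_succ']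
    have : ∀ x, D + 1 + 1 - (x + 1) = D + 1 - x := fun x => by omega
    simp only [this]
    rw [mul_add, ih]
    ring_nf
    simp
    ring

theorem finrank_restrict (D : ℕ) :
    2 * Module.finrank ℂ (restrictTotalDegree (Fin 2) ℂ D) = (D + 1) * (D + 2) := by
  rw [← card_deg_le D]
  congr 1
  exact Module.finrank_eq_nat_card_basis (basisRestrictSupport ℂ _)

theorem eval_sep (P : Finset (Fin 2 → ℂ)) (p : Fin 2 → ℂ) (_hp : p ∈ P) :
    ∃ f : MvPolynomial (Fin 2) ℂ, f.totalDegree ≤ P.card ∧ eval p f = 1 ∧ ∀ q ∈ P, q ≠ p → eval q f = 0 := by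
  classical
  have h : ∀ q : Fin 2 → ℂ, ∃ l : MvPolynomial (Fin 2) ℂ, l.totalDegree ≤ 1 ∧ eval p l = 1 ∧ (q ≠ p → eval q l = 0) := by
    intro q
    by_cases hq : q = p
    · exact ⟨1, by simp, by simp, fun h => absurd hq h⟩
    · obtain ⟨i, hi⟩ := Function.ne_iff.1 hq
      refine ⟨C ((p i - q i)⁻¹) * (X i - C (q i)), ?_, ?_, ?_⟩
      · refine (totalDegree_mul _ _).trans ?_
        have := totalDegree_sub_C_le (X i : MvPolynomial (Fin 2) ℂ) (q i)
        simp at this ⊢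
        exact this
      · have : p i - q i ≠ 0 := sub_ne_zero.2 (Ne.symm hi)
        simp [this]
      · simp
  choose l hl using h
  refine ⟨∏ q ∈ P, l q, ?_, ?_, ?_⟩
  · refine (totalDegree_finsetProd _ _).trans ?_
    refine (Finset.sum_le_card_nsmul _ _ 1 (fun q _ => (hl q).1)).trans (by simp)
  · rw [map_prod]; exact Finset.prod_eq_one fun q _ => (hl q).2.1
  · intro q hq hqp
    rw [map_prod]; exact Finset.prod_eq_zero hq ((hl q).2.2 hqp)

theorem bezout_finset (F G : MvPolynomial (Fin 2) ℂ) (hF : Irreducible F) (hFG : ¬ F ∣ G)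
    (P : Finset (Fin 2 → ℂ)) (hP : ∀ p ∈ P, eval p F = 0 ∧ eval p G = 0) :
    P.card ≤ F.totalDegree * G.totalDegree := by
  classical
  have hF0 := hF.ne_zero
  have hG0 : G ≠ 0 := fun h => hFG (h ▸ dvd_zero _)
  set m := F.totalDegree with hm
  set n := G.totalDegree with hn
  set r := P.card with hr
  let V := fun D => restrictTotalDegree (Fin 2) ℂ D
  have hV : ∀ D f, f ∈ V D ↔ f.totalDegree ≤ D := fun D f => mem_restrictTotalDegree _ _ _
  let mulm : ∀ (A : MvPolynomial (Fin 2) ℂ) (D E : ℕ), A.totalDegree + D ≤ E → (V D →ₗ[ℂ] V E) := fun A D E h =>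
    LinearMap.codRestrict (V E) ((LinearMap.mulLeft ℂ A).comp (V D).subtype) (fun c => by
      rw [hV]
      have h2 := (hV D c).1 c.2
      refine (totalDegree_mul _ _).trans ?_
      simp only [Submodule.subtype_apply]
      omega)
  have mulm_apply : ∀ A D E h c, ((mulm A D E h c : V E) : MvPolynomial (Fin 2) ℂ) = A * c := fun A D E h c => rfl
  let Φ : (V (n + r) × V (m + r)) →ₗ[ℂ] V (m + n + r) :=
    LinearMap.coprod (mulm F _ _ (by omega)) (mulm G _ _ (by omega))
  let κ : V r →ₗ[ℂ] (V (n + r) × V (m + r)) :=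
    LinearMap.prod (-(mulm G _ _ (by omega))) (mulm F _ _ (by omega))
  let Ψ : V (m + n + r) →ₗ[ℂ] (P → ℂ) :=
    LinearMap.pi fun p => (aeval (R := ℂ) p.1).toLinearMap.comp (V _).subtype
  have hΨ : Function.Surjective Ψ := by
    rw [← LinearMap.range_eq_top, eq_top_iff]
    intro g _
    choose f hf using fun p : P => eval_sep P p.1 p.2
    refine ⟨⟨∑ p, C (g p) * f p, ?_⟩, ?_⟩
    · rw [hV]
      refine totalDegree_finsetSum_le fun p _ => ?_
      refine (totalDegree_mul _ _).trans ?_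
      have := (hf p).1
      simp
      omega
    · ext q
      simp only [Ψ, LinearMap.pi_apply, LinearMap.comp_apply, Submodule.subtype_apply, AlgHom.toLinearMap_apply,
        map_sum, map_mul]
      rw [Finset.sum_eq_single q]
      · have := (hf q).2.1
        simp [aeval_eq_eval, this]
      · intro p _ hpq
        have := (hf p).2.2 q q.2 (fun h => hpq (Subtype.ext h).symm)
        simp [aeval_eq_eval, this]
      · simp
  have hle : LinearMap.range Φ ≤ LinearMap.ker Ψ := by
    rintro _ ⟨⟨a, b⟩, rfl⟩
    rw [LinearMap.mem_ker]
    ext p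
    have := hP p.1 p.2
    simp [Φ, Ψ, mulm_apply, aeval_eq_eval, this.1, this.2]
  have hker : LinearMap.ker Φ ≤ LinearMap.range κ := by
    rintro ⟨a, b⟩ hab
    rw [LinearMap.mem_ker] at hab
    have h1 : F * a.1 + G * b.1 = 0 := congrArg Subtype.val hab
    have h2 : F ∣ G * b.1 := ⟨-a.1, by linear_combination h1⟩
    obtain ⟨c, hc⟩ := ((hF.prime.dvd_or_dvd h2).resolve_left hFG)
    have h3 : a.1 = -(G * c) := by
      apply mul_left_cancel₀ hF0
      rw [hc] at h1
      linear_combination h1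
    have hcd : c.totalDegree ≤ r := by
      by_cases hc0 : c = 0
      · simp [hc0]
      have := (hV _ _).1 b.2
      rw [hc, totalDegree_mul_of_isDomain hF0 hc0] at this
      omega
    refine ⟨⟨c, (hV _ _).2 hcd⟩, ?_⟩
    ext1
    · exact Subtype.ext h3.symm
    · exact Subtype.ext hc.symm
  have e1 := Submodule.finrank_mono hle
  have e2 := (Submodule.finrank_mono hker).trans (LinearMap.finrank_range_le κ)
  have e3 := LinearMap.finrank_range_add_finrank_ker Φ
  have e4 := LinearMap.finrank_range_add_finrank_ker Ψ
  rw [LinearMap.range_eq_top.2 hΨ, finrank_top, Module.finrank_fintype_fun_eq_card, Fintype.card_coe] at e4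
  rw [Module.finrank_prod] at e3
  have d1 := finrank_restrict (n + r)
  have d2 := finrank_restrict (m + r)
  have d3 := finrank_restrict (m + n + r)
  have d4 := finrank_restrict r
  simp only [V] at *
  nlinarith

theorem bezout (F G : MvPolynomial (Fin 2) ℂ) (hF : Irreducible F) (hFG : ¬ F ∣ G) :
    {p : Fin 2 → ℂ | eval p F = 0 ∧ eval p G = 0}.encard ≤ (F.totalDegree * G.totalDegree : ℕ) := by
  by_contra! h
  obtain ⟨t, ht, htc⟩ := Set.exists_subset_encard_eq (Order.add_one_le_of_lt h)
  have hfin : t.Finite := Set.finite_of_encard_eq_coe (k := F.totalDegree * G.totalDegree + 1) (by rw [htc]; norm_cast)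
  have := bezout_finset F G hF hFG hfin.toFinset (fun p hp => ht (hfin.mem_toFinset.1 hp))
  rw [hfin.encard_eq_coe_toFinset_card] at htc
  norm_cast at htc
  omega

abbrev BSG := Fin 2 → ℂˣ

noncomputable def ev (p : BSG) (H : MvPolynomial (Fin 2) ℂ) : ℂ := eval (fun i => (p i : ℂ)) H

def chi (m : Fin 2 →₀ ℕ) : BSG →* ℂˣ where
  toFun s := ∏ i, s i ^ m i
  map_one' := by simp
  map_mul' s t := by simp [mul_pow, Finset.prod_mul_distrib]

noncomputable def scale (s : BSG) : MvPolynomial (Fin 2) ℂ →ₐ[ℂ] MvPolynomial (Fin 2) ℂ :=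
  aeval (fun i => C (s i : ℂ) * X i)

theorem chi_apply (m : Fin 2 →₀ ℕ) (s : BSG) : ((chi m s : ℂˣ) : ℂ) = ∏ i, (s i : ℂ) ^ m i := by
  simp [chi]

theorem scale_monomial (s : BSG) (m : Fin 2 →₀ ℕ) (c : ℂ) :
    scale s (monomial m c) = monomial m (chi m s * c) := by
  rw [scale, aeval_monomial, Finsupp.prod_fintype _ _ (by simp), chi_apply]
  simp only [mul_pow, Finset.prod_mul_distrib]
  rw [monomial_eq, Finsupp.prod_fintype _ _ (by simp), ← MvPolynomial.algebraMap_eq]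
  simp
  ring

theorem coeff_scale (s : BSG) (m : Fin 2 →₀ ℕ) (H : MvPolynomial (Fin 2) ℂ) :
    coeff m (scale s H) = chi m s * coeff m H := by
  induction H using MvPolynomial.induction_on' with
  | monomial u a =>
    rw [scale_monomial, coeff_monomial, coeff_monomial]
    split_ifs with h
    · rw [h]
    · simp
  | add p q hp hq => simp [hp, hq, mul_add]

theorem ev_scale (s p : BSG) (H : MvPolynomial (Fin 2) ℂ) : ev p (scale s H) = ev (s * p) H := by
  induction H using MvPolynomial.induction_on' with
  | monomial u a =>
    rw [scale_monomial, ev, ev, eval_monomial, eval_monomial, Finsupp.prod_fintype _ _ (by simp),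
      Finsupp.prod_fintype _ _ (by simp), chi_apply]
    simp only [Pi.mul_apply, Units.val_mul, mul_pow, Finset.prod_mul_distrib]
    ring
  | add p q hp hq =>
    simp only [ev] at hp hq
    simp [ev, hp, hq]

theorem support_scale (s : BSG) (H : MvPolynomial (Fin 2) ℂ) : (scale s H).support = H.support := by
  ext m
  simp [mem_support_iff, coeff_scale]

theorem totalDegree_scale (s : BSG) (H : MvPolynomial (Fin 2) ℂ) : (scale s H).totalDegree = H.totalDegree := by
  rw [totalDegree, totalDegree, support_scale]

theorem scale_scale (s t : BSG) (H : MvPolynomial (Fin 2) ℂ) : scale s (scale t H) = scale (s * t) H := by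
  ext m
  simp [coeff_scale, mul_assoc]

theorem scale_one (H : MvPolynomial (Fin 2) ℂ) : scale 1 H = H := by
  ext m
  simp [coeff_scale]

noncomputable def scaleEquiv (s : BSG) : MvPolynomial (Fin 2) ℂ ≃ₐ[ℂ] MvPolynomial (Fin 2) ℂ :=
  AlgEquiv.ofAlgHom (scale s) (scale s⁻¹)
    (by apply AlgHom.ext; intro x; simp [scale_scale, scale_one])
    (by apply AlgHom.ext; intro x; simp [scale_scale, scale_one])

theorem irreducible_scale (s : BSG) {H : MvPolynomial (Fin 2) ℂ} (h : Irreducible H) :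
    Irreducible (scale s H) :=
  (MulEquiv.irreducible_iff (scaleEquiv s)).2 h

theorem scale_dvd (s : BSG) {H F : MvPolynomial (Fin 2) ℂ} (h : H ∣ F) : scale s H ∣ scale s F :=
  map_dvd _ h

theorem map_scale (σ : ℂ ≃+* ℂ) (s : BSG) (H : MvPolynomial (Fin 2) ℂ) :
    map (σ : ℂ →+* ℂ) (scale s H) = scale (fun i => Units.map (σ : ℂ →* ℂ) (s i)) (map (σ : ℂ →+* ℂ) H) := by
  ext m
  simp [coeff_scale, coeff_map, chi_apply]

theorem ev_map (σ : ℂ ≃+* ℂ) (p : BSG) (H : MvPolynomial (Fin 2) ℂ) :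
    ev (fun i => Units.map (σ : ℂ →* ℂ) (p i)) (map (σ : ℂ →+* ℂ) H) = σ (ev p H) := by
  simp only [ev]
  induction H using MvPolynomial.induction_on' with
  | monomial u a =>
    rw [map_monomial, eval_monomial, eval_monomial, Finsupp.prod_fintype _ _ (by simp),
      Finsupp.prod_fintype _ _ (by simp)]
    simp
  | add p q hp hq => rw [map_add, map_add, map_add, map_add, hp, hq]

theorem support_map_sigma (σ : ℂ ≃+* ℂ) (H : MvPolynomial (Fin 2) ℂ) : (map (σ : ℂ →+* ℂ) H).support = H.support :=
  support_map_of_injective _ σ.injective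

theorem totalDegree_map_sigma (σ : ℂ ≃+* ℂ) (H : MvPolynomial (Fin 2) ℂ) :
    (map (σ : ℂ →+* ℂ) H).totalDegree = H.totalDegree := by
  rw [totalDegree, totalDegree, support_map_sigma]

theorem map_sigma_congr (σ τ : ℂ ≃+* ℂ) (H : MvPolynomial (Fin 2) ℂ) (h : ∀ m, σ (coeff m H) = τ (coeff m H)) :
    map (σ : ℂ →+* ℂ) H = map (τ : ℂ →+* ℂ) H := by
  ext m
  simpa [coeff_map] using h m

def stab (H : MvPolynomial (Fin 2) ℂ) : Subgroup BSG where
  carrier := {s | ∀ m ∈ H.support, ∀ m' ∈ H.support, chi m s = chi m' s}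
  one_mem' := by intro m _ m' _; simp
  mul_mem' := by
    intro a b ha hb m hm m' hm'
    rw [map_mul, map_mul, ha m hm m' hm', hb m hm m' hm']
  inv_mem' := by
    intro a ha m hm m' hm'
    rw [map_inv, map_inv, ha m hm m' hm']

theorem mem_stab {H : MvPolynomial (Fin 2) ℂ} {s : BSG} :
    s ∈ stab H ↔ ∀ m ∈ H.support, ∀ m' ∈ H.support, chi m s = chi m' s := Iff.rfl

theorem stab_congr {H H' : MvPolynomial (Fin 2) ℂ} (h : H.support = H'.support) : stab H = stab H' := by
  ext s
  rw [mem_stab, mem_stab, h]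

theorem scale_of_mem_stab {H : MvPolynomial (Fin 2) ℂ} {s : BSG} (hs : s ∈ stab H) :
    ∃ c : ℂˣ, scale s H = C (c : ℂ) * H := by
  by_cases h : H.support = ∅
  · refine ⟨1, ?_⟩
    rw [support_eq_empty] at h
    simp [h]
  · obtain ⟨m0, hm0⟩ := Finset.nonempty_iff_ne_empty.2 h
    refine ⟨chi m0 s, ?_⟩
    ext m
    rw [coeff_scale, coeff_C_mul]
    by_cases hm : m ∈ H.support
    · rw [hs m hm m0 hm0]
    · rw [notMem_support_iff.1 hm]; simp

theorem mem_stab_of_scale {H : MvPolynomial (Fin 2) ℂ} {s : BSG} {c : ℂ} (h : scale s H = C c * H) :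
    s ∈ stab H := by
  have : ∀ m ∈ H.support, ((chi m s : ℂˣ) : ℂ) = c := by
    intro m hm
    have h1 := congrArg (coeff m) h
    rw [coeff_scale, coeff_C_mul] at h1
    exact mul_right_cancel₀ (mem_support_iff.1 hm) h1
  intro m hm m' hm'
  apply Units.ext
  rw [this m hm, this m' hm']

theorem dvd_deg_le {H F : MvPolynomial (Fin 2) ℂ} (hF : F ≠ 0) (h : H ∣ F) (hd : F.totalDegree ≤ H.totalDegree) :
    ∃ c : ℂ, c ≠ 0 ∧ F = C c * H := by
  obtain ⟨k, rfl⟩ := h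
  have h1 : H ≠ 0 := left_ne_zero_of_mul hF
  have h2 : k ≠ 0 := right_ne_zero_of_mul hF
  rw [totalDegree_mul_of_isDomain h1 h2] at hd
  have h3 : k.totalDegree = 0 := by omega
  rw [totalDegree_eq_zero_iff_eq_C] at h3
  refine ⟨coeff 0 k, fun h => h2 (by rw [h3, h, C_0]), ?_⟩
  rw [mul_comm, ← h3]

theorem mem_stab_of_dvd {H : MvPolynomial (Fin 2) ℂ} (h0 : H ≠ 0) {s : BSG} (h : H ∣ scale s H) : s ∈ stab H := by
  have h1 : scale s H ≠ 0 := by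
    intro h2
    have := support_scale s H
    rw [h2, support_zero, eq_comm, support_eq_empty] at this
    exact h0 this
  obtain ⟨c, _, hc⟩ := dvd_deg_le h1 h (totalDegree_scale s H).le
  exact mem_stab_of_scale hc

def stab2 (H : MvPolynomial (Fin 2) ℂ) : Subgroup BSG := (stab H).comap (powMonoidHom 2)

theorem mem_stab2 {H : MvPolynomial (Fin 2) ℂ} {s : BSG} : s ∈ stab2 H ↔ s ^ 2 ∈ stab H := Iff.rfl

theorem exists_root (n : ℕ) (hn : n ≠ 0) (s : BSG) : ∃ t : BSG, t ^ n = s := by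
  choose t ht using fun i => IsAlgClosed.exists_pow_nat_eq (s i : ℂ) (Nat.pos_of_ne_zero hn)
  refine ⟨fun i => Units.mk0 (t i) (fun h => (s i).ne_zero ?_), ?_⟩
  · rw [← ht i, h, zero_pow hn]
  · ext i
    simpa using ht i

theorem card_ker_sq : Nat.card (powMonoidHom 2 : BSG →* BSG).ker = 4 := by
  have h1 : Nat.card (Fin 2 → rootsOfUnity 2 ℂ) = 4 := by
    rw [Nat.card_fun, Complex.card_rootsOfUnity]
    simp
  rw [← h1]
  refine Nat.card_congr
    { toFun := fun x i => ⟨x.1 i, ?_⟩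
      invFun := fun x => ⟨fun i => (x i).1, ?_⟩
      left_inv := fun _ => rfl
      right_inv := fun _ => rfl }
  · have := x.2
    exact congrFun (MonoidHom.mem_ker.1 this) i
  · rw [MonoidHom.mem_ker]
    funext i
    exact (x i).2

theorem relIndex_stab (H : MvPolynomial (Fin 2) ℂ) (hfin : Finite (stab H)) : (stab H).relIndex (stab2 H) = 4 := by
  have hle : stab H ≤ stab2 H := fun s hs => (stab H).pow_mem hs 2
  have hsurj : Function.Surjective (powMonoidHom 2 : BSG →* BSG) := fun s => exists_root 2 two_ne_zero s
  have h1 : Nat.card (stab2 H) = 4 * Nat.card (stab H) := by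
    let f : stab2 H →* stab H := (powMonoidHom 2 : BSG →* BSG).subgroupComap (stab H)
    have hf : Function.Surjective f := MonoidHom.subgroupComap_surjective_of_surjective _ _ hsurj
    have h2 := Subgroup.card_mul_index f.ker
    rw [Subgroup.index_ker, MonoidHom.range_eq_top.2 hf, Subgroup.card_top] at h2
    rw [← h2, ← card_ker_sq]
    congr 1
    refine Nat.card_congr
      { toFun := fun x => ⟨x.1.1, ?_⟩
        invFun := fun x => ⟨⟨x.1, ?_⟩, ?_⟩
        left_inv := fun _ => rfl
        right_inv := fun _ => rfl }
    · have := x.2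
      rw [MonoidHom.mem_ker] at this ⊢
      exact congrArg Subtype.val this
    · have := x.2
      rw [MonoidHom.mem_ker] at this
      change powMonoidHom 2 x.1 ∈ stab H
      rw [this]; exact one_mem _
    · have := x.2
      rw [MonoidHom.mem_ker] at this ⊢
      exact Subtype.ext this
  have h3 := Subgroup.card_mul_index ((stab H).subgroupOf (stab2 H))
  rw [Nat.card_congr (Subgroup.subgroupOfEquivOfLe hle).toEquiv, h1, mul_comm] at h3
  exact Nat.eq_of_mul_eq_mul_right Nat.card_pos h3

def HasCyc (H : MvPolynomial (Fin 2) ℂ) : Prop :=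
  ∃ (i j : ℕ) (ρ : ℂ), ¬ (i = 0 ∧ j = 0) ∧ (∃ n : ℕ, 1 ≤ n ∧ ρ ^ n = 1) ∧
      ((X 0 ^ i - C ρ * X 1 ^ j ∣ H) ∨ (X 0 ^ i * X 1 ^ j - C ρ ∣ H))

theorem dvd_of_cong (F H : MvPolynomial (Fin 2) ℂ) (p : BSG) (m1 : Fin 2 →₀ ℕ) (hH : ev p H = 0) (hF : ev p F = 0)
    (h : ∀ m ∈ H.support, ∃ c : ℂ, F ∣ monomial m 1 - C c * monomial m1 1) : F ∣ H := by
  choose! c hc using h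
  have h1 : F ∣ H - C (∑ m ∈ H.support, coeff m H * c m) * monomial m1 1 := by
    have h2 : H - C (∑ m ∈ H.support, coeff m H * c m) * monomial m1 1 =
        ∑ m ∈ H.support, C (coeff m H) * (monomial m 1 - C (c m) * monomial m1 1) := by
      conv_lhs => lhs; rw [H.as_sum]
      rw [map_sum, Finset.sum_mul, ← Finset.sum_sub_distrib]
      refine Finset.sum_congr rfl fun m hm => ?_
      simp only [mul_sub, C_mul_monomial, mul_one]
    rw [h2]
    exact Finset.dvd_sum fun m hm => Dvd.dvd.mul_left (hc m hm) _
  have h3 : (∑ m ∈ H.support, coeff m H * c m) = 0 := by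
    obtain ⟨k, hk⟩ := h1
    have h4 := congrArg (ev p) hk
    simp only [ev] at h4 hH hF
    rw [map_mul, map_sub, hH, hF, map_mul, eval_C, eval_monomial, zero_mul, zero_sub, neg_eq_zero, one_mul,
      Finsupp.prod_fintype _ _ (by simp)] at h4
    refine (mul_eq_zero.1 h4).resolve_right ?_
    exact Finset.prod_ne_zero_iff.2 fun i _ => pow_ne_zero _ (p i).ne_zero
  rwa [h3, C_0, zero_mul, sub_zero] at h1

theorem monomial_fin2 (m : Fin 2 →₀ ℕ) : (monomial m 1 : MvPolynomial (Fin 2) ℂ) = X 0 ^ m 0 * X 1 ^ m 1 := by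
  rw [monomial_eq, Finsupp.prod_fintype _ _ (by simp), Fin.prod_univ_two, C_1, one_mul]

theorem chi_fin2 (m : Fin 2 →₀ ℕ) (s : BSG) : chi m s = s 0 ^ m 0 * s 1 ^ m 1 := by
  simp [chi, Fin.prod_univ_two]

theorem stab_finite (H : MvPolynomial (Fin 2) ℂ) (m0 m1 m2 : Fin 2 →₀ ℕ) (h0 : m0 ∈ H.support)
    (h1 : m1 ∈ H.support) (h2 : m2 ∈ H.support)
    (h : ((m1 0 : ℤ) - m0 0) * ((m2 1 : ℤ) - m0 1) - ((m1 1 : ℤ) - m0 1) * ((m2 0 : ℤ) - m0 0) ≠ 0) :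
    Finite (stab H) := by
  set D := ((m1 0 : ℤ) - m0 0) * ((m2 1 : ℤ) - m0 1) - ((m1 1 : ℤ) - m0 1) * ((m2 0 : ℤ) - m0 0) with hD
  have key : ∀ s ∈ stab H, ∀ i, s i ∈ rootsOfUnity D.natAbs ℂ := by
    intro s hs
    have e1 : s 0 ^ ((m1 0 : ℤ) - m0 0) * s 1 ^ ((m1 1 : ℤ) - m0 1) = 1 := by
      have := hs m1 h1 m0 h0
      rw [chi_fin2, chi_fin2] at this
      simp only [zpow_sub, zpow_natCast]
      rw [mul_mul_mul_comm, this]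
      rw [mul_mul_mul_comm, mul_inv_cancel, mul_inv_cancel, one_mul]
    have e2 : s 0 ^ ((m2 0 : ℤ) - m0 0) * s 1 ^ ((m2 1 : ℤ) - m0 1) = 1 := by
      have := hs m2 h2 m0 h0
      rw [chi_fin2, chi_fin2] at this
      simp only [zpow_sub, zpow_natCast]
      rw [mul_mul_mul_comm, this]
      rw [mul_mul_mul_comm, mul_inv_cancel, mul_inv_cancel, one_mul]
    generalize ((m1 0 : ℤ) - m0 0) = a at *
    generalize ((m1 1 : ℤ) - m0 1) = b at *
    generalize ((m2 0 : ℤ) - m0 0) = c at *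
    generalize ((m2 1 : ℤ) - m0 1) = d at *
    have f0 : s 0 ^ D = 1 := by
      have : s 0 ^ D = (s 0 ^ a * s 1 ^ b) ^ d * ((s 0 ^ c * s 1 ^ d) ^ b)⁻¹ := by
        rw [hD, mul_zpow, mul_zpow, ← zpow_mul, ← zpow_mul, ← zpow_mul, ← zpow_mul, zpow_sub, mul_comm b c, mul_comm d b]
        rw [mul_inv]
        rw [mul_mul_mul_comm, mul_inv_cancel, mul_one]
      rw [this, e1, e2]; simp
    have f1 : s 1 ^ D = 1 := by
      have : s 1 ^ D = (s 0 ^ c * s 1 ^ d) ^ a * ((s 0 ^ a * s 1 ^ b) ^ c)⁻¹ := by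
        rw [hD, mul_zpow, mul_zpow, ← zpow_mul, ← zpow_mul, ← zpow_mul, ← zpow_mul, zpow_sub, mul_comm a c, mul_comm d a]
        rw [mul_inv]
        rw [mul_mul_mul_comm, mul_inv_cancel, one_mul]
      rw [this, e1, e2]; simp
    have g : ∀ i, s i ^ D = 1 := fun i => by fin_cases i <;> assumption
    intro i
    rw [mem_rootsOfUnity]
    rcases Int.natAbs_eq D with h' | h'
    · rw [← zpow_natCast, ← h']; exact g i
    · have := g i
      rw [h', zpow_neg, inv_eq_one, zpow_natCast] at this
      exact this
  have : NeZero D.natAbs := ⟨Int.natAbs_ne_zero.2 h⟩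
  refine Finite.of_injective (β := Fin 2 → rootsOfUnity D.natAbs ℂ) (fun s i => ⟨s.1 i, key s.1 s.2 i⟩) ?_
  intro s t hst
  apply Subtype.ext
  funext i
  exact congrArg Subtype.val (congrFun hst i)

theorem stab_finite_or (H : MvPolynomial (Fin 2) ℂ) (hH : H ≠ 0) (p : BSG) (n : ℕ) (hn : 1 ≤ n) (hp : p ^ n = 1)
    (hpH : ev p H = 0) (hc : ¬ HasCyc H) : Finite (stab H) := by
  by_contra hinf
  have hcol : ∀ m0 ∈ H.support, ∀ m1 ∈ H.support, ∀ m2 ∈ H.support,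
      ((m1 0 : ℤ) - m0 0) * ((m2 1 : ℤ) - m0 1) - ((m1 1 : ℤ) - m0 1) * ((m2 0 : ℤ) - m0 0) = 0 := by
    intro m0 h0 m1 h1 m2 h2
    by_contra h
    exact hinf (stab_finite H m0 m1 m2 h0 h1 h2 h)
  have hne : H.support.Nonempty := Finset.nonempty_iff_ne_empty.2 (fun h => hH (support_eq_empty.1 h))
  obtain ⟨m1, hm1, hmin⟩ := Finset.exists_min_image H.support (fun m => toLex (m 0, m 1)) hne
  have hmin' : ∀ m ∈ H.support, m1 0 < m 0 ∨ (m1 0 = m 0 ∧ m1 1 ≤ m 1) := by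
    intro m hm
    simpa [Prod.Lex.toLex_le_toLex] using hmin m hm
  have h2 : ∃ m2 ∈ H.support, m2 ≠ m1 := by
    by_contra! h
    have : H.support = {m1} := Finset.eq_singleton_iff_unique_mem.2 ⟨hm1, h⟩
    have h3 := hpH
    rw [H.as_sum, this, Finset.sum_singleton, ev, eval_monomial, Finsupp.prod_fintype _ _ (by simp)] at h3
    rcases mul_eq_zero.1 h3 with h4 | h4
    · exact (mem_support_iff.1 hm1) h4
    · exact Finset.prod_ne_zero_iff.2 (fun i _ => pow_ne_zero _ (p i).ne_zero) h4
  obtain ⟨m2, hm2, hne2⟩ := h2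
  have hne2' : ¬ ((m2 0 : ℤ) - m1 0 = 0 ∧ (m2 1 : ℤ) - m1 1 = 0) := by
    rintro ⟨h, h'⟩
    apply hne2
    ext i
    fin_cases i
    · simp; omega
    · simp; omega
  obtain ⟨a, b, g, hg, hab, ha, hb⟩ : ∃ a b g : ℤ, 0 < g ∧ IsCoprime a b ∧ (m2 0 : ℤ) - m1 0 = a * g ∧
      (m2 1 : ℤ) - m1 1 = b * g := by
    have hgpos : 0 < Int.gcd ((m2 0 : ℤ) - m1 0) ((m2 1 : ℤ) - m1 1) := by
      rw [Nat.pos_iff_ne_zero, Ne, Int.gcd_eq_zero_iff]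
      exact hne2'
    obtain ⟨a, b, h1, h2, h3⟩ := Int.exists_gcd_one hgpos
    exact ⟨a, b, _, by exact_mod_cast hgpos, Int.isCoprime_iff_gcd_eq_one.2 h1, h2, h3⟩
  have hab0 : 0 < a ∨ (a = 0 ∧ 0 < b) := by
    rcases hmin' m2 hm2 with h | ⟨h, h'⟩
    · left; by_contra! h3; nlinarith
    · have ha0 : a = 0 := by
        have : a * g = 0 := by omega
        exact (mul_eq_zero.1 this).resolve_right hg.ne'
      refine Or.inr ⟨ha0, ?_⟩
      have : 0 ≤ b * g := by omega
      have h4 : 0 ≤ b := by by_contra! h5; nlinarith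
      rcases h4.lt_or_eq with h5 | h5
      · exact h5
      · exfalso; apply hne2'; rw [ha, hb, ha0, ← h5]; simp
  have hk : ∀ m ∈ H.support, ∃ k : ℕ, (m 0 : ℤ) = m1 0 + k * a ∧ (m 1 : ℤ) = m1 1 + k * b := by
    intro m hm
    have h3 := hcol m1 hm1 m2 hm2 m hm
    rw [ha, hb] at h3
    have h4 : a * ((m 1 : ℤ) - m1 1) = b * ((m 0 : ℤ) - m1 0) := by
      apply mul_left_cancel₀ hg.ne'
      linear_combination h3
    obtain ⟨u, v, huv⟩ := hab
    set k := u * ((m 0 : ℤ) - m1 0) + v * ((m 1 : ℤ) - m1 1) with hkdef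
    have e0 : (m 0 : ℤ) - m1 0 = k * a := by
      rw [hkdef]; linear_combination (-v) * h4 - ((m 0 : ℤ) - m1 0) * huv
    have e1 : (m 1 : ℤ) - m1 1 = k * b := by
      rw [hkdef]; linear_combination (u) * h4 - ((m 1 : ℤ) - m1 1) * huv
    have hk0 : 0 ≤ k := by
      by_contra! hlt
      rcases hab0 with h | ⟨h, h'⟩
      · rcases hmin' m hm with h5 | ⟨h5, h6⟩ <;> nlinarith
      · rcases hmin' m hm with h5 | ⟨h5, h6⟩
        · rw [h] at e0; simp at e0; omega
        · nlinarith
    refine ⟨k.toNat, ?_, ?_⟩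
    · rw [Int.toNat_of_nonneg hk0]; linarith
    · rw [Int.toNat_of_nonneg hk0]; linarith
  have ha0 : 0 ≤ a := by rcases hab0 with h | ⟨h, _⟩ <;> omega
  obtain ⟨i, rfl⟩ := Int.eq_ofNat_of_zero_le ha0
  apply hc
  have hpi : ∀ i, ((p i : ℂˣ) : ℂ) ^ n = 1 := by
    intro i
    have := congrFun hp i
    have h3 : (p i) ^ n = 1 := this
    rw [← Units.val_pow_eq_pow_val, h3, Units.val_one]
  rcases le_total 0 b with hb0 | hb0
  · obtain ⟨j, rfl⟩ := Int.eq_ofNat_of_zero_le hb0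
    refine ⟨i, j, (p 0 : ℂ) ^ i * (p 1 : ℂ) ^ j, ?_, ⟨n, hn, ?_⟩, Or.inr ?_⟩
    · rintro ⟨rfl, rfl⟩; simp at hab0
    · rw [mul_pow, ← pow_mul, ← pow_mul, mul_comm i, mul_comm j, pow_mul, pow_mul, hpi, hpi]; simp
    · refine dvd_of_cong _ _ p m1 hpH ?_ ?_
      · simp [ev]
      · intro m hm
        obtain ⟨k, h3, h4⟩ := hk m hm
        refine ⟨((p 0 : ℂ) ^ i * (p 1 : ℂ) ^ j) ^ k, ?_⟩
        have h3' : m 0 = m1 0 + k * i := by exact_mod_cast h3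
        have h4' : m 1 = m1 1 + k * j := by exact_mod_cast h4
        rw [monomial_fin2, monomial_fin2, h3', h4']
        have := sub_dvd_pow_sub_pow (X 0 ^ i * X 1 ^ j : MvPolynomial (Fin 2) ℂ) (C ((p 0 : ℂ) ^ i * (p 1 : ℂ) ^ j)) k
        refine (this.mul_right (X 0 ^ m1 0 * X 1 ^ m1 1)).trans (dvd_of_eq ?_)
        rw [C_pow]
        ring
  · obtain ⟨j, hj⟩ := Int.eq_ofNat_of_zero_le (neg_nonneg.2 hb0)
    obtain rfl : b = -(j : ℤ) := by omega
    refine ⟨i, j, (p 0 : ℂ) ^ i * ((p 1 : ℂ) ^ j)⁻¹, ?_, ⟨n, hn, ?_⟩, Or.inl ?_⟩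
    · rintro ⟨rfl, rfl⟩; simp at hab0
    · rw [mul_pow, inv_pow, ← pow_mul, ← pow_mul, mul_comm i, mul_comm j, pow_mul, pow_mul, hpi, hpi]; simp
    · refine dvd_of_cong _ _ p m1 hpH ?_ ?_
      · simp [ev]
      · intro m hm
        obtain ⟨k, h3, h4⟩ := hk m hm
        refine ⟨((p 0 : ℂ) ^ i * ((p 1 : ℂ) ^ j)⁻¹) ^ k, ?_⟩
        have h3' : m 0 = m1 0 + k * i := by exact_mod_cast h3
        have h4' : m1 1 = m 1 + k * j := by zify; linarith
        rw [monomial_fin2, monomial_fin2, h3', h4']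
        have := sub_dvd_pow_sub_pow (X 0 ^ i : MvPolynomial (Fin 2) ℂ) (C ((p 0 : ℂ) ^ i * ((p 1 : ℂ) ^ j)⁻¹) * X 1 ^ j) k
        refine (this.mul_right (X 0 ^ m1 0 * X 1 ^ m 1)).trans (dvd_of_eq ?_)
        rw [C_pow]
        ring

noncomputable def KN (N : ℕ) : IntermediateField ℚ ℂ := IntermediateField.adjoin ℚ {z : ℂ | z ^ N = 1}

theorem root_mem_KN {N : ℕ} {z : ℂ} (h : z ^ N = 1) : z ∈ KN N := IntermediateField.subset_adjoin _ _ h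

theorem KN_mono {M N : ℕ} (h : M ∣ N) : KN M ≤ KN N := by
  apply IntermediateField.adjoin.mono
  intro z hz
  obtain ⟨k, rfl⟩ := h
  change z ^ (M * k) = 1
  rw [pow_mul, show z ^ M = 1 from hz, one_pow]

theorem sigma_congr_KN {N : ℕ} (σ τ : ℂ ≃+* ℂ) (h : ∀ z : ℂ, z ^ N = 1 → σ z = τ z) {x : ℂ} (hx : x ∈ KN N) :
    σ x = τ x := by
  induction hx using IntermediateField.adjoin_induction with
  | mem x hx => exact h x hx
  | algebraMap q => simp
  | add x y _ _ hx hy => simp [hx, hy]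
  | inv x _ hx => simp [hx]
  | mul x y _ _ hx hy => simp [hx, hy]

noncomputable def Kab : IntermediateField ℚ ℂ := IntermediateField.adjoin ℚ {z : ℂ | ∃ n : ℕ, 1 ≤ n ∧ z ^ n = 1}

theorem mem_Kab {x : ℂ} (hx : x ∈ Kab) : ∃ N : ℕ, 1 ≤ N ∧ x ∈ KN N := by
  induction hx using IntermediateField.adjoin_induction with
  | mem x hx => obtain ⟨n, hn, h⟩ := hx; exact ⟨n, hn, root_mem_KN h⟩
  | algebraMap q => exact ⟨1, le_rfl, (KN 1).algebraMap_mem q⟩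
  | add x y _ _ hx hy =>
    obtain ⟨a, ha, hx⟩ := hx
    obtain ⟨b, hb, hy⟩ := hy
    exact ⟨a * b, Nat.mul_pos ha hb, add_mem (KN_mono (dvd_mul_right a b) hx) (KN_mono (dvd_mul_left b a) hy)⟩
  | inv x _ hx => obtain ⟨a, ha, hx⟩ := hx; exact ⟨a, ha, inv_mem hx⟩
  | mul x y _ _ hx hy =>
    obtain ⟨a, ha, hx⟩ := hx
    obtain ⟨b, hb, hy⟩ := hy
    exact ⟨a * b, Nat.mul_pos ha hb, mul_mem (KN_mono (dvd_mul_right a b) hx) (KN_mono (dvd_mul_left b a) hy)⟩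

theorem exists_KN_finset (s : Finset ℂ) (h : ∀ x ∈ s, x ∈ Kab) : ∃ N : ℕ, 1 ≤ N ∧ ∀ x ∈ s, x ∈ KN N := by
  choose! n hn hn' using fun x hx => mem_Kab (h x hx)
  refine ⟨∏ x ∈ s, n x, ?_, fun x hx => KN_mono (Finset.dvd_prod_of_mem n hx) (hn' x hx)⟩
  exact Finset.prod_pos (f := n) fun x hx => Nat.lt_of_lt_of_le Nat.zero_lt_one (hn x hx)

theorem descent_KN {M : ℕ} (hM : M ≠ 0) (σ : ℂ ≃+* ℂ)
    (hσ : ∀ z : ℂ, z ^ (2 * M) = 1 → σ z = z ^ (1 + M)) {x : ℂ} (hx : x ∈ KN (2 * M)) (hfix : σ x = x) : x ∈ KN M := by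
  have hζ := Complex.isPrimitiveRoot_exp (2 * M) (by omega)
  set ζ := Complex.exp (2 * Real.pi * Complex.I / (2 * M : ℕ))
  have hζ2 : ζ ^ 2 ∈ KN M := root_mem_KN (by rw [← pow_mul, hζ.pow_eq_one])
  have hform : ∃ a ∈ KN M, ∃ b ∈ KN M, x = a + b * ζ := by
    have halg : ∀ z ∈ {z : ℂ | z ^ (2 * M) = 1}, IsAlgebraic ℚ z := by
      intro z hz
      refine IsIntegral.isAlgebraic ⟨Polynomial.X ^ (2 * M) - 1, Polynomial.monic_X_pow_sub_C 1 (by omega), ?_⟩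
      simp [show z ^ (2 * M) = 1 from hz]
    have hx' : x ∈ Algebra.adjoin ℚ {z : ℂ | z ^ (2 * M) = 1} := by
      rw [← IntermediateField.adjoin_toSubalgebra_of_isAlgebraic halg]; exact hx
    clear hfix hx
    induction hx' using Algebra.adjoin_induction with
    | mem z hz =>
      have : NeZero (2 * M) := ⟨by omega⟩
      obtain ⟨i, _, rfl⟩ := hζ.eq_pow_of_pow_eq_one hz
      rcases Nat.even_or_odd' i with ⟨k, rfl | rfl⟩
      · exact ⟨ζ ^ (2 * k), by rw [pow_mul]; exact pow_mem hζ2 k, 0, zero_mem _, by simp⟩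
      · exact ⟨0, zero_mem _, ζ ^ (2 * k), by rw [pow_mul]; exact pow_mem hζ2 k, by rw [pow_succ]; simp⟩
    | algebraMap q => exact ⟨_, (KN M).algebraMap_mem q, 0, zero_mem _, by simp⟩
    | add x y _ _ hx hy =>
      obtain ⟨a, ha, b, hb, rfl⟩ := hx
      obtain ⟨c, hc, d, hd, rfl⟩ := hy
      exact ⟨a + c, add_mem ha hc, b + d, add_mem hb hd, by ring⟩
    | mul x y _ _ hx hy =>
      obtain ⟨a, ha, b, hb, rfl⟩ := hx
      obtain ⟨c, hc, d, hd, rfl⟩ := hy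
      exact ⟨a * c + b * d * ζ ^ 2, add_mem (mul_mem ha hc) (mul_mem (mul_mem hb hd) hζ2), a * d + b * c,
        add_mem (mul_mem ha hd) (mul_mem hb hc), by ring⟩
  obtain ⟨a, ha, b, hb, rfl⟩ := hform
  have hKM : ∀ y ∈ KN M, σ y = y := by
    intro y hy
    refine sigma_congr_KN σ (RingEquiv.refl ℂ) (fun z hz => ?_) hy
    rw [hσ z (by rw [mul_comm, pow_mul, hz, one_pow]), pow_add, hz]
    simp
  have hζM : ζ ^ M = -1 := by
    have h1 : ζ ^ M ≠ 1 := hζ.pow_ne_one_of_pos_of_lt (by omega) (by omega)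
    have h2 : (ζ ^ M) ^ 2 = 1 := by rw [← pow_mul, mul_comm, hζ.pow_eq_one]
    have h3 : (ζ ^ M - 1) * (ζ ^ M + 1) = 0 := by linear_combination h2
    exact eq_neg_of_add_eq_zero_left ((mul_eq_zero.1 h3).resolve_left (sub_ne_zero.2 h1))
  rw [map_add, map_mul, hKM a ha, hKM b hb, hσ ζ hζ.pow_eq_one, pow_add, hζM] at hfix
  have hb0 : b * ζ = 0 := by linear_combination (-1 / 2 : ℂ) * hfix
  rw [hb0, add_zero]
  exact ha


def ZH (H : MvPolynomial (Fin 2) ℂ) : Set BSG := {p | (∃ n : ℕ, 1 ≤ n ∧ p ^ n = 1) ∧ ev p H = 0}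

def BZ (F G : MvPolynomial (Fin 2) ℂ) : Set BSG := {p | ev p F = 0 ∧ ev p G = 0}

theorem bezoutG (F G : MvPolynomial (Fin 2) ℂ) (hF : Irreducible F) (hFG : ¬ F ∣ G) :
    (BZ F G).encard ≤ (F.totalDegree * G.totalDegree : ℕ) := by
  refine le_trans ?_ (bezout F G hF hFG)
  have hinj : Function.Injective (fun (p : BSG) (i : Fin 2) => (p i : ℂ)) := by
    intro p q h
    funext i
    exact Units.ext (congrFun h i)
  rw [← hinj.encard_image]
  apply Set.encard_le_encard
  rintro _ ⟨p, hp, rfl⟩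
  exact hp

theorem encard_biUnion_le' {α β : Type} (Q : Finset β) (f : β → Set α) (n : ℕ) (h : ∀ q ∈ Q, (f q).encard ≤ n) :
    (⋃ q ∈ Q, f q).encard ≤ (Q.card * n : ℕ) := by
  classical
  induction Q using Finset.induction_on with
  | empty => simp
  | insert a s ha ih =>
    rw [Finset.set_biUnion_insert, Finset.card_insert_of_notMem ha, add_mul, one_mul, add_comm]
    refine (Set.encard_union_le _ _).trans ?_
    push_cast
    refine add_le_add (h a (by simp)) ?_
    have := ih fun q hq => h q (by simp [hq])
    exact_mod_cast this

theorem ev_stab {H : MvPolynomial (Fin 2) ℂ} {u p : BSG} (hu : u ∈ stab H) (h : ev (u * p) H = 0) : ev p H = 0 := by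
  rw [← ev_scale] at h
  obtain ⟨c, hc⟩ := scale_of_mem_stab hu
  rw [hc, ev, map_mul, eval_C] at h
  exact (mul_eq_zero.1 h).resolve_left c.ne_zero

theorem exists_reps (H : MvPolynomial (Fin 2) ℂ) (hfin : Finite (stab H)) :
    ∃ (Q Q' : Finset BSG), Q.card = 4 ∧ Q'.card = 3 ∧ (∀ q ∈ Q, q ∈ stab2 H) ∧
      (∀ s ∈ stab2 H, ∃ q ∈ Q, ∃ u ∈ stab H, s = u * q) ∧
      (∀ q ∈ Q, ∀ q' ∈ Q, q⁻¹ * q' ∈ stab H → q = q') ∧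
      (∀ q ∈ Q', q ∉ stab H) ∧
      (∀ s ∈ stab2 H, s ∉ stab H → ∃ q ∈ Q', ∃ u ∈ stab H, s = u * q) := by
  classical
  let T := stab2 H ⧸ (stab H).subgroupOf (stab2 H)
  have hcard : Nat.card T = 4 := relIndex_stab H hfin
  have : Finite T := Nat.finite_of_card_ne_zero (by omega)
  have : Fintype T := Fintype.ofFinite T
  let r : T → BSG := fun c => (Quotient.out c : stab2 H).1
  have hr : ∀ c d : T, (r c)⁻¹ * r d ∈ stab H → c = d := by
    intro c d h
    rw [← QuotientGroup.out_eq' c, ← QuotientGroup.out_eq' d]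
    rw [QuotientGroup.eq]
    exact h
  have hinj : Function.Injective r := fun c d h => hr c d (by rw [h]; simp)
  have hcov : ∀ s ∈ stab2 H, ∃ c, ∃ u ∈ stab H, s = u * r c := by
    intro s hs
    let s' : stab2 H := ⟨s, hs⟩
    have h1 : ((Quotient.out (s' : T) : stab2 H) : T) = s' := QuotientGroup.out_eq' _
    rw [QuotientGroup.eq] at h1
    refine ⟨(s' : T), (r (s' : T))⁻¹ * s, h1, ?_⟩
    rw [mul_comm _ s, inv_mul_cancel_right]
  obtain ⟨c0, u0, hu0, h0⟩ := hcov 1 (one_mem _)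
  have hc0 : r c0 ∈ stab H := by
    have : r c0 = u0⁻¹ := (eq_inv_of_mul_eq_one_right h0.symm)
    rw [this]; exact inv_mem hu0
  have hQ : (Finset.univ.image r).card = 4 := by
    rw [Finset.card_image_of_injective _ hinj, Finset.card_univ, ← Nat.card_eq_fintype_card, hcard]
  refine ⟨Finset.univ.image r, (Finset.univ.image r).erase (r c0), hQ, ?_, ?_, ?_, ?_, ?_, ?_⟩
  · rw [Finset.card_erase_of_mem (Finset.mem_image_of_mem _ (Finset.mem_univ _)), hQ]
  · intro q hq
    obtain ⟨c, _, rfl⟩ := Finset.mem_image.1 hq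
    exact (Quotient.out c : stab2 H).2
  · intro s hs
    obtain ⟨c, u, hu, h⟩ := hcov s hs
    exact ⟨r c, Finset.mem_image_of_mem _ (Finset.mem_univ _), u, hu, h⟩
  · intro q hq q' hq' h
    obtain ⟨c, _, rfl⟩ := Finset.mem_image.1 hq
    obtain ⟨c', _, rfl⟩ := Finset.mem_image.1 hq'
    rw [hr c c' h]
  · intro q hq hqs
    obtain ⟨hne, hq⟩ := Finset.mem_erase.1 hq
    obtain ⟨c, _, rfl⟩ := Finset.mem_image.1 hq
    exact hne (congrArg r (hr c c0 (mul_mem (inv_mem hqs) hc0)))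
  · intro s hs hs'
    obtain ⟨c, u, hu, h⟩ := hcov s hs
    refine ⟨r c, Finset.mem_erase.2 ⟨?_, Finset.mem_image_of_mem _ (Finset.mem_univ _)⟩, u, hu, h⟩
    intro h1
    apply hs'
    rw [h, h1]
    exact mul_mem hu hc0

theorem sigma_point (σ : ℂ ≃+* ℂ) (M e : ℕ) (hσ : ∀ z : ℂ, z ^ M = 1 → σ z = z ^ e) (p : BSG) (hp : p ^ M = 1) :
    (fun i => Units.map (σ : ℂ →* ℂ) (p i)) = p ^ e := by
  funext i
  apply Units.ext
  have h1 : (p i) ^ M = 1 := congrFun hp i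
  have h2 : ((p i : ℂˣ) : ℂ) ^ M = 1 := by rw [← Units.val_pow_eq_pow_val, h1, Units.val_one]
  simpa using hσ _ h2

theorem point_dich (H : MvPolynomial (Fin 2) ℂ) (m N' : ℕ) (hm : 1 ≤ m) (hN' : Odd N')
    (hK : ∀ u, coeff u H ∈ KN (2 ^ m * N')) (p : BSG) (n : ℕ) (hn : 1 ≤ n) (hp : p ^ n = 1) (hpH : ev p H = 0) :
    (∃ s ∈ stab2 H, s ∉ stab H ∧ ev (s * p) H = 0) ∨
    ∃ R b : ℕ, Odd R ∧ N' ∣ R ∧ m ≤ b ∧ p ^ (2 ^ b * R) = 1 ∧ p ^ (2 ^ m * R) ∈ stab H := by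
  classical
  obtain ⟨a, n', hn', rfl⟩ := Nat.exists_eq_two_pow_mul_odd (n := n) (by omega)
  set R := n' * N' with hR
  have hRodd : Odd R := hn'.mul hN'
  have hpa : ∀ c, a ≤ c → p ^ (2 ^ c * R) = 1 := by
    intro c hc
    have : 2 ^ c * R = (2 ^ a * n') * (2 ^ (c - a) * N') := by
      rw [hR]; nth_rewrite 1 [show c = a + (c - a) by omega]; rw [pow_add]; ring
    rw [this, pow_mul, hp, one_pow]
  have hex : ∃ k, p ^ (2 ^ k * R) ∈ stab H := ⟨a, by rw [hpa a le_rfl]; exact one_mem _⟩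
  set k := Nat.find hex with hkdef
  have hk : p ^ (2 ^ k * R) ∈ stab H := Nat.find_spec hex
  have hka : k ≤ a := Nat.find_min' hex (by rw [hpa a le_rfl]; exact one_mem _)
  rcases le_or_gt k m with hkm | hkm
  · right
    refine ⟨R, max a m, hRodd, dvd_mul_left _ _, le_max_right _ _, hpa _ (le_max_left _ _), ?_⟩
    have : 2 ^ m * R = (2 ^ k * R) * 2 ^ (m - k) := by
      nth_rewrite 1 [show m = k + (m - k) by omega]; rw [pow_add]; ring
    rw [this, pow_mul]
    exact pow_mem hk _
  · left
    obtain ⟨j, hj⟩ : ∃ j, k = j + 1 := ⟨k - 1, by omega⟩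
    have hcop : Nat.Coprime (1 + 2 ^ j * R) (2 ^ a * R) := by
      have h1 : Nat.Coprime (1 + 2 ^ j * R) (2 ^ j * R) := by simp
      refine Nat.Coprime.mul_right (Nat.Coprime.pow_right _ ?_) (Nat.Coprime.coprime_mul_left_right h1)
      refine Nat.Coprime.coprime_dvd_right ?_ h1
      exact Dvd.dvd.mul_right (dvd_pow_self 2 (by omega)) R
    obtain ⟨σ, hσ⟩ := exists_sigma (2 ^ a * R) (1 + 2 ^ j * R) (by have := hRodd.pos; positivity) hcop
    refine ⟨p ^ (2 ^ j * R), ?_, ?_, ?_⟩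
    · rw [mem_stab2, ← pow_mul]
      have : 2 ^ j * R * 2 = 2 ^ k * R := by rw [hj, pow_succ]; ring
      rw [this]; exact hk
    · exact Nat.find_min hex (by omega)
    · have h1 := ev_map σ p H
      rw [sigma_point σ _ _ hσ p (hpa a le_rfl), hpH, map_zero] at h1
      have h2 : map (σ : ℂ →+* ℂ) H = H := by
        have := map_sigma_congr σ (RingEquiv.refl ℂ) H (fun u => sigma_congr_KN σ _ (fun z hz => ?_) (hK u))
        · rw [this]; ext; simp [coeff_map]
        · have hd : 2 ^ m * N' ∣ 2 ^ j * R := mul_dvd_mul (pow_dvd_pow 2 (by omega)) (dvd_mul_left _ _)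
          obtain ⟨w, hw⟩ := hd
          have h4 : z ^ (2 ^ j * R) = 1 := by rw [hw, pow_mul, hz, one_pow]
          have h3 : z ^ (2 ^ a * R) = 1 := by
            have : 2 ^ a * R = (2 ^ j * R) * 2 ^ (a - j) := by
              nth_rewrite 1 [show a = j + (a - j) by omega]; rw [pow_add]; ring
            rw [this, pow_mul, h4, one_pow]
          rw [hσ z h3, pow_add, h4]
          simp
      rw [h2, pow_add, pow_one, mul_comm] at h1
      exact h1


theorem odd_mult {N' R : ℕ} (hR : Odd R) (h : N' ∣ R) : ∃ j, R = N' + 2 * N' * j := by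
  obtain ⟨w, rfl⟩ := h
  obtain ⟨j, rfl⟩ := (Nat.odd_mul.1 hR).2
  exact ⟨j, by ring⟩

theorem scale_ne_zero (s : BSG) {H : MvPolynomial (Fin 2) ℂ} (h0 : H ≠ 0) : scale s H ≠ 0 := by
  intro h2
  have := support_scale s H
  rw [h2, support_zero, eq_comm, support_eq_empty] at this
  exact h0 this

theorem map_ne_zero_sigma (σ : ℂ ≃+* ℂ) {H : MvPolynomial (Fin 2) ℂ} (h0 : H ≠ 0) : map (σ : ℂ →+* ℂ) H ≠ 0 := by
  intro h2
  have := support_map_sigma σ H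
  rw [h2, support_zero, eq_comm, support_eq_empty] at this
  exact h0 this

theorem ev_expand (p : BSG) (H : MvPolynomial (Fin 2) ℂ) : ev p (expand 2 H) = ev (p ^ 2) H := by
  rw [ev, eval_expand, ev]
  congr 1

theorem expand_monomial_eq (u : Fin 2 →₀ ℕ) (a : ℂ) : expand 2 (monomial u a) = monomial (2 • u) a := by
  rw [expand_monomial]

theorem scale_expand (s : BSG) (H : MvPolynomial (Fin 2) ℂ) : scale s (expand 2 H) = expand 2 (scale (s ^ 2) H) := by
  induction H using MvPolynomial.induction_on' with
  | monomial u a =>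
    rw [expand_monomial_eq, scale_monomial, scale_monomial, expand_monomial_eq]
    congr 2
    rw [chi_apply, chi_apply]
    refine Finset.prod_congr rfl fun i _ => ?_
    simp [pow_mul]
  | add p q hp hq => simp [hp, hq]

theorem prod_primes_dvd_aux (Q : Finset BSG) (f : BSG → MvPolynomial (Fin 2) ℂ) (F : MvPolynomial (Fin 2) ℂ)
    (hp : ∀ q ∈ Q, Prime (f q)) (hd : ∀ q ∈ Q, f q ∣ F) (hne : ∀ q ∈ Q, ∀ q' ∈ Q, f q ∣ f q' → q = q') :
    ∏ q ∈ Q, f q ∣ F := by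
  classical
  induction Q using Finset.induction_on with
  | empty => simp
  | insert a s ha ih =>
    obtain ⟨k, hk⟩ := ih (fun q hq => hp q (by simp [hq])) (fun q hq => hd q (by simp [hq]))
      (fun q hq q' hq' => hne q (by simp [hq]) q' (by simp [hq']))
    have h1 := hd a (by simp)
    rw [hk] at h1
    rcases (hp a (by simp)).dvd_or_dvd h1 with h2 | h2
    · obtain ⟨q, hq, h3⟩ := ((hp a (by simp)).dvd_finset_prod_iff _).1 h2
      exact absurd (hne a (by simp) q (by simp [hq]) h3 ▸ hq) ha
    · rw [Finset.prod_insert ha, hk, mul_comm]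
      exact mul_dvd_mul_left _ h2

theorem totalDegree_pos_of_irred {H : MvPolynomial (Fin 2) ℂ} (hH : Irreducible H) : 0 < H.totalDegree := by
  rw [Nat.pos_iff_ne_zero]
  intro h
  rw [totalDegree_eq_zero_iff_eq_C] at h
  have h1 : coeff 0 H ≠ 0 := fun h2 => hH.ne_zero (by rw [h, h2, C_0])
  apply hH.not_isUnit
  rw [h]
  exact (isUnit_iff_ne_zero.2 h1).map C

theorem totalDegree_prod_const (Q : Finset BSG) (f : BSG → MvPolynomial (Fin 2) ℂ) (d : ℕ) (h0 : ∀ q, f q ≠ 0)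
    (h : ∀ q, (f q).totalDegree = d) : (∏ q ∈ Q, f q).totalDegree = Q.card * d := by
  classical
  induction Q using Finset.induction_on with
  | empty => simp
  | insert a s ha ih =>
    rw [Finset.prod_insert ha, Finset.card_insert_of_notMem ha,
      totalDegree_mul_of_isDomain (h0 a) (Finset.prod_ne_zero_iff.2 fun q _ => h0 q), ih, h]
    ring

theorem not_dvd_expand (H H' : MvPolynomial (Fin 2) ℂ) (hH : Irreducible H) (hfin : Finite (stab H))
    (hs : H'.support = H.support) (q : BSG) : ¬ H ∣ expand 2 (scale q H') := by
  intro hdvd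
  obtain ⟨Q, Q', hQ, -, hQ2, -, hQinj, -, -⟩ := exists_reps H hfin
  have h0 := hH.ne_zero
  have h0' : H' ≠ 0 := by
    intro h; rw [h, support_zero, eq_comm, support_eq_empty] at hs; exact h0 hs
  set F := expand 2 (scale q H') with hF
  have hF0 : F ≠ 0 := (expand_ne_zero two_pos).2 (scale_ne_zero q h0')
  have hFd : F.totalDegree ≤ 2 * H.totalDegree := by
    have : H'.totalDegree = H.totalDegree := by rw [totalDegree, totalDegree, hs]
    rw [hF, totalDegree_expand, totalDegree_scale, this, mul_comm]
  have hd : ∀ r ∈ Q, scale r H ∣ F := by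
    intro r hr
    have h1 := scale_dvd r hdvd
    rw [hF, scale_expand, scale_scale, mul_comm, ← scale_scale] at h1
    have hr2 : r ^ 2 ∈ stab H' := by rw [stab_congr hs]; exact hQ2 r hr
    obtain ⟨c, hc⟩ := scale_of_mem_stab hr2
    rw [hc, map_mul, map_mul] at h1
    have hc' : IsUnit ((expand 2) ((scale q) (C (c : ℂ)))) := ((c.isUnit.map C).map (scale q)).map (expand 2)
    exact (hc'.dvd_mul_left).1 h1
  have hprod : ∏ r ∈ Q, scale r H ∣ F := by
    refine prod_primes_dvd_aux Q (fun r => scale r H) F (fun r _ => (irreducible_scale r hH).prime) hd ?_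
    intro r hr r' hr' h
    refine hQinj r hr r' hr' (mem_stab_of_dvd h0 ?_)
    have h2 := scale_dvd r⁻¹ h
    rwa [scale_scale, scale_scale, inv_mul_cancel, scale_one] at h2
  have h3 := totalDegree_le_of_dvd_of_isDomain hprod hF0
  rw [totalDegree_prod_const Q _ H.totalDegree (fun r => scale_ne_zero r h0) (fun r => totalDegree_scale r H), hQ] at h3
  have := totalDegree_pos_of_irred hH
  omega

theorem cover_bound (H : MvPolynomial (Fin 2) ℂ) (hH : Irreducible H) (hfin : Finite (stab H))
    (G : BSG → MvPolynomial (Fin 2) ℂ) (hGd : ∀ q, (G q).totalDegree ≤ 2 * H.totalDegree)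
    (hG : ∀ q ∈ stab2 H, ¬ H ∣ G q)
    (hGs : ∀ u ∈ stab H, ∀ q p, ev p (G (u * q)) = 0 → ev p (G q) = 0)
    (hcov : ∀ p ∈ ZH H, (∃ s ∈ stab2 H, s ∉ stab H ∧ ev (s * p) H = 0) ∨ ∃ s ∈ stab2 H, ev p (G s) = 0) :
    (ZH H).encard ≤ (11 * H.totalDegree ^ 2 : ℕ) := by
  obtain ⟨Q, Q', hQ, hQ', hQ2, hQc, -, hQ's, hQ'c⟩ := exists_reps H hfin
  set d := H.totalDegree with hd
  have hsub : ZH H ⊆ (⋃ q ∈ Q', BZ H (scale q H)) ∪ (⋃ q ∈ Q, BZ H (G q)) := by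
    intro p hp
    rcases hcov p hp with ⟨s, hs, hs', hz⟩ | ⟨s, hs, hz⟩
    · left
      obtain ⟨q, hq, u, hu, rfl⟩ := hQ'c s hs hs'
      refine Set.mem_biUnion hq ⟨hp.2, ?_⟩
      rw [ev_scale]
      rw [mul_assoc] at hz
      exact ev_stab hu hz
    · right
      obtain ⟨q, hq, u, hu, rfl⟩ := hQc s hs
      exact Set.mem_biUnion hq ⟨hp.2, hGs u hu q p hz⟩
  refine (Set.encard_le_encard hsub).trans ((Set.encard_union_le _ _).trans ?_)
  have h1 := encard_biUnion_le' Q' (fun q => BZ H (scale q H)) (d * d) (fun q hq => by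
    have := bezoutG H (scale q H) hH (fun h => hQ's q hq (mem_stab_of_dvd hH.ne_zero h))
    rwa [totalDegree_scale] at this)
  have h2 := encard_biUnion_le' Q (fun q => BZ H (G q)) (d * (2 * d)) (fun q hq => by
    refine (bezoutG H (G q) hH (hG q (hQ2 q hq))).trans ?_
    exact_mod_cast Nat.mul_le_mul_left _ (hGd q))
  refine (add_le_add h1 h2).trans ?_
  rw [hQ, hQ']
  norm_cast
  nlinarith

theorem base_case (H : MvPolynomial (Fin 2) ℂ) (hH : Irreducible H) (hfin : Finite (stab H)) (N' : ℕ) (hN' : Odd N')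
    (hK : ∀ u, coeff u H ∈ KN (2 ^ 1 * N')) : (ZH H).encard ≤ (11 * H.totalDegree ^ 2 : ℕ) := by
  have hcop : ∀ R b : ℕ, Odd R → Nat.Coprime (2 + R) (2 ^ b * R) := by
    intro R b hR
    refine Nat.Coprime.mul_right (Nat.Coprime.pow_right _ ?_) ?_
    · rw [Nat.coprime_two_right]; exact even_two.add_odd hR
    · rw [Nat.coprime_add_self_left]; exact Nat.coprime_two_left.2 hR
  obtain ⟨τ, hτ⟩ := exists_sigma (2 ^ 1 * N') (2 + N') (by have := hN'.pos; positivity) (hcop N' 1 hN')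
  set H' := map (τ : ℂ →+* ℂ) H with hH'
  have hs : H'.support = H.support := support_map_sigma τ H
  refine cover_bound H hH hfin (fun q => expand 2 (scale q H')) ?_ ?_ ?_ ?_
  · intro q
    rw [totalDegree_expand, totalDegree_scale, hH', totalDegree_map_sigma, mul_comm]
  · intro q _
    exact not_dvd_expand H H' hH hfin hs q
  · intro u hu q p h
    simp only [ev_expand, ev_scale] at h ⊢
    rw [mul_assoc] at h
    exact ev_stab (by rwa [stab_congr hs]) h
  · rintro p ⟨⟨n, hn, hp⟩, hpH⟩
    rcases point_dich H 1 N' le_rfl hN' hK p n hn hp hpH with h | ⟨R, b, hR, hNR, hb, hpb, hst⟩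
    · exact Or.inl h
    · right
      obtain ⟨σ, hσ⟩ := exists_sigma (2 ^ b * R) (2 + R) (by have := hR.pos; positivity) (hcop R b hR)
      refine ⟨p ^ R, ?_, ?_⟩
      · rw [mem_stab2, ← pow_mul, mul_comm]; simpa using hst
      · have h1 := ev_map σ p H
        rw [sigma_point σ _ _ hσ p hpb, hpH, map_zero] at h1
        have h2 : map (σ : ℂ →+* ℂ) H = H' := by
          refine map_sigma_congr σ τ H (fun u => sigma_congr_KN σ τ (fun z hz => ?_) (hK u))
          have hz' : z ^ (2 ^ b * R) = 1 := by
            obtain ⟨w, hw⟩ : 2 ^ 1 * N' ∣ 2 ^ b * R := mul_dvd_mul (pow_dvd_pow 2 hb) hNR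
            rw [hw, pow_mul, hz, one_pow]
          rw [hσ z hz', hτ z hz]
          obtain ⟨j, hj⟩ := odd_mult hR hNR
          rw [hj, ← add_assoc, pow_add, pow_mul, show 2 * N' = 2 ^ 1 * N' by ring, hz, one_pow, mul_one]
        rw [h2, pow_add, mul_comm] at h1
        simpa only [ev_expand, ev_scale] using h1

theorem step_nodescent (H : MvPolynomial (Fin 2) ℂ) (hH : Irreducible H) (hfin : Finite (stab H)) (m N' : ℕ)
    (hm : 1 ≤ m) (hN' : Odd N')
    (hK : ∀ u, coeff u H ∈ KN (2 ^ (m + 1) * N')) (τ : ℂ ≃+* ℂ)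
    (hτ : ∀ z : ℂ, z ^ (2 ^ (m + 1) * N') = 1 → τ z = z ^ (1 + 2 ^ m * N'))
    (hnd : ∀ q ∈ stab2 H, ¬ H ∣ scale q (map (τ : ℂ →+* ℂ) H)) :
    (ZH H).encard ≤ (11 * H.totalDegree ^ 2 : ℕ) := by
  set H' := map (τ : ℂ →+* ℂ) H with hH'
  have hs : H'.support = H.support := support_map_sigma τ H
  refine cover_bound H hH hfin (fun q => scale q H') ?_ hnd ?_ ?_
  · intro q
    rw [totalDegree_scale, hH', totalDegree_map_sigma]
    omega
  · intro u hu q p h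
    simp only [ev_scale] at h ⊢
    rw [mul_assoc] at h
    exact ev_stab (by rwa [stab_congr hs]) h
  · rintro p ⟨⟨n, hn, hp⟩, hpH⟩
    rcases point_dich H (m + 1) N' (by omega) hN' hK p n hn hp hpH with h | ⟨R, b, hR, hNR, hb, hpb, hst⟩
    · exact Or.inl h
    · right
      have hcop : Nat.Coprime (1 + 2 ^ m * R) (2 ^ b * R) := by
        have h1 : Nat.Coprime (1 + 2 ^ m * R) (2 ^ m * R) := by simp
        refine Nat.Coprime.mul_right (Nat.Coprime.pow_right _ ?_) (Nat.Coprime.coprime_mul_left_right h1)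
        refine Nat.Coprime.coprime_dvd_right ?_ h1
        exact Dvd.dvd.mul_right (dvd_pow_self 2 (by omega)) R
      obtain ⟨σ, hσ⟩ := exists_sigma (2 ^ b * R) (1 + 2 ^ m * R) (by have := hR.pos; positivity) hcop
      refine ⟨p ^ (2 ^ m * R), ?_, ?_⟩
      · rw [mem_stab2, ← pow_mul]
        have : 2 ^ m * R * 2 = 2 ^ (m + 1) * R := by rw [pow_succ]; ring
        rwa [this]
      · have h1 := ev_map σ p H
        rw [sigma_point σ _ _ hσ p hpb, hpH, map_zero] at h1
        have h2 : map (σ : ℂ →+* ℂ) H = H' := by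
          refine map_sigma_congr σ τ H (fun u => sigma_congr_KN σ τ (fun z hz => ?_) (hK u))
          have hz' : z ^ (2 ^ b * R) = 1 := by
            obtain ⟨w, hw⟩ : 2 ^ (m + 1) * N' ∣ 2 ^ b * R := mul_dvd_mul (pow_dvd_pow 2 hb) hNR
            rw [hw, pow_mul, hz, one_pow]
          rw [hσ z hz', hτ z hz]
          obtain ⟨j, hj⟩ := odd_mult hR hNR
          have : 1 + 2 ^ m * R = (1 + 2 ^ m * N') + (2 ^ (m + 1) * N') * j := by rw [hj, pow_succ]; ring
          rw [this, pow_add, pow_mul z _ j, hz, one_pow, mul_one]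
        rw [h2, pow_add, pow_one, mul_comm] at h1
        simpa only [ev_scale] using h1


theorem support_C_mul {c : ℂ} (hc : c ≠ 0) (H : MvPolynomial (Fin 2) ℂ) : (C c * H).support = H.support := by
  ext u
  simp [mem_support_iff, coeff_C_mul, hc]

theorem totalDegree_C_mul {c : ℂ} (hc : c ≠ 0) (H : MvPolynomial (Fin 2) ℂ) :
    (C c * H).totalDegree = H.totalDegree := by
  rw [totalDegree, totalDegree, support_C_mul hc]

theorem irreducible_C_mul {c : ℂ} (hc : c ≠ 0) {H : MvPolynomial (Fin 2) ℂ} (hH : Irreducible H) :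
    Irreducible (C c * H) :=
  (irreducible_isUnit_mul ((isUnit_iff_ne_zero.2 hc).map C)).2 hH

theorem ev_C_mul (c : ℂ) (H : MvPolynomial (Fin 2) ℂ) (p : BSG) : ev p (C c * H) = c * ev p H := by
  simp [ev]

theorem torsion_of_mem_finite {H : MvPolynomial (Fin 2) ℂ} (hfin : Finite (stab H)) {s : BSG} (hs : s ∈ stab H) :
    ∃ n : ℕ, 1 ≤ n ∧ s ^ n = 1 := by
  obtain ⟨n, hn, h⟩ := isOfFinOrder_iff_pow_eq_one.1 (isOfFinOrder_of_finite (⟨s, hs⟩ : stab H))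
  exact ⟨n, hn, congrArg Subtype.val h⟩

theorem descend_step (H : MvPolynomial (Fin 2) ℂ) (hH : Irreducible H) (hfin : Finite (stab H)) (m N' : ℕ)
    (hm : 1 ≤ m) (hN' : Odd N') (m0 : Fin 2 →₀ ℕ) (h0 : coeff m0 H = 1)
    (hK : ∀ u, coeff u H ∈ KN (2 ^ (m + 1) * N')) (τ : ℂ ≃+* ℂ)
    (hτ : ∀ z : ℂ, z ^ (2 ^ (m + 1) * N') = 1 → τ z = z ^ (1 + 2 ^ m * N'))
    (s : BSG) (hs : s ∈ stab2 H) (hd : H ∣ scale s (map (τ : ℂ →+* ℂ) H)) :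
    ∃ J : MvPolynomial (Fin 2) ℂ, Irreducible J ∧ Finite (stab J) ∧ coeff m0 J = 1 ∧
      (∀ u, coeff u J ∈ KN (2 ^ m * N')) ∧ J.totalDegree = H.totalDegree ∧ (ZH H).encard ≤ (ZH J).encard := by
  obtain ⟨c, hc, hcH⟩ := dvd_deg_le (scale_ne_zero _ (map_ne_zero_sigma _ hH.ne_zero)) hd
    (by rw [totalDegree_scale, totalDegree_map_sigma])
  have hcu : ∀ u, (chi u s : ℂ) * τ (coeff u H) = c * coeff u H := by
    intro u
    have := congrArg (coeff u) hcH
    simpa [coeff_scale, coeff_map, coeff_C_mul] using this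
  have hc0 : (chi m0 s : ℂ) = c := by simpa [h0] using hcu m0
  have hm0 : m0 ∈ H.support := by simp [mem_support_iff, h0]
  obtain ⟨t, ht⟩ := exists_root (2 ^ m) (by positivity) s
  have hne : ((chi m0 t)⁻¹ : ℂ) ≠ 0 := inv_ne_zero (Units.ne_zero _)
  have hsupp : (C ((chi m0 t)⁻¹ : ℂ) * scale t H).support = H.support := by
    rw [support_C_mul hne, support_scale]
  refine ⟨C ((chi m0 t)⁻¹ : ℂ) * scale t H, irreducible_C_mul hne (irreducible_scale t hH), ?_, ?_, ?_, ?_, ?_⟩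
  · rwa [stab_congr hsupp]
  · rw [coeff_C_mul, coeff_scale, h0]; simp
  · intro u
    by_cases hu : u ∈ H.support
    swap
    · rw [← hsupp, notMem_support_iff] at hu
      rw [hu]; exact zero_mem _
    set r : ℂˣ := chi u s / chi m0 s with hr
    set w : ℂˣ := chi u t / chi m0 t with hw
    have hr2 : r ^ 2 = 1 := by
      rw [hr, div_pow, ← map_pow, ← map_pow, mem_stab.1 (mem_stab2.1 hs) u hu m0 hm0, div_self']
    have hwr : w ^ (2 ^ m) = r := by
      rw [hr, hw, div_pow, ← map_pow, ← map_pow, ht]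
    have hwt : w ^ (2 ^ (m + 1) * N') = 1 := by
      rw [pow_succ, pow_mul, pow_mul, hwr, hr2, one_pow]
    have hwt' : (w : ℂ) ^ (2 ^ (m + 1) * N') = 1 := by rw [← Units.val_pow_eq_pow_val, hwt, Units.val_one]
    have hwp : w ^ (1 + 2 ^ m * N') = w * r := by
      obtain ⟨k, hk⟩ := hN'
      rw [pow_add, pow_one, pow_mul, hwr, hk, pow_succ, pow_mul, hr2, one_pow, one_mul]
    have hτw : τ (w : ℂ) = w * r := by
      rw [hτ _ hwt']; exact_mod_cast congrArg Units.val hwp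
    have hj : coeff u (C ((chi m0 t)⁻¹ : ℂ) * scale t H) = w * coeff u H := by
      rw [coeff_C_mul, coeff_scale, hw, Units.val_div_eq_div_val]; ring
    rw [hj]
    have hM : 2 ^ (m + 1) * N' = 2 * (2 ^ m * N') := by ring
    refine descent_KN (by have := hN'.pos; positivity) τ (by rw [← hM]; exact hτ) ?_ ?_
    · rw [← hM]
      exact mul_mem (root_mem_KN hwt') (hK u)
    · rw [map_mul, hτw, mul_assoc]
      congr 1
      rw [hr, Units.val_div_eq_div_val, hc0, div_mul_eq_mul_div, hcu, mul_div_cancel_left₀ _ hc]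
  · rw [totalDegree_C_mul hne, totalDegree_scale]
  · have hinj : Function.Injective (fun p : BSG => t⁻¹ * p) := mul_right_injective _
    rw [← hinj.encard_image]
    apply Set.encard_le_encard
    rintro _ ⟨p, ⟨⟨n, hn, hp⟩, hpH⟩, rfl⟩
    have htor : ∃ k : ℕ, 1 ≤ k ∧ t ^ k = 1 := by
      obtain ⟨k, hk, h⟩ := torsion_of_mem_finite hfin (mem_stab2.1 hs)
      refine ⟨2 ^ m * (2 * k), Nat.one_le_iff_ne_zero.2 (by positivity), ?_⟩
      rw [pow_mul, ht, pow_mul, h]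
    obtain ⟨k, hk, hkt⟩ := htor
    refine ⟨⟨k * n, Nat.one_le_iff_ne_zero.2 (by positivity), ?_⟩, ?_⟩
    · rw [mul_pow, inv_pow, pow_mul, hkt, mul_comm k n, pow_mul, hp]; simp
    · rw [ev_C_mul, ev_scale, mul_inv_cancel_left, hpH, mul_zero]

theorem induct (N' : ℕ) (hN' : Odd N') (m0 : Fin 2 →₀ ℕ) (m : ℕ) (hm : 1 ≤ m) :
    ∀ H : MvPolynomial (Fin 2) ℂ, Irreducible H → Finite (stab H) → coeff m0 H = 1 →
      (∀ u, coeff u H ∈ KN (2 ^ m * N')) → (ZH H).encard ≤ (11 * H.totalDegree ^ 2 : ℕ) := by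
  induction m, hm using Nat.le_induction with
  | base =>
    intro H hH hfin _ hK
    exact base_case H hH hfin N' hN' hK
  | succ m hm ih =>
    intro H hH hfin h0 hK
    have hcop : Nat.Coprime (1 + 2 ^ m * N') (2 ^ (m + 1) * N') := by
      have h1 : Nat.Coprime (1 + 2 ^ m * N') (2 ^ m * N') := by simp
      refine Nat.Coprime.mul_right (Nat.Coprime.pow_right _ ?_) (Nat.Coprime.coprime_mul_left_right h1)
      refine Nat.Coprime.coprime_dvd_right ?_ h1
      exact Dvd.dvd.mul_right (dvd_pow_self 2 (by omega)) N'
    obtain ⟨τ, hτ⟩ := exists_sigma (2 ^ (m + 1) * N') (1 + 2 ^ m * N') (by have := hN'.pos; positivity) hcop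
    by_cases hnd : ∀ q ∈ stab2 H, ¬ H ∣ scale q (map (τ : ℂ →+* ℂ) H)
    · exact step_nodescent H hH hfin m N' hm hN' hK τ hτ hnd
    · push Not at hnd
      obtain ⟨s, hs, hd⟩ := hnd
      obtain ⟨J, hJ, hJf, hJ0, hJK, hJd, hle⟩ := descend_step H hH hfin m N' hm hN' m0 h0 hK τ hτ s hs hd
      rw [← hJd]
      exact hle.trans (ih J hJ hJf hJ0 hJK)

theorem chi_mem_Kab (u : Fin 2 →₀ ℕ) (p : BSG) (n : ℕ) (hn : 1 ≤ n) (hp : p ^ n = 1) : (chi u p : ℂ) ∈ Kab := by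
  refine IntermediateField.subset_adjoin _ _ ⟨n, hn, ?_⟩
  have : (chi u p) ^ n = 1 := by rw [← map_pow, hp, map_one]
  rw [← Units.val_pow_eq_pow_val, this, Units.val_one]

theorem ev_eq_sum (p : BSG) (H : MvPolynomial (Fin 2) ℂ) : ev p H = ∑ u ∈ H.support, (chi u p : ℂ) * coeff u H := by
  rw [ev, eval_eq]
  refine Finset.sum_congr rfl fun u _ => ?_
  rw [chi_apply, Fin.prod_univ_two, mul_comm]
  congr 1
  rw [← Fin.prod_univ_two (fun i => (p i : ℂ) ^ u i)]
  refine Finset.prod_subset (Finset.subset_univ _) ?_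
  intro i _ hi
  rw [Finsupp.notMem_support_iff] at hi
  rw [hi, pow_zero]

theorem not_Kab_bound (H : MvPolynomial (Fin 2) ℂ) (hH : Irreducible H) (m0 : Fin 2 →₀ ℕ) (h0 : coeff m0 H = 1)
    (v : Fin 2 →₀ ℕ) (hv : coeff v H ∉ Kab) : (ZH H).encard ≤ (11 * H.totalDegree ^ 2 : ℕ) := by
  classical
  obtain ⟨φ, hφ⟩ := LinearMap.exists_leftInverse_of_injective (Algebra.linearMap Kab ℂ)
    (LinearMap.ker_eq_bot.2 (algebraMap Kab ℂ).injective)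
  have hφ1 : φ 1 = 1 := by
    have := LinearMap.congr_fun hφ 1
    simpa using this
  let G : MvPolynomial (Fin 2) ℂ := ∑ u ∈ H.support, monomial u (φ (coeff u H) : ℂ)
  have hG : ∀ u, coeff u G = (φ (coeff u H) : ℂ) := by
    intro u
    simp only [G, coeff_sum, coeff_monomial]
    rw [Finset.sum_ite_eq']
    split_ifs with h
    · rfl
    · rw [notMem_support_iff.1 h]; simp
  have hG0 : coeff m0 G = 1 := by rw [hG, h0, hφ1]; simp
  have hGs : G.support ⊆ H.support := by
    intro u hu
    rw [mem_support_iff] at hu ⊢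
    intro h
    apply hu
    rw [hG, h]; simp
  have hGd : G.totalDegree ≤ H.totalDegree := Finset.sup_mono hGs
  have hGne : G ≠ 0 := by
    intro h
    rw [h] at hG0; simp at hG0
  have hnd : ¬ H ∣ G := by
    intro h
    obtain ⟨c, _, hc⟩ := dvd_deg_le hGne h hGd
    have hc1 : c = 1 := by
      have := congrArg (coeff m0) hc
      rw [coeff_C_mul, h0, hG0] at this
      simpa using this.symm
    rw [hc1, C_1, one_mul] at hc
    apply hv
    rw [← hc, hG]
    exact (φ (coeff v H)).2
  have hsub : ZH H ⊆ BZ H G := by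
    rintro p ⟨⟨n, hn, hp⟩, hpH⟩
    refine ⟨hpH, ?_⟩
    have h1 := hpH
    rw [ev_eq_sum] at h1
    have h2 := congrArg φ h1
    rw [map_sum, map_zero] at h2
    have h3 : ev p G = ∑ u ∈ H.support, (chi u p : ℂ) * coeff u G := by
      rw [ev_eq_sum]
      refine Finset.sum_subset hGs ?_
      intro u _ hu
      rw [notMem_support_iff.1 hu, mul_zero]
    rw [h3]
    have h4 := congrArg (fun x : Kab => (x : ℂ)) h2
    beta_reduce at h4
    rw [ZeroMemClass.coe_zero] at h4
    rw [← h4]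
    rw [AddSubmonoidClass.coe_finsetSum]
    refine Finset.sum_congr rfl fun u _ => ?_
    rw [hG]
    have h5 : (chi u p : ℂ) * coeff u H = (⟨chi u p, chi_mem_Kab u p n hn hp⟩ : Kab) • coeff u H := rfl
    rw [h5, map_smul]
    rfl
  refine (Set.encard_le_encard hsub).trans ((bezoutG H G hH hnd).trans ?_)
  norm_cast
  nlinarith [Nat.mul_le_mul_left H.totalDegree hGd]

theorem irred_bound (H : MvPolynomial (Fin 2) ℂ) (hH : Irreducible H) (hc : ¬ HasCyc H) :
    (ZH H).encard ≤ (11 * H.totalDegree ^ 2 : ℕ) := by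
  classical
  rcases (ZH H).eq_empty_or_nonempty with he | ⟨p, ⟨n, hn, hp⟩, hpH⟩
  · rw [he]; simp
  have hfin := stab_finite_or H hH.ne_zero p n hn hp hpH hc
  obtain ⟨m0, hm0⟩ := exists_coeff_ne_zero hH.ne_zero
  have hne : (coeff m0 H)⁻¹ ≠ 0 := inv_ne_zero hm0
  have key : ∀ J : MvPolynomial (Fin 2) ℂ, Irreducible J → Finite (stab J) → coeff m0 J = 1 →
      (ZH J).encard ≤ (11 * J.totalDegree ^ 2 : ℕ) := by
    intro J hJ hJf hJ0
    by_cases hK : ∀ u, coeff u J ∈ Kab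
    · obtain ⟨N, hN, hNK⟩ := exists_KN_finset (J.support.image fun u => coeff u J) (by
        intro x hx
        obtain ⟨u, _, rfl⟩ := Finset.mem_image.1 hx
        exact hK u)
      obtain ⟨a, N', hN', rfl⟩ := Nat.exists_eq_two_pow_mul_odd (n := N) (by omega)
      refine induct N' hN' m0 (a + 1) (by omega) J hJ hJf hJ0 fun u => ?_
      by_cases hu : u ∈ J.support
      · exact KN_mono (mul_dvd_mul_right (pow_dvd_pow 2 (by omega)) N') (hNK _ (Finset.mem_image_of_mem _ hu))
      · rw [notMem_support_iff.1 hu]; exact zero_mem _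
    · push Not at hK
      obtain ⟨v, hv⟩ := hK
      exact not_Kab_bound J hJ m0 hJ0 v hv
  have h1 := key (C (coeff m0 H)⁻¹ * H) (irreducible_C_mul hne hH) (by rwa [stab_congr (support_C_mul hne H)])
    (by rw [coeff_C_mul, inv_mul_cancel₀ hm0])
  rw [totalDegree_C_mul hne] at h1
  refine le_trans (Set.encard_le_encard ?_) h1
  rintro q ⟨hq, hqH⟩
  exact ⟨hq, by rw [ev_C_mul, hqH, mul_zero]⟩

theorem HasCyc.of_dvd {F H : MvPolynomial (Fin 2) ℂ} (h : HasCyc F) (hd : F ∣ H) : HasCyc H := by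
  obtain ⟨i, j, ρ, h1, h2, h3⟩ := h
  exact ⟨i, j, ρ, h1, h2, h3.imp (fun h => h.trans hd) (fun h => h.trans hd)⟩

theorem general_bound (H : MvPolynomial (Fin 2) ℂ) (hH : H ≠ 0) :
    ¬ HasCyc H → (ZH H).encard ≤ (11 * H.totalDegree ^ 2 : ℕ) := by
  induction H using WfDvdMonoid.induction_on_irreducible with
  | zero => exact absurd rfl hH
  | unit u hu =>
    intro _
    have : ZH u = ∅ := by
      rw [Set.eq_empty_iff_forall_notMem]
      rintro p ⟨_, hp⟩
      exact (hu.map (eval fun i => (p i : ℂ))).ne_zero hp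
    rw [this]; simp
  | mul a i ha hi ih =>
    intro hc
    have h1 := irred_bound i hi (fun h => hc (h.of_dvd (dvd_mul_right _ _)))
    have h2 := ih ha (fun h => hc (h.of_dvd (dvd_mul_left _ _)))
    have hsub : ZH (i * a) ⊆ ZH i ∪ ZH a := by
      rintro p ⟨hp, hpH⟩
      rw [ev, map_mul] at hpH
      exact (mul_eq_zero.1 hpH).imp (fun h => ⟨hp, h⟩) (fun h => ⟨hp, h⟩)
    refine (Set.encard_le_encard hsub).trans ((Set.encard_union_le _ _).trans ((add_le_add h1 h2).trans ?_))
    rw [totalDegree_mul_of_isDomain hi.ne_zero ha]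
    norm_cast
    nlinarith [Nat.zero_le (i.totalDegree * a.totalDegree)]

theorem pair_bound (H : MvPolynomial (Fin 2) ℂ) (hH : H ≠ 0) (hc : ¬ HasCyc H) :
    {p : ℂ × ℂ | (∃ n : ℕ, 1 ≤ n ∧ p.1 ^ n = 1) ∧ (∃ n : ℕ, 1 ≤ n ∧ p.2 ^ n = 1) ∧
        eval ![p.1, p.2] H = 0}.encard ≤ (11 * H.totalDegree ^ 2 : ℕ) := by
  refine le_trans ?_ (general_bound H hH hc)
  refine le_trans (Set.encard_le_encard ?_) (Set.encard_image_le (fun p : BSG => ((p 0 : ℂ), (p 1 : ℂ))) (ZH H))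
  rintro ⟨x, y⟩ ⟨⟨n, hn, hx⟩, ⟨k, hk, hy⟩, he⟩
  simp only [] at hx hy he
  have hx0 : x ≠ 0 := by rintro rfl; rw [zero_pow (by omega)] at hx; exact zero_ne_one hx
  have hy0 : y ≠ 0 := by rintro rfl; rw [zero_pow (by omega)] at hy; exact zero_ne_one hy
  refine ⟨![Units.mk0 x hx0, Units.mk0 y hy0], ⟨⟨n * k, Nat.one_le_iff_ne_zero.2 (by positivity), ?_⟩, ?_⟩, by simp⟩
  · funext i
    apply Units.ext
    fin_cases i
    · simp [pow_mul, hx]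
    · simp [mul_comm n k, pow_mul, hy]
  · rw [ev, ← he]
    congr 2
    funext i
    fin_cases i <;> simp

/-- Lemma 2.1 (Beukers–Smyth): a plane curve `H(X,Y) = 0` contains at most
`11 (deg H)²` points whose coordinates are both roots of unity, unless `H` has a
factor of the form `X^i − ρ Y^j` or `X^i Y^j − ρ` with `ρ` a root of unity and
`i, j` nonnegative integers not both zero. -/
theorem stmt_5 (H : MvPolynomial (Fin 2) ℂ) (hH : H ≠ 0) :
    (∃ (i j : ℕ) (ρ : ℂ), ¬ (i = 0 ∧ j = 0) ∧ (∃ n : ℕ, 1 ≤ n ∧ ρ ^ n = 1) ∧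
      ((X 0 ^ i - C ρ * X 1 ^ j ∣ H) ∨ (X 0 ^ i * X 1 ^ j - C ρ ∣ H))) ∨
    ({p : ℂ × ℂ | (∃ n : ℕ, 1 ≤ n ∧ p.1 ^ n = 1) ∧ (∃ n : ℕ, 1 ≤ n ∧ p.2 ^ n = 1) ∧
        eval ![p.1, p.2] H = 0}.Finite ∧
      {p : ℂ × ℂ | (∃ n : ℕ, 1 ≤ n ∧ p.1 ^ n = 1) ∧ (∃ n : ℕ, 1 ≤ n ∧ p.2 ^ n = 1) ∧
        eval ![p.1, p.2] H = 0}.ncard ≤ 11 * H.totalDegree ^ 2) := by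
  by_cases hc : HasCyc H
  · exact Or.inl hc
  · right
    have h := pair_bound H hH hc
    have hf := Set.finite_of_encard_le_coe h
    refine ⟨hf, ?_⟩
    rw [← hf.cast_ncard_eq] at h
    exact_mod_cast h
end
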